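/- There exist constants c > 0 and C < ∞, depending only on d, with the following property: if ε > 0 and f is a nonnegative measurable function on ℝ^d with 0 < ‖f‖_{L^{(d+1)/d}} < ∞ and ‖T(f)‖_{L^{d+1}} ≥ ε ‖f‖_{L^{(d+1)/d}}, then there exist a scalar t > 0, a Lebesgue measurable set E ⊆ ℝ^d, and a ball ℬ = ℬ(z̄, e, r, r*) such that: t χ_E ≤ f; ‖t χ_E‖_{L^{(d+1)/d}} ≥ c ε^C ‖f‖_{L^{(d+1)/d}}; |π*(ℬ)| ≤ |E|; and |π*(ℬ) ∩ E| ≥ c ε^C |E|. -/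

import Mathlib

open MeasureTheory ENNReal
open scoped RealInnerProductSpace

noncomputable section

/-- `ℝ^{d-1}` -/
abbrev Vec (n : ℕ) : Type := EuclideanSpace ℝ (Fin n)

/-- `ℝ^d = ℝ^{d-1} × ℝ`, a point `x = (x', x_d)` -/
abbrev Pt (n : ℕ) : Type := Vec n × ℝ

/-- The Radon-like transform `Tf(x) = ∫_{ℝ^{d-1}} f(x' - t, x_d - |t|²) dt`. -/
def radonT (n : ℕ) (f : Pt n → ℝ≥0∞) (x : Pt n) : ℝ≥0∞ :=
  ∫⁻ t : Vec n, f (x.1 - t, x.2 - ‖t‖ ^ 2)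

/-- The incidence functional `𝒯(E, E*) = ∫_E T(χ_{E*})`. -/
def incT (n : ℕ) (E Estar : Set (Pt n)) : ℝ≥0∞ :=
  ∫⁻ x in E, radonT n (Estar.indicator 1) x

/-- Admissibility of the parameters of a ball `ℬ(z̄, e, r, r*)`:
the center `z̄ = (x̄, x̄*)` lies on the incidence manifold `ℐ`, `ρ > 0`,
`e` is an orthonormal basis of `ℝ^{d-1}`, and `r_j r*_j = ρ > 0` for all `j`. -/
def IsBallParams (n : ℕ) (zb : Pt n × Pt n) (e : Fin n → Vec n)
    (r rs : Fin n → ℝ) (ρ : ℝ) : Prop :=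
  zb.2.2 = zb.1.2 - ‖zb.2.1 - zb.1.1‖ ^ 2 ∧ 0 < ρ ∧ Orthonormal ℝ e ∧
    (∀ j, 0 < r j) ∧ (∀ j, 0 < rs j) ∧ (∀ j, r j * rs j = ρ)

/-- The ball `ℬ(z̄, e, r, r*)`, a subset of the incidence manifold
`ℐ = {(x,y) : y_d = x_d - |y' - x'|²} ⊆ ℝ^d × ℝ^d`. -/
def ballI (n : ℕ) (zb : Pt n × Pt n) (e : Fin n → Vec n)
    (r rs : Fin n → ℝ) (ρ : ℝ) : Set (Pt n × Pt n) :=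
  fun z => z.2.2 = z.1.2 - ‖z.2.1 - z.1.1‖ ^ 2 ∧
    (∀ j, |⟪z.1.1 - zb.1.1, e j⟫| < r j) ∧
    |z.1.2 - zb.2.2 - ‖z.1.1 - zb.2.1‖ ^ 2| < ρ ∧
    (∀ j, |⟪z.2.1 - zb.2.1, e j⟫| < rs j) ∧
    |z.2.2 - zb.1.2 + ‖z.2.1 - zb.1.1‖ ^ 2| < ρ

/-- The `L^p` norm `(∫ f^p)^{1/p}` of a nonnegative function. -/
def LpN (n : ℕ) (p : ℝ) (f : Pt n → ℝ≥0∞) : ℝ≥0∞ :=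
  (∫⁻ x, f x ^ p) ^ (1 / p)

noncomputable section
open MeasureTheory ENNReal
open scoped RealInnerProductSpace

abbrev XX (m : ℕ) : Type := (Fin m → ℝ) × ℝ

def RR (m : ℕ) (f : XX m → ℝ≥0∞) (x : XX m) : ℝ≥0∞ :=
  ∫⁻ y : Fin m → ℝ, f (y, x.2 + ∑ i, x.1 i * y i)

lemma order_meas {α : Type*} [MeasurableSpace α] (μ : Measure α) [SFinite μ] (g : α → ℝ≥0∞)
    (hg : Measurable g) :
    Measurable fun y => ∫⁻ z, (if g z ≤ g y then g z else 0) ∂μ := by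
  have : Measurable (fun q : α × α => if g q.2 ≤ g q.1 then g q.2 else 0) :=
    Measurable.ite (measurableSet_le (hg.comp measurable_snd) (hg.comp measurable_fst))
      (hg.comp measurable_snd) measurable_const
  exact this.lintegral_prod_right'

lemma order_pow {α : Type*} [MeasurableSpace α] (μ : Measure α) [SFinite μ] (g : α → ℝ≥0∞)
    (hg : Measurable g) (k : ℕ) :
    (∫⁻ y, g y ∂μ) ^ (k + 1) ≤
      2 ^ k * ∫⁻ y, g y * (∫⁻ z, (if g z ≤ g y then g z else 0) ∂μ) ^ k ∂μ := by
  induction k with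
  | zero => simp
  | succ k ih =>
    set G : α → ℝ≥0∞ := fun y => ∫⁻ z, (if g z ≤ g y then g z else 0) ∂μ with hG
    have hGm : Measurable G := order_meas μ g hg
    have hmono : ∀ y z, g y ≤ g z → G y ≤ G z := by
      intro y z h
      apply lintegral_mono
      intro w
      by_cases h1 : g w ≤ g y
      · simp [h1, h1.trans h]
      · simp [h1]
    have hite : ∀ z, Measurable fun y => (if g y ≤ g z then g y else 0) := fun z =>
      Measurable.ite (measurableSet_le hg measurable_const) hg measurable_const
    have hite2 : Measurable (fun q : α × α => if g q.2 ≤ g q.1 then g q.2 else 0) :=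
      Measurable.ite (measurableSet_le (hg.comp measurable_snd) (hg.comp measurable_fst))
        (hg.comp measurable_snd) measurable_const
    have key : (∫⁻ z, g z * G z ^ k ∂μ) * (∫⁻ y, g y ∂μ) ≤ 2 * ∫⁻ y, g y * G y ^ (k + 1) ∂μ := by
      calc (∫⁻ z, g z * G z ^ k ∂μ) * (∫⁻ y, g y ∂μ)
          = ∫⁻ z, ∫⁻ y, g z * G z ^ k * g y ∂μ ∂μ := by
            rw [← lintegral_mul_const _ (show Measurable (fun z => g z * G z ^ k) from hg.mul (hGm.pow_const k))]
            congr 1; ext z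
            rw [lintegral_const_mul _ hg]
        _ ≤ ∫⁻ z, ∫⁻ y, (g z * G z ^ k * (if g y ≤ g z then g y else 0) +
              g y * G y ^ k * (if g z ≤ g y then g z else 0)) ∂μ ∂μ := by
            apply lintegral_mono; intro z; apply lintegral_mono; intro y
            dsimp only
            rcases le_total (g y) (g z) with h | h
            · simp only [h, if_true]; exact le_self_add
            · simp only [h, if_true]
              refine le_trans ?_ le_add_self
              calc g z * G z ^ k * g y ≤ g z * G y ^ k * g y := by gcongr; exact hmono _ _ h
                _ = _ := by ring
        _ = (∫⁻ z, ∫⁻ y, (g z * G z ^ k * (if g y ≤ g z then g y else 0)) ∂μ ∂μ) +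
            ∫⁻ z, ∫⁻ y, g y * G y ^ k * (if g z ≤ g y then g z else 0) ∂μ ∂μ := by
            have hm1 : Measurable (fun q : α × α => g q.1 * G q.1 ^ k *
              (if g q.2 ≤ g q.1 then g q.2 else 0)) :=
              ((hg.comp measurable_fst).mul ((hGm.comp measurable_fst).pow_const k)).mul hite2
            rw [← lintegral_add_left (hm1.lintegral_prod_right')]
            congr 1; ext z
            rw [lintegral_add_left]
            exact (hite z).const_mul _
        _ = (∫⁻ z, ∫⁻ y, (g z * G z ^ k * (if g y ≤ g z then g y else 0)) ∂μ ∂μ) +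
            ∫⁻ y, ∫⁻ z, g y * G y ^ k * (if g z ≤ g y then g z else 0) ∂μ ∂μ := by
            congr 1
            rw [lintegral_lintegral_swap]
            have hm1 : Measurable (fun q : α × α => g q.2 * G q.2 ^ k *
              (if g q.1 ≤ g q.2 then g q.1 else 0)) :=
              ((hg.comp measurable_snd).mul ((hGm.comp measurable_snd).pow_const k)).mul
                (hite2.comp measurable_swap)
            exact hm1.aemeasurable
        _ = 2 * ∫⁻ y, g y * G y ^ (k + 1) ∂μ := by
            rw [← two_mul]
            congr 2; ext z
            rw [lintegral_const_mul _ (hite z), pow_succ, mul_assoc]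
    calc (∫⁻ y, g y ∂μ) ^ (k + 1 + 1) = (∫⁻ y, g y ∂μ) ^ (k + 1) * ∫⁻ y, g y ∂μ := pow_succ _ _
      _ ≤ 2 ^ k * (∫⁻ z, g z * G z ^ k ∂μ) * (∫⁻ y, g y ∂μ) := by gcongr
      _ = 2 ^ k * ((∫⁻ z, g z * G z ^ k ∂μ) * (∫⁻ y, g y ∂μ)) := by ring
      _ ≤ 2 ^ k * (2 * ∫⁻ y, g y * G y ^ (k + 1) ∂μ) := by gcongr
      _ = _ := by rw [pow_succ]; ring

/-- swap between lines and points -/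
lemma fiber_swap (m : ℕ) (Φ : (XX m) × (Fin m → ℝ) → ℝ≥0∞) (hΦ : Measurable Φ) :
    ∫⁻ x : XX m, ∫⁻ y : Fin m → ℝ, Φ ((y, x.2 + ∑ i, x.1 i * y i), x.1) =
      ∫⁻ p : XX m, ∫⁻ a : Fin m → ℝ, Φ (p, a) := by
  have hm : Measurable (fun q : (XX m) × (Fin m → ℝ) =>
      Φ ((q.2, q.1.2 + ∑ i, q.1.1 i * q.2 i), q.1.1)) := by
    apply hΦ.comp; fun_prop
  calc ∫⁻ x : XX m, ∫⁻ y : Fin m → ℝ, Φ ((y, x.2 + ∑ i, x.1 i * y i), x.1)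
      = ∫⁻ a : Fin m → ℝ, ∫⁻ v : ℝ, ∫⁻ y : Fin m → ℝ, Φ ((y, v + ∑ i, a i * y i), a) := by
        rw [Measure.volume_eq_prod, lintegral_prod _ hm.lintegral_prod_right'.aemeasurable]
    _ = ∫⁻ a : Fin m → ℝ, ∫⁻ y : Fin m → ℝ, ∫⁻ v : ℝ, Φ ((y, v + ∑ i, a i * y i), a) := by
        congr 1; ext a
        rw [lintegral_lintegral_swap]
        apply Measurable.aemeasurable
        apply hΦ.comp; fun_prop
    _ = ∫⁻ a : Fin m → ℝ, ∫⁻ y : Fin m → ℝ, ∫⁻ v : ℝ, Φ ((y, v), a) := by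
        congr 1; ext a; congr 1; ext y
        exact lintegral_add_right_eq_self (fun v => Φ ((y, v), a)) _
    _ = ∫⁻ a : Fin m → ℝ, ∫⁻ p : XX m, Φ (p, a) := by
        congr 1; ext a
        rw [Measure.volume_eq_prod, lintegral_prod]
        apply Measurable.aemeasurable
        apply hΦ.comp; fun_prop
    _ = _ := by
        rw [lintegral_lintegral_swap]
        apply Measurable.aemeasurable
        apply hΦ.comp; fun_prop

def cutf {m : ℕ} (f : XX m → ℝ≥0∞) (s : ℝ≥0∞) (q : XX m) : ℝ≥0∞ := if f q ≤ s then f q else 0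

lemma cutf_meas {m : ℕ} (f : XX m → ℝ≥0∞) (hf : Measurable f) :
    Measurable (fun q : ℝ≥0∞ × XX m => cutf f q.1 q.2) := by
  unfold cutf
  exact Measurable.ite (measurableSet_le (hf.comp measurable_snd) measurable_fst)
    (hf.comp measurable_snd) measurable_const

lemma cutf_le {m : ℕ} (f : XX m → ℝ≥0∞) (s : ℝ≥0∞) (q : XX m) : cutf f s q ≤ s := by
  unfold cutf; split_ifs with h
  · exact h
  · exact zero_le

lemma cutf_le' {m : ℕ} (f : XX m → ℝ≥0∞) (s : ℝ≥0∞) (q : XX m) : cutf f s q ≤ f q := by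
  unfold cutf; split_ifs with h
  · exact le_rfl
  · exact zero_le

def BB {m : ℕ} (g : XX m → ℝ≥0∞) (k : ℕ) (p : XX m) : ℝ≥0∞ :=
  ∫⁻ a : Fin m → ℝ, (∫⁻ z : Fin m → ℝ, g (p.1 + z, p.2 + ∑ i, a i * z i)) ^ k

lemma RR_pow_le (m k : ℕ) (f : XX m → ℝ≥0∞) (hf : Measurable f) :
    ∫⁻ x, (RR m f x) ^ (k + 1) ≤ 2 ^ k * ∫⁻ p, f p * BB (cutf f (f p)) k p := by
  have hc := cutf_meas f hf
  have hΦm : Measurable (fun t : (XX m) × (Fin m → ℝ) => f t.1 * (∫⁻ z : Fin m → ℝ,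
      cutf f (f t.1) (z, t.1.2 - ∑ i, t.2 i * t.1.1 i + ∑ i, t.2 i * z i)) ^ k) := by
    apply (hf.comp measurable_fst).mul
    apply Measurable.pow_const
    have : Measurable (fun u : ((XX m) × (Fin m → ℝ)) × (Fin m → ℝ) => cutf f (f u.1.1)
      (u.2, u.1.1.2 - ∑ i, u.1.2 i * u.1.1.1 i + ∑ i, u.1.2 i * u.2 i)) := by
      apply hc.comp (f := fun u : ((XX m) × (Fin m → ℝ)) × (Fin m → ℝ) => (f u.1.1,
        (u.2, u.1.1.2 - ∑ i, u.1.2 i * u.1.1.1 i + ∑ i, u.1.2 i * u.2 i)))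
      fun_prop
    exact this.lintegral_prod_right'
  calc ∫⁻ x, (RR m f x) ^ (k + 1)
      ≤ ∫⁻ x : XX m, 2 ^ k * ∫⁻ y : Fin m → ℝ, f (y, x.2 + ∑ i, x.1 i * y i) *
        (∫⁻ z : Fin m → ℝ, cutf f (f (y, x.2 + ∑ i, x.1 i * y i)) (z, x.2 + ∑ i, x.1 i * z i)) ^ k := by
        apply lintegral_mono
        intro x
        have := order_pow (volume : Measure (Fin m → ℝ)) (fun y => f (y, x.2 + ∑ i, x.1 i * y i))
          (by fun_prop) k
        exact this
    _ = 2 ^ k * ∫⁻ x : XX m, ∫⁻ y : Fin m → ℝ, f (y, x.2 + ∑ i, x.1 i * y i) *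
        (∫⁻ z : Fin m → ℝ, cutf f (f (y, x.2 + ∑ i, x.1 i * y i)) (z, x.2 + ∑ i, x.1 i * z i)) ^ k := by
        rw [lintegral_const_mul']
        simp
    _ = 2 ^ k * ∫⁻ p : XX m, ∫⁻ a : Fin m → ℝ, f p * (∫⁻ z : Fin m → ℝ,
      cutf f (f p) (z, p.2 - ∑ i, a i * p.1 i + ∑ i, a i * z i)) ^ k := by
        rw [← fiber_swap m _ hΦm]
        simp
    _ = 2 ^ k * ∫⁻ p, f p * BB (cutf f (f p)) k p := by
        congr 2; ext p
        rw [lintegral_const_mul]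
        · congr 1
          unfold BB
          congr 1; ext a
          congr 1
          rw [← lintegral_add_left_eq_self _ p.1]
          congr 1; ext z
          congr 2
          simp [mul_add, Finset.sum_add_distrib]
          ring
        · apply Measurable.pow_const
          have : Measurable (fun u : (Fin m → ℝ) × (Fin m → ℝ) => cutf f (f p)
            (u.2, p.2 - ∑ i, u.1 i * p.1 i + ∑ i, u.1 i * u.2 i)) := by
            apply hc.comp (f := fun u : (Fin m → ℝ) × (Fin m → ℝ) => (f p,
              (u.2, p.2 - ∑ i, u.1 i * p.1 i + ∑ i, u.1 i * u.2 i)))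
            fun_prop
          exact this.lintegral_prod_right'

end

noncomputable section
open MeasureTheory ENNReal
open scoped RealInnerProductSpace

lemma lint_smul {V : Type*} [NormedAddCommGroup V] [NormedSpace ℝ V] [MeasurableSpace V]
    [BorelSpace V] [FiniteDimensional ℝ V] (μ : Measure V) [μ.IsAddHaarMeasure]
    (r : ℝ) (hr : r ≠ 0) (h : V → ℝ≥0∞) :
    ∫⁻ x, h x ∂μ = ENNReal.ofReal (|r| ^ Module.finrank ℝ V) * ∫⁻ x, h (r • x) ∂μ := by
  have e := (Homeomorph.smulOfNeZero (α := V) r hr).toMeasurableEquiv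
  have h1 : ∫⁻ x, h (r • x) ∂μ = ∫⁻ x, h x ∂(Measure.map (r • ·) μ) := by
    exact (lintegral_map_equiv h (Homeomorph.smulOfNeZero (α := V) r hr).toMeasurableEquiv).symm
  rw [h1, Measure.map_addHaar_smul μ hr, lintegral_smul_measure, smul_eq_mul, ← mul_assoc,
    ← ENNReal.ofReal_mul (by positivity)]
  have : |r| ^ Module.finrank ℝ V * |(r ^ Module.finrank ℝ V)⁻¹| = 1 := by
    rw [abs_inv, abs_pow]
    exact mul_inv_cancel₀ (pow_ne_zero _ (abs_ne_zero.mpr hr))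
  rw [this]; simp

lemma polar_gen {V : Type*} [NormedAddCommGroup V] [NormedSpace ℝ V] [MeasurableSpace V]
    [BorelSpace V] [FiniteDimensional ℝ V] (μ : Measure V) [μ.IsAddHaarMeasure]
    (h : ℝ × V → ℝ≥0∞) (hh : Measurable h) :
    ∫⁻ r : ℝ, ∫⁻ x, h (r, x) ∂μ =
      ∫⁻ x, (∫⁻ r : ℝ, ENNReal.ofReal (|r| ^ Module.finrank ℝ V) * h (r, r • x)) ∂μ := by
  have hm : Measurable (fun q : ℝ × V => ENNReal.ofReal (|q.1| ^ Module.finrank ℝ V) * h (q.1, q.1 • q.2)) := by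
    apply Measurable.mul
    · fun_prop
    · apply hh.comp; fun_prop
  rw [← lintegral_lintegral_swap (f := fun (r : ℝ) (x : V) => ENNReal.ofReal (|r| ^ Module.finrank ℝ V) * h (r, r • x)) hm.aemeasurable]
  apply lintegral_congr_ae
  have : ∀ᵐ r : ℝ, r ≠ 0 := by simp [ae_iff]
  filter_upwards [this] with r hr
  rw [lint_smul μ r hr, lintegral_const_mul]
  apply hh.comp; fun_prop

lemma cons_meas (m : ℕ) : Measurable fun q : ℝ × (Fin m → ℝ) =>
    (Fin.cons q.1 q.2 : Fin (m + 1) → ℝ) := by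
  rw [measurable_pi_iff]
  intro i
  refine Fin.cases ?_ (fun j => ?_) i
  · simpa using measurable_fst
  · simp only [Fin.cons_succ]; fun_prop

lemma lint_cons (m : ℕ) (h : (Fin (m + 1) → ℝ) → ℝ≥0∞) (hh : Measurable h) :
    ∫⁻ y, h y = ∫⁻ r : ℝ, ∫⁻ w : Fin m → ℝ, h (Fin.cons r w) := by
  have h1 := (volume_preserving_piFinSuccAbove (fun _ : Fin (m + 1) => ℝ) 0).symm
  rw [← h1.lintegral_comp hh, Measure.volume_eq_prod, lintegral_prod]
  · simp [MeasurableEquiv.piFinSuccAbove_symm_apply, Fin.consEquiv]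
  · exact (hh.comp (MeasurableEquiv.measurable _)).aemeasurable

lemma polar_vec (m : ℕ) (h : (Fin (m + 1) → ℝ) → ℝ≥0∞) (hh : Measurable h) :
    ∫⁻ y, h y = ∫⁻ w : Fin m → ℝ, ∫⁻ r : ℝ, ENNReal.ofReal (|r| ^ m) * h (Fin.cons r (r • w)) := by
  rw [lint_cons m h hh]
  have := polar_gen (volume : Measure (Fin m → ℝ)) (fun q => h (Fin.cons q.1 q.2))
    (hh.comp (cons_meas m))
  simpa using this

lemma lint_XX_cons (m : ℕ) (h : XX (m + 1) → ℝ≥0∞) (hh : Measurable h) :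
    ∫⁻ y, h y = ∫⁻ r : ℝ, ∫⁻ w : XX m, h (Fin.cons r w.1, w.2) := by
  have hc := cons_meas m
  rw [Measure.volume_eq_prod, lintegral_prod _ hh.aemeasurable, lint_cons]
  · congr 1; ext r
    rw [Measure.volume_eq_prod, lintegral_prod]
    apply Measurable.aemeasurable
    apply hh.comp
    exact (hc.comp (measurable_const.prodMk measurable_fst)).prodMk measurable_snd
  · exact hh.lintegral_prod_right'

instance XX_haar (m : ℕ) : (volume : Measure (XX m)).IsAddHaarMeasure := by
  rw [Measure.volume_eq_prod]; infer_instance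

lemma polar_XX (m : ℕ) (h : XX (m + 1) → ℝ≥0∞) (hh : Measurable h) :
    ∫⁻ y, h y = ∫⁻ w : XX m, ∫⁻ r : ℝ, ENNReal.ofReal (|r| ^ (m + 1)) *
      h (Fin.cons r (r • w.1), r * w.2) := by
  have hc := cons_meas m
  rw [lint_XX_cons m h hh]
  have hm : Measurable (fun q : ℝ × XX m => h ((Fin.cons q.1 q.2.1 : Fin (m + 1) → ℝ), q.2.2)) := by
    apply hh.comp
    exact (hc.comp (measurable_fst.prodMk (measurable_fst.comp measurable_snd))).prodMk
      (measurable_snd.comp measurable_snd)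
  have := polar_gen (volume : Measure (XX m)) (fun q => h ((Fin.cons q.1 q.2.1 : Fin (m + 1) → ℝ), q.2.2)) hm
  simpa using this

/-- the projected function -/
def FF (m : ℕ) (g : XX (m + 1) → ℝ≥0∞) (p : XX (m + 1)) (w : XX m) : ℝ≥0∞ :=
  ∫⁻ r : ℝ, ENNReal.ofReal (|r| ^ m) * g (p.1 + Fin.cons r (r • w.1), p.2 + r * w.2)

lemma FF_arg_meas (m : ℕ) (p : XX (m + 1)) : Measurable (fun q : XX m × ℝ =>
    ((p.1 + Fin.cons q.2 (q.2 • q.1.1), p.2 + q.2 * q.1.2) : XX (m + 1))) := by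
  have hc := cons_meas m
  apply Measurable.prodMk
  · apply Measurable.const_add
    exact hc.comp (f := fun q : XX m × ℝ => (q.2, q.2 • q.1.1)) (by fun_prop)
  · fun_prop

lemma FF_meas (m : ℕ) (g : XX (m + 1) → ℝ≥0∞) (hg : Measurable g) (p : XX (m + 1)) :
    Measurable (FF m g p) := by
  have : Measurable (fun q : XX m × ℝ => ENNReal.ofReal (|q.2| ^ m) *
    g (p.1 + Fin.cons q.2 (q.2 • q.1.1), p.2 + q.2 * q.1.2)) := by
    apply Measurable.mul
    · fun_prop
    · exact hg.comp (FF_arg_meas m p)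
  exact this.lintegral_prod_right'

lemma BB_eq (m k : ℕ) (g : XX (m + 1) → ℝ≥0∞) (hg : Measurable g) (p : XX (m + 1)) :
    BB g k p = ∫⁻ x : XX m, (RR m (FF m g p) x) ^ k := by
  have hFm := FF_meas m g hg p
  unfold BB
  have hm1 : Measurable (fun a : Fin (m + 1) → ℝ =>
      (∫⁻ z : Fin (m + 1) → ℝ, g (p.1 + z, p.2 + ∑ i, a i * z i)) ^ k) := by
    apply Measurable.pow_const
    have : Measurable (fun u : (Fin (m + 1) → ℝ) × (Fin (m + 1) → ℝ) =>
      g (p.1 + u.2, p.2 + ∑ i, u.1 i * u.2 i)) := by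
      apply hg.comp; fun_prop
    exact this.lintegral_prod_right'
  have hRm : Measurable (fun x : XX m => RR m (FF m g p) x ^ k) := by
    apply Measurable.pow_const
    have : Measurable (fun u : (XX m) × (Fin m → ℝ) =>
      FF m g p (u.2, u.1.2 + ∑ i, u.1.1 i * u.2 i)) := by
      apply hFm.comp; fun_prop
    exact this.lintegral_prod_right'
  rw [lint_cons m _ hm1, Measure.volume_eq_prod, lintegral_prod_symm _ hRm.aemeasurable]
  congr 1; ext x0
  congr 1; ext x
  congr 1
  unfold RR FF
  rw [polar_vec]
  · congr 1; ext w; congr 1; ext r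
    simp [Fin.sum_univ_succ, Finset.mul_sum, mul_add]
    have e : x0 * r + ∑ i, x i * (r * w i) = r * x0 + ∑ i, r * (x i * w i) := by
      rw [mul_comm x0 r]; congr 1; exact Finset.sum_congr rfl fun i _ => by ring
    rw [e]
  · apply hg.comp; fun_prop

end

noncomputable section
open MeasureTheory ENNReal
open scoped RealInnerProductSpace

lemma near_est (m : ℕ) (s : ℝ≥0∞) (g : ℝ → ℝ≥0∞) (hg : ∀ r, g r ≤ s) (ρ : ℝ) (hρ : 0 < ρ) :
    ∫⁻ r in {r : ℝ | |r| ≤ ρ}, ENNReal.ofReal (|r| ^ m) * g r ≤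
      ENNReal.ofReal (2 * ρ ^ (m + 1)) * s := by
  have hset : {r : ℝ | |r| ≤ ρ} = Set.Icc (-ρ) ρ := by ext r; simp [abs_le]
  calc ∫⁻ r in {r : ℝ | |r| ≤ ρ}, ENNReal.ofReal (|r| ^ m) * g r
      ≤ ∫⁻ r in {r : ℝ | |r| ≤ ρ}, ENNReal.ofReal (ρ ^ m) * s := by
        apply setLIntegral_mono' (by rw [hset]; exact measurableSet_Icc)
        intro r hr
        gcongr
        · exact hr
        · exact hg r
    _ = ENNReal.ofReal (2 * ρ ^ (m + 1)) * s := by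
        rw [setLIntegral_const, hset, Real.volume_Icc, mul_right_comm, ← ENNReal.ofReal_mul (by positivity)]
        congr 2; ring

lemma tail_int (R : ℝ) (hR : 0 < R) :
    ∫⁻ r in {r : ℝ | R < |r|}, ENNReal.ofReal (|r| ^ (-2 : ℝ)) ≤ ENNReal.ofReal (2 / R) := by
  have hset : {r : ℝ | R < |r|} = Set.Ioi R ∪ Set.Iio (-R) := by
    ext r; simp [lt_abs]; constructor
    · rintro (h | h)
      · exact Or.inl h
      · right; linarith
    · rintro (h | h)
      · exact Or.inl h
      · right; linarith
  have h1 : ∫⁻ r in Set.Ioi R, ENNReal.ofReal (|r| ^ (-2 : ℝ)) = ENNReal.ofReal (1 / R) := by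
    have hi := integrableOn_Ioi_rpow_of_lt (a := -2) (by norm_num) hR
    have hv := integral_Ioi_rpow_of_lt (a := -2) (by norm_num) hR
    rw [show (1 / R : ℝ) = ∫ t in Set.Ioi R, t ^ (-2 : ℝ) by
      rw [hv]; norm_num [Real.rpow_neg_one]]
    rw [ofReal_integral_eq_lintegral_ofReal hi]
    · apply setLIntegral_congr_fun measurableSet_Ioi
      intro r hr
      simp only [Set.mem_Ioi] at hr
      dsimp only
      rw [abs_of_pos (hR.trans hr)]
    · filter_upwards [ae_restrict_mem measurableSet_Ioi] with r hr
      exact Real.rpow_nonneg (hR.trans hr).le _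
  have h2 : ∫⁻ r in Set.Iio (-R), ENNReal.ofReal (|r| ^ (-2 : ℝ)) = ENNReal.ofReal (1 / R) := by
    rw [← h1]
    have := (Measure.measurePreserving_neg (volume : Measure ℝ)).setLIntegral_comp_preimage
      (s := Set.Iio (-R)) (f := fun r => ENNReal.ofReal (|r| ^ (-2 : ℝ))) measurableSet_Iio
      (by fun_prop)
    rw [← this]
    simp
  rw [hset]
  refine (lintegral_union_le _ _ _).trans ?_
  rw [h1, h2, ← ENNReal.ofReal_add (by positivity) (by positivity)]
  apply le_of_eq; congr 1; ring

lemma far_est {Y : Type*} [MeasurableSpace Y] (ν : Measure Y) [SFinite ν] (m : ℕ)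
    (g : Y × ℝ → ℝ≥0∞) (hg : Measurable g) (R : ℝ) (hR : 0 < R) :
    ∫⁻ w, (∫⁻ r in {r : ℝ | R < |r|}, ENNReal.ofReal (|r| ^ m) * g (w, r)) ∂ν ≤
      (∫⁻ w, (∫⁻ r : ℝ, ENNReal.ofReal (|r| ^ (m + 1)) * g (w, r) ^ (((m : ℝ) + 3) / (m + 2))) ∂ν)
        ^ (((m : ℝ) + 2) / (m + 3)) *
      (ν Set.univ * ENNReal.ofReal (2 / R)) ^ (1 / ((m : ℝ) + 3)) := by
  set S : Set ℝ := {r : ℝ | R < |r|} with hS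
  have hSm : MeasurableSet S := measurableSet_lt measurable_const (by fun_prop)
  set τ : Measure (Y × ℝ) := ν.prod (volume.restrict S) with hτ
  set a : Y × ℝ → ℝ≥0∞ := fun q => ENNReal.ofReal (|q.2| ^ (((m : ℝ) + 1) * (m + 2) / (m + 3))) * g q with ha
  set b : Y × ℝ → ℝ≥0∞ := fun q => ENNReal.ofReal (|q.2| ^ (-2 / ((m : ℝ) + 3))) with hb
  have ham : Measurable a := by
    apply Measurable.mul
    · fun_prop
    · exact hg
  have hbm : Measurable b := by fun_prop
  have hpq : (((m : ℝ) + 3) / (m + 2)).HolderConjugate ((m : ℝ) + 3) := by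
    rw [Real.holderConjugate_iff]
    constructor
    · rw [lt_div_iff₀ (by positivity)]; linarith
    · field_simp; ring
  have hab : ∀ w, ∀ r ∈ S, ENNReal.ofReal (|r| ^ m) * g (w, r) = (a * b) (w, r) := by
    intro w r hr
    have hr0 : 0 < |r| := hR.trans hr
    simp only [Pi.mul_apply, ha, hb]
    rw [mul_right_comm, ← ENNReal.ofReal_mul (by positivity), ← Real.rpow_add hr0]
    congr 2
    rw [← Real.rpow_natCast]; congr 1
    field_simp; ring
  have h1 : ∫⁻ w, (∫⁻ r in S, ENNReal.ofReal (|r| ^ m) * g (w, r)) ∂ν = ∫⁻ q, (a * b) q ∂τ := by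
    rw [hτ, lintegral_prod _ (ham.mul hbm).aemeasurable]
    congr 1; ext w
    exact setLIntegral_congr_fun hSm (hab w)
  rw [h1]
  refine (ENNReal.lintegral_mul_le_Lp_mul_Lq τ hpq ham.aemeasurable hbm.aemeasurable).trans ?_
  have e1 : 1 / (((m : ℝ) + 3) / (m + 2)) = ((m : ℝ) + 2) / (m + 3) := by field_simp
  rw [e1]
  gcongr
  · rw [hτ, lintegral_prod _ (ham.pow_const _).aemeasurable]
    apply lintegral_mono
    intro w
    refine le_trans ?_ (setLIntegral_le_lintegral S _)
    apply le_of_eq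
    apply setLIntegral_congr_fun hSm
    intro r hr
    have hr0 : 0 < |r| := hR.trans hr
    simp only [ha]
    rw [ENNReal.mul_rpow_of_nonneg _ _ (by positivity), ENNReal.ofReal_rpow_of_nonneg (by positivity) (by positivity),
      ← Real.rpow_mul hr0.le]
    congr 2
    rw [← Real.rpow_natCast]; congr 1
    push_cast; field_simp
  · rw [hτ, lintegral_prod _ (hbm.pow_const _).aemeasurable]
    calc ∫⁻ w, (∫⁻ r in S, b (w, r) ^ ((m : ℝ) + 3)) ∂ν
        = ∫⁻ w, (∫⁻ r in S, ENNReal.ofReal (|r| ^ (-2 : ℝ))) ∂ν := by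
          congr 1; ext w
          apply setLIntegral_congr_fun hSm
          intro r hr
          have hr0 : 0 < |r| := hR.trans hr
          simp only [hb]
          rw [ENNReal.ofReal_rpow_of_nonneg (by positivity) (by positivity), ← Real.rpow_mul hr0.le]
          congr 2; field_simp
      _ ≤ ∫⁻ w, ENNReal.ofReal (2 / R) ∂ν := lintegral_mono fun w => tail_int R hR
      _ = _ := by rw [lintegral_const, mul_comm]

lemma ofReal_pow_root (x : ℝ) (hx : 0 ≤ x) (k : ℕ) (t : ℝ) (j : ℕ) (h : (k : ℝ) * t = j) (ht : 0 ≤ t) :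
    (ENNReal.ofReal (x ^ k)) ^ t = ENNReal.ofReal (x ^ j) := by
  rw [ENNReal.ofReal_rpow_of_nonneg (by positivity) ht, ← Real.rpow_natCast, ← Real.rpow_mul hx, h,
    Real.rpow_natCast]

lemma one_dim (m : ℕ) (g : ℝ → ℝ≥0∞) (hg : Measurable g) (σ : ℝ) (hσ : 0 < σ)
    (hs : ∀ r, g r ≤ ENNReal.ofReal (σ ^ ((m + 2) ^ 2))) :
    ∫⁻ r, ENNReal.ofReal (|r| ^ m) * g r ≤ ENNReal.ofReal (4 * σ) *
      (∫⁻ r : ℝ, ENNReal.ofReal (|r| ^ (m + 1)) * g r ^ (((m : ℝ) + 3) / (m + 2)))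
        ^ (((m : ℝ) + 1) / (m + 2)) := by
  set M := ∫⁻ r : ℝ, ENNReal.ofReal (|r| ^ (m + 1)) * g r ^ (((m : ℝ) + 3) / (m + 2)) with hM
  have hmain : ∀ ρ : ℝ, 0 < ρ → ∫⁻ r, ENNReal.ofReal (|r| ^ m) * g r ≤
      ENNReal.ofReal (2 * ρ ^ (m + 1)) * ENNReal.ofReal (σ ^ ((m + 2) ^ 2)) +
      M ^ (((m : ℝ) + 2) / (m + 3)) * (ENNReal.ofReal (2 / ρ)) ^ (1 / ((m : ℝ) + 3)) := by
    intro ρ hρ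
    have hsm : MeasurableSet {r : ℝ | |r| ≤ ρ} := measurableSet_le (by fun_prop) measurable_const
    rw [← lintegral_add_compl _ hsm]
    gcongr
    · exact near_est m _ g hs ρ hρ
    · have := far_est (Measure.dirac ()) m (fun q => g q.2) (hg.comp measurable_snd) ρ hρ
      simp only [lintegral_dirac, measure_univ, one_mul] at this
      have hc : {r : ℝ | |r| ≤ ρ}ᶜ = {r | ρ < |r|} := by ext r; simp
      rw [hc]; exact this
  rcases eq_or_ne M 0 with h0 | h0
  · have hg0 : g =ᵐ[volume] 0 := by
      rw [hM, lintegral_eq_zero_iff (by fun_prop)] at h0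
      have h00 : ∀ᵐ r : ℝ, r ≠ 0 := by simp [ae_iff]
      filter_upwards [h0, h00] with r hr hr0
      simp only [Pi.zero_apply, mul_eq_zero, ENNReal.ofReal_eq_zero] at hr
      rcases hr with hr | hr
      · exact absurd hr (not_le.mpr (by positivity))
      · rw [ENNReal.rpow_eq_zero_iff_of_pos (by positivity)] at hr
        simpa using hr
    have : ∫⁻ r, ENNReal.ofReal (|r| ^ m) * g r = 0 := by
      rw [lintegral_eq_zero_iff (by fun_prop)]
      filter_upwards [hg0] with r hr
      simp [hr]
    rw [this]; exact zero_le
  rcases eq_or_ne M ⊤ with h1 | h1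
  · rw [h1, ENNReal.top_rpow_of_pos (by positivity), ENNReal.mul_top]
    · exact le_top
    · simp [hσ]
  have hMp : 0 < M.toReal := ENNReal.toReal_pos h0 h1
  set μ : ℝ := M.toReal ^ (1 / (((m + 3) * (m + 2) : ℕ) : ℝ)) with hμ
  have hμ0 : 0 < μ := Real.rpow_pos_of_pos hMp _
  have hMμ : M = ENNReal.ofReal (μ ^ ((m + 3) * (m + 2))) := by
    rw [hμ, ← Real.rpow_natCast, ← Real.rpow_mul hMp.le, one_div_mul_cancel (by positivity), Real.rpow_one,
      ENNReal.ofReal_toReal h1]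
  have h2 := hmain ((μ / σ) ^ (m + 3)) (by positivity)
  refine h2.trans ?_
  rw [hMμ, ofReal_pow_root μ hμ0.le _ _ ((m + 2) ^ 2) (by push_cast; field_simp) (by positivity),
    ofReal_pow_root μ hμ0.le _ _ ((m + 3) * (m + 1)) (by push_cast; field_simp) (by positivity)]
  have h3 : (ENNReal.ofReal (2 / (μ / σ) ^ (m + 3))) ^ (1 / ((m : ℝ) + 3)) ≤ ENNReal.ofReal (2 * σ / μ) := by
    calc (ENNReal.ofReal (2 / (μ / σ) ^ (m + 3))) ^ (1 / ((m : ℝ) + 3))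
        ≤ (ENNReal.ofReal ((2 * σ / μ) ^ (m + 3))) ^ (1 / ((m : ℝ) + 3)) := by
          gcongr
          have : (2 * σ / μ) ^ (m + 3) = 2 ^ (m + 3) * (1 / (μ / σ) ^ (m + 3)) := by
            rw [← one_div_pow, ← mul_pow]; congr 1; field_simp
          rw [this, div_eq_mul_one_div]
          gcongr
          calc (2 : ℝ) = 2 ^ 1 := by norm_num
            _ ≤ 2 ^ (m + 3) := by gcongr <;> [norm_num; omega]
      _ = ENNReal.ofReal (2 * σ / μ) := by
          rw [ofReal_pow_root _ (by positivity) _ _ 1 (by push_cast; field_simp) (by positivity), pow_one]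
  refine (add_le_add le_rfl (mul_le_mul_right h3 _)).trans ?_
  rw [← ENNReal.ofReal_mul (by positivity), ← ENNReal.ofReal_mul (by positivity),
    ← ENNReal.ofReal_mul (by positivity), ← ENNReal.ofReal_add (by positivity) (by positivity)]
  apply le_of_eq; congr 1
  have e1 : (μ / σ) ^ (m + 3) = μ ^ (m + 3) / σ ^ (m + 3) := div_pow _ _ _
  have e2 : 2 * ((μ / σ) ^ (m + 3)) ^ (m + 1) * σ ^ (m + 2) ^ 2 = 2 * σ * μ ^ ((m + 3) * (m + 1)) := by
    rw [← pow_mul, div_pow]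
    have : σ ^ (m + 2) ^ 2 = σ ^ ((m + 3) * (m + 1)) * σ := by rw [← pow_succ]; congr 1; ring
    rw [this]; field_simp
  have e3 : μ ^ (m + 2) ^ 2 * (2 * σ / μ) = 2 * σ * μ ^ ((m + 3) * (m + 1)) := by
    have : μ ^ (m + 2) ^ 2 = μ ^ ((m + 3) * (m + 1)) * μ := by rw [← pow_succ]; congr 1; ring
    rw [this]; field_simp
  rw [e2, e3]; ring

end

noncomputable section
open MeasureTheory ENNReal
open scoped RealInnerProductSpace Pointwise

/-- affine cubes -/
def Kset (m : ℕ) (A : XX m →ₗ[ℝ] (Fin (m + 1) → ℝ)) (b : XX m) : Set (XX m) :=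
  {x | ∀ i, |A (x - b) i| ≤ 1}

def KsetR (m : ℕ) (A : XX m →ₗ[ℝ] (Fin (m + 1) → ℝ)) (b : XX m) (R : ℝ) : Set (XX m) :=
  {x | ∀ i, |A (x - b) i| ≤ R}

lemma KsetR_meas (m : ℕ) (A : XX m →ₗ[ℝ] (Fin (m + 1) → ℝ)) (b : XX m) (R : ℝ) :
    MeasurableSet (KsetR m A b R) := by
  have hA : Continuous A := A.continuous_of_finiteDimensional
  unfold KsetR
  have : IsClosed {x | ∀ i, |A (x - b) i| ≤ R} := by
    rw [Set.ofPred_forall]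
    apply isClosed_iInter
    intro i
    exact isClosed_le (by fun_prop) continuous_const
  exact this.measurableSet

lemma Kset_meas (m : ℕ) (A : XX m →ₗ[ℝ] (Fin (m + 1) → ℝ)) (b : XX m) :
    MeasurableSet (Kset m A b) := KsetR_meas m A b 1

lemma finrank_XX (m : ℕ) : Module.finrank ℝ (XX m) = m + 1 := by simp [XX]

lemma KsetR_vol (m : ℕ) (A : XX m →ₗ[ℝ] (Fin (m + 1) → ℝ)) (b v : XX m) (R : ℝ) (hR : 0 < R) :
    volume (KsetR m A v R) = ENNReal.ofReal (R ^ (m + 1)) * volume (Kset m A b) := by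
  have h1 : KsetR m A v R = (fun x => x - v) ⁻¹' (R • (KsetR m A 0 1)) := by
    ext x
    simp only [KsetR, Set.mem_ofPred_eq, Set.mem_preimage, sub_zero]
    rw [Set.mem_smul_set_iff_inv_smul_mem₀ hR.ne']
    simp only [Set.mem_ofPred_eq, map_smul, Pi.smul_apply, smul_eq_mul, abs_mul, abs_inv, abs_of_pos hR]
    refine forall_congr' fun i => ?_
    rw [inv_mul_le_iff₀ hR, mul_one]
  have h2 : Kset m A b = (fun x => x - b) ⁻¹' (KsetR m A 0 1) := by
    ext x; simp [KsetR, Kset]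
  rw [h1, h2, show (fun x : XX m => x - v) = fun x => x + -v from by ext x <;> simp [sub_eq_add_neg],
    show (fun x : XX m => x - b) = fun x => x + -b from by ext x <;> simp [sub_eq_add_neg], measure_preimage_add_right, measure_preimage_add_right, Measure.addHaar_smul,
    finrank_XX, abs_of_pos (by positivity)]

lemma Kset_vol_pos (m : ℕ) (A : XX m →ₗ[ℝ] (Fin (m + 1) → ℝ)) (b : XX m) :
    0 < volume (Kset m A b) := by
  have hA : Continuous A := A.continuous_of_finiteDimensional
  have ho : IsOpen {x | ∀ i, |A (x - b) i| < 1} := by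
    rw [Set.ofPred_forall]
    apply isOpen_iInter_of_finite
    intro i
    exact isOpen_lt (by fun_prop) continuous_const
  refine (ho.measure_pos volume ⟨b, by simp⟩).trans_le (measure_mono ?_)
  intro x hx i
  exact (hx i).le

lemma Kset_vol_fin (m : ℕ) (A : XX m →ₗ[ℝ] (Fin (m + 1) → ℝ)) (hA : Function.Injective A) (b : XX m) :
    volume (Kset m A b) < ⊤ := by
  obtain ⟨K, hK, hKA⟩ := A.exists_antilipschitzWith (LinearMap.ker_eq_bot.mpr hA)
  apply Bornology.IsBounded.measure_lt_top
  have : Kset m A b ⊆ Metric.closedBall b K := by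
    intro x hx
    rw [Metric.mem_closedBall]
    refine (hKA.le_mul_dist x b).trans ?_
    rw [dist_eq_norm, ← map_sub]
    have : ‖A (x - b)‖ ≤ 1 := by
      rw [pi_norm_le_iff_of_nonneg zero_le_one]
      exact hx
    calc (K : ℝ) * ‖A (x - b)‖ ≤ K * 1 := by gcongr
      _ = K := mul_one _
  exact Metric.isBounded_closedBall.subset this

/-- the cone map -/
def coneA (m : ℕ) (A : XX m →ₗ[ℝ] (Fin (m + 1) → ℝ)) (b : XX m) (R : ℝ) :
    XX (m + 1) →ₗ[ℝ] (Fin (m + 2) → ℝ) where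
  toFun y := Fin.cons (y.1 0 / R) (R⁻¹ • A ((Fin.tail y.1, y.2) - y.1 0 • b))
  map_add' y z := by
    ext i
    refine Fin.cases ?_ (fun j => ?_) i
    · simp; ring
    · simp only [Pi.add_apply, Fin.cons_succ, Prod.fst_add, Prod.snd_add]
      have h : (((Fin.tail (y.1 + z.1), y.2 + z.2) : XX m) - (y.1 0 + z.1 0) • b) =
          ((Fin.tail y.1, y.2) - y.1 0 • b) + ((Fin.tail z.1, z.2) - z.1 0 • b) := by
        refine Prod.ext ?_ ?_
        · funext k; simp [Fin.tail]; ring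
        · simp; ring
      rw [h, map_add, smul_add]; rfl
  map_smul' c y := by
    ext i
    refine Fin.cases ?_ (fun j => ?_) i
    · simp; ring
    · simp only [Pi.smul_apply, Fin.cons_succ, Prod.smul_fst, Prod.smul_snd, RingHom.id_apply]
      have h : (((Fin.tail (c • y.1), c • y.2) : XX m) - (c • y.1 0) • b) =
          c • ((Fin.tail y.1, y.2) - y.1 0 • b) := by
        refine Prod.ext ?_ ?_
        · funext k; simp [Fin.tail]; ring
        · simp; ring
      rw [h, map_smul, smul_comm c R⁻¹]; rfl

lemma coneA_apply (m : ℕ) (A : XX m →ₗ[ℝ] (Fin (m + 1) → ℝ)) (b : XX m) (R : ℝ) (r : ℝ) (w : XX m) :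
    coneA m A b R (Fin.cons r w.1, w.2) = Fin.cons (r / R) (R⁻¹ • A (w - r • b)) := by
  simp [coneA]

lemma coneA_inj (m : ℕ) (A : XX m →ₗ[ℝ] (Fin (m + 1) → ℝ)) (hA : Function.Injective A) (b : XX m)
    (R : ℝ) (hR : 0 < R) : Function.Injective (coneA m A b R) := by
  rw [injective_iff_map_eq_zero]
  intro y hy
  have h0 := congrFun hy 0
  simp [coneA, hR.ne'] at h0
  have h1 : A (Fin.tail y.1, y.2) = 0 := by
    ext i
    have := congrFun hy i.succ
    simpa [coneA, h0, hR.ne'] using this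
  have h2 := (injective_iff_map_eq_zero A).mp hA _ h1
  rw [Prod.mk_eq_zero] at h2
  ext i
  · refine Fin.cases ?_ (fun j => ?_) i
    · simpa using h0
    · exact congrFun h2.1 j
  · exact h2.2

lemma cone_vol (m : ℕ) (A : XX m →ₗ[ℝ] (Fin (m + 1) → ℝ)) (b : XX m)
    (R : ℝ) (hR : 0 < R) (p : XX (m + 1)) :
    volume (Kset (m + 1) (coneA m A b R) p) = ENNReal.ofReal (2 * R ^ (m + 2)) * volume (Kset m A b) := by
  have h0 := KsetR_vol (m + 1) (coneA m A b R) 0 p 1 one_pos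
  have h1 : volume (Kset (m + 1) (coneA m A b R) p) = volume (Kset (m + 1) (coneA m A b R) 0) := by
    have : Kset (m + 1) (coneA m A b R) p = KsetR (m + 1) (coneA m A b R) p 1 := rfl
    rw [this, h0]; simp
  rw [h1, ← lintegral_indicator_one (Kset_meas _ _ _), lint_XX_cons]
  swap
  · exact measurable_const.indicator (Kset_meas _ _ _)
  have h2 : ∀ r : ℝ, ∫⁻ w : XX m, (Kset (m + 1) (coneA m A b R) 0).indicator (1 : XX (m + 1) → ℝ≥0∞) (Fin.cons r w.1, w.2) =
      (Set.Icc (-R) R).indicator (fun _ => ENNReal.ofReal (R ^ (m + 1)) * volume (Kset m A b)) r := by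
    intro r
    have h3 : ∀ w : XX m, ((Fin.cons r w.1, w.2) : XX (m + 1)) ∈ Kset (m + 1) (coneA m A b R) 0 ↔
        (r ∈ Set.Icc (-R) R ∧ w ∈ KsetR m A (r • b) R) := by
      intro w
      simp only [Kset, KsetR, Set.mem_ofPred_eq, sub_zero, coneA_apply]
      rw [Fin.forall_fin_succ]
      simp only [Fin.cons_zero, Fin.cons_succ, abs_div, abs_of_pos hR, div_le_one hR, Set.mem_Icc, abs_le (a := r)]
      simp [abs_mul, abs_of_pos hR, inv_mul_le_iff₀ hR]
    by_cases hr : r ∈ Set.Icc (-R) R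
    · rw [Set.indicator_of_mem hr, ← KsetR_vol m A b (r • b) R hR,
        ← lintegral_indicator_one (KsetR_meas _ _ _ _)]
      congr 1; ext w
      by_cases hw : w ∈ KsetR m A (r • b) R
      · rw [Set.indicator_of_mem hw, Set.indicator_of_mem ((h3 w).2 ⟨hr, hw⟩)]; rfl
      · rw [Set.indicator_of_notMem hw, Set.indicator_of_notMem]
        rw [h3]; tauto
    · rw [Set.indicator_of_notMem hr]
      rw [← lintegral_zero (μ := (volume : Measure (XX m)))]
      congr 1; ext w
      rw [Set.indicator_of_notMem]
      rw [h3]; tauto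
  simp_rw [h2]
  rw [lintegral_indicator_const measurableSet_Icc, Real.volume_Icc, mul_comm, ← mul_assoc,
    ← ENNReal.ofReal_mul (by linarith)]
  congr 2; ring

def Claim (m : ℕ) (θ C : ℝ) : Prop :=
  ∀ f : XX m → ℝ≥0∞, Measurable f → ∀ l : ℝ, 0 < l → l ≤ 1 →
    ∫⁻ x, f x ^ (((m : ℝ) + 2) / (m + 1)) ≤ 1 →
    (∀ (A : XX m →ₗ[ℝ] (Fin (m + 1) → ℝ)) (b : XX m), Function.Injective A → ∫⁻ x in Kset m A b, f x ≤
      ENNReal.ofReal l * volume (Kset m A b) ^ (1 / ((m : ℝ) + 2))) →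
    ∫⁻ x, (RR m f x) ^ (m + 2) ≤ ENNReal.ofReal (C * l ^ θ)

lemma mid_est (m : ℕ) (g : XX (m + 1) → ℝ≥0∞) (hg : Measurable g) (p : XX (m + 1))
    (A : XX m →ₗ[ℝ] (Fin (m + 1) → ℝ)) (b : XX m) (ρ R : ℝ) (hρ : 0 < ρ) (hR : 0 < R) :
    ∫⁻ w in Kset m A b, ∫⁻ r in {r : ℝ | ρ < |r| ∧ |r| ≤ R}, ENNReal.ofReal (|r| ^ m) *
        g (p.1 + Fin.cons r (r • w.1), p.2 + r * w.2) ≤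
      ENNReal.ofReal ρ⁻¹ * ∫⁻ x in Kset (m + 1) (coneA m A b R) p, g x := by
  set K := Kset (m + 1) (coneA m A b R) p with hK
  have hKm : MeasurableSet K := Kset_meas _ _ _
  have hsm : MeasurableSet {r : ℝ | ρ < |r| ∧ |r| ≤ R} :=
    MeasurableSet.inter (s₁ := {r : ℝ | ρ < |r|}) (s₂ := {r : ℝ | |r| ≤ R})
      (measurableSet_lt measurable_const (by fun_prop)) (measurableSet_le (by fun_prop) measurable_const)
  have h1 : ∫⁻ x in K, g x = ∫⁻ w : XX m, ∫⁻ r : ℝ, ENNReal.ofReal (|r| ^ (m + 1)) *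
      K.indicator g (p + (Fin.cons r (r • w.1), r * w.2)) := by
    rw [← lintegral_indicator hKm, ← lintegral_add_left_eq_self _ p, polar_XX]
    exact (hg.indicator hKm).comp (measurable_const_add p)
  rw [h1, ← lintegral_const_mul']
  swap
  · exact ENNReal.ofReal_ne_top
  refine le_trans ?_ (setLIntegral_le_lintegral (Kset m A b) _)
  refine setLIntegral_mono' (Kset_meas _ _ _) fun w hw => ?_
  rw [← lintegral_const_mul' _ _ ENNReal.ofReal_ne_top]
  refine le_trans ?_ (setLIntegral_le_lintegral {r : ℝ | ρ < |r| ∧ |r| ≤ R} _)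
  refine setLIntegral_mono' hsm fun r hr => ?_
  have hmem : p + ((Fin.cons r (r • w.1), r * w.2) : XX (m + 1)) ∈ K := by
    rw [hK]
    simp only [Kset, Set.mem_ofPred_eq, add_sub_cancel_left]
    have := coneA_apply m A b R r (r • w)
    simp only [Prod.smul_fst, Prod.smul_snd, smul_eq_mul] at this
    rw [this, Fin.forall_fin_succ]
    simp only [Fin.cons_zero, Fin.cons_succ, abs_div, abs_of_pos hR, div_le_one hR, ← smul_sub, map_smul]
    refine ⟨hr.2, fun i => ?_⟩
    simp only [Pi.smul_apply, smul_eq_mul, abs_mul, abs_inv, abs_of_pos hR]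
    rw [inv_mul_le_iff₀ hR, mul_one]
    calc |r| * |A (w - b) i| ≤ R * 1 := by gcongr; exact hr.2; exact hw i
      _ = R := mul_one _
  rw [Set.indicator_of_mem hmem, ← mul_assoc, ← ENNReal.ofReal_mul (by positivity)]
  gcongr
  · rw [pow_succ, mul_comm, mul_assoc]
    refine le_mul_of_one_le_right (by positivity) ?_
    rw [le_mul_inv_iff₀ hρ]; linarith [hr.1]
  · exact le_rfl

end

noncomputable section
open MeasureTheory ENNReal
open scoped RealInnerProductSpace Pointwise

lemma root_le (x y : ℝ) (hx : 0 ≤ x) (hy : 0 ≤ y) (k : ℕ) (hk : 0 < k) (h : x ≤ y ^ k) :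
    (ENNReal.ofReal x) ^ (1 / (k : ℝ)) ≤ ENNReal.ofReal y := by
  calc (ENNReal.ofReal x) ^ (1 / (k : ℝ)) ≤ (ENNReal.ofReal (y ^ k)) ^ (1 / (k : ℝ)) := by gcongr
    _ = ENNReal.ofReal y := by
      rw [ofReal_pow_root y hy k _ 1 (by push_cast; field_simp) (by positivity), pow_one]

lemma F_norm (m : ℕ) (g : XX (m + 1) → ℝ≥0∞) (hg : Measurable g) (σ : ℝ) (hσ : 0 < σ)
    (hs : ∀ x, g x ≤ ENNReal.ofReal (σ ^ ((m + 2) ^ 2))) 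
    (p : XX (m + 1)) :
    ∫⁻ w, (ENNReal.ofReal (1 / (4 * σ)) * FF m g p w) ^ (((m : ℝ) + 2) / (m + 1)) ≤
      ∫⁻ x, g x ^ (((m : ℝ) + 3) / (m + 2)) := by
  have h1 : ∫⁻ x, g x ^ (((m : ℝ) + 3) / (m + 2)) = ∫⁻ w : XX m, ∫⁻ r : ℝ, ENNReal.ofReal (|r| ^ (m + 1)) *
      g (p + (Fin.cons r (r • w.1), r * w.2)) ^ (((m : ℝ) + 3) / (m + 2)) := by
    rw [← lintegral_add_left_eq_self _ p, polar_XX]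
    exact (hg.pow_const _).comp (measurable_const_add p)
  rw [h1]
  apply lintegral_mono
  intro w
  set G := ∫⁻ r : ℝ, ENNReal.ofReal (|r| ^ (m + 1)) *
      g (p + (Fin.cons r (r • w.1), r * w.2)) ^ (((m : ℝ) + 3) / (m + 2)) with hG
  have h2 := one_dim m (fun r => g (p + (Fin.cons r (r • w.1), r * w.2)))
    (hg.comp ((FF_arg_meas m p).comp (measurable_const.prodMk measurable_id))) σ hσ (fun r => hs _)
  calc (ENNReal.ofReal (1 / (4 * σ)) * FF m g p w) ^ (((m : ℝ) + 2) / (m + 1))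
      ≤ (ENNReal.ofReal (1 / (4 * σ)) * (ENNReal.ofReal (4 * σ) * G ^ (((m : ℝ) + 1) / (m + 2)))) ^ (((m : ℝ) + 2) / (m + 1)) := by
        gcongr
        exact h2
    _ = G := by
        rw [← mul_assoc, ← ENNReal.ofReal_mul (by positivity), one_div_mul_cancel (by positivity),
          ENNReal.ofReal_one, one_mul, ← ENNReal.rpow_mul]
        have : (((m : ℝ) + 1) / (m + 2)) * (((m : ℝ) + 2) / (m + 1)) = 1 := by field_simp
        rw [this, ENNReal.rpow_one]

lemma F_body (m : ℕ) (g : XX (m + 1) → ℝ≥0∞) (hg : Measurable g) (σ : ℝ) (hσ : 0 < σ)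
    (hs : ∀ x, g x ≤ ENNReal.ofReal (σ ^ ((m + 2) ^ 2)))
    (hN : ∫⁻ x, g x ^ (((m : ℝ) + 3) / (m + 2)) ≤ 1)
    (κ : ℝ) (hκ : 0 < κ) (hκ1 : κ ≤ 1)
    (hK : ∀ (A : XX (m + 1) →ₗ[ℝ] (Fin (m + 2) → ℝ)) (b : XX (m + 1)), Function.Injective A →
      ∫⁻ x in Kset (m + 1) A b, g x ≤
      ENNReal.ofReal (κ ^ (3 * (m + 3))) * volume (Kset (m + 1) A b) ^ (1 / ((m : ℝ) + 3)))
    (p : XX (m + 1)) (A : XX m →ₗ[ℝ] (Fin (m + 1) → ℝ)) (b : XX m) (hA : Function.Injective A) :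
    ∫⁻ w in Kset m A b, FF m g p w ≤ ENNReal.ofReal (6 * σ * κ) * volume (Kset m A b) ^ (1 / ((m : ℝ) + 2)) := by
  set V := volume (Kset m A b) with hV
  have hV0 : V ≠ 0 := (Kset_vol_pos m A b).ne'
  have hV1 : V ≠ ⊤ := (Kset_vol_fin m A hA b).ne
  have hVp : 0 < V.toReal := ENNReal.toReal_pos hV0 hV1
  obtain ⟨υ, hυ, hVυ⟩ : ∃ υ : ℝ, 0 < υ ∧ V = ENNReal.ofReal (υ ^ ((m + 3) * (m + 2))) := by
    refine ⟨V.toReal ^ (1 / (((m + 3) * (m + 2) : ℕ) : ℝ)), by positivity, ?_⟩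
    rw [← Real.rpow_natCast, ← Real.rpow_mul hVp.le, one_div_mul_cancel (by positivity), Real.rpow_one,
      ENNReal.ofReal_toReal hV1]
  set ρ := (κ / (υ * σ)) ^ (m + 3) with hρ
  set R := (1 / (κ * υ * σ)) ^ (m + 3) with hR
  have hρ0 : 0 < ρ := by positivity
  have hR0 : 0 < R := by positivity
  have h22 : (2 : ℝ) ≤ 2 ^ (m + 3) := by
    calc (2 : ℝ) = 2 ^ 1 := by norm_num
      _ ≤ 2 ^ (m + 3) := by gcongr <;> [norm_num; omega]
  have hV2 : V ^ (1 / ((m : ℝ) + 2)) = ENNReal.ofReal (υ ^ (m + 3)) := by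
    rw [hVυ, ofReal_pow_root υ hυ.le _ _ (m + 3) (by push_cast; field_simp) (by positivity)]
  have hV3 : V ^ (1 / ((m : ℝ) + 3)) = ENNReal.ofReal (υ ^ (m + 2)) := by
    rw [hVυ, ofReal_pow_root υ hυ.le _ _ (m + 2) (by push_cast; field_simp) (by positivity)]
  set ψ : XX m → ℝ → ℝ≥0∞ := fun w r => ENNReal.ofReal (|r| ^ m) * g (p.1 + Fin.cons r (r • w.1), p.2 + r * w.2)
    with hψ
  have hψm : Measurable (fun q : XX m × ℝ => ψ q.1 q.2) := by
    apply Measurable.mul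
    · fun_prop
    · exact hg.comp (FF_arg_meas m p)
  have hsplit : ∀ w, FF m g p w ≤ (∫⁻ r in {r : ℝ | |r| ≤ ρ}, ψ w r) +
      (∫⁻ r in {r : ℝ | ρ < |r| ∧ |r| ≤ R}, ψ w r) + ∫⁻ r in {r : ℝ | R < |r|}, ψ w r := by
    intro w
    have hu : (Set.univ : Set ℝ) = ({r : ℝ | |r| ≤ ρ} ∪ {r : ℝ | ρ < |r| ∧ |r| ≤ R}) ∪ {r : ℝ | R < |r|} := by
      ext r; simp only [Set.mem_univ, Set.mem_union, Set.mem_ofPred_eq, true_iff]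
      by_cases h1 : |r| ≤ ρ
      · exact Or.inl (Or.inl h1)
      · by_cases h2 : |r| ≤ R
        · exact Or.inl (Or.inr ⟨not_le.mp h1, h2⟩)
        · exact Or.inr (not_le.mp h2)
    have : FF m g p w = ∫⁻ r in Set.univ, ψ w r := by rw [setLIntegral_univ]; rfl
    rw [this, hu]
    refine (lintegral_union_le _ _ _).trans ?_
    gcongr
    exact lintegral_union_le _ _ _
  have hnear : ∫⁻ w in Kset m A b, ∫⁻ r in {r : ℝ | |r| ≤ ρ}, ψ w r ≤ ENNReal.ofReal (2 * (σ * κ * υ ^ (m + 3))) := by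
    calc ∫⁻ w in Kset m A b, ∫⁻ r in {r : ℝ | |r| ≤ ρ}, ψ w r
        ≤ ∫⁻ w in Kset m A b, ENNReal.ofReal (2 * ρ ^ (m + 1)) * ENNReal.ofReal (σ ^ ((m + 2) ^ 2)) := by
          apply lintegral_mono
          intro w
          exact near_est m _ (fun r => g (p.1 + Fin.cons r (r • w.1), p.2 + r * w.2)) (fun r => hs _) ρ hρ0
      _ = ENNReal.ofReal (2 * ρ ^ (m + 1)) * ENNReal.ofReal (σ ^ ((m + 2) ^ 2)) * V := by
          rw [setLIntegral_const]
      _ ≤ ENNReal.ofReal (2 * (σ * κ * υ ^ (m + 3))) := by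
          rw [hVυ, ← ENNReal.ofReal_mul (by positivity), ← ENNReal.ofReal_mul (by positivity)]
          apply ENNReal.ofReal_le_ofReal
          have e1 : ρ ^ (m + 1) * σ ^ ((m + 2) ^ 2) * υ ^ ((m + 3) * (m + 2)) =
              κ ^ ((m + 3) * (m + 1)) * σ * υ ^ (m + 3) := by
            rw [hρ, ← pow_mul, div_pow, mul_pow]
            have a1 : σ ^ (m + 2) ^ 2 = σ ^ ((m + 3) * (m + 1)) * σ := by rw [← pow_succ]; congr 1; ring
            have a2 : υ ^ ((m + 3) * (m + 2)) = υ ^ ((m + 3) * (m + 1)) * υ ^ (m + 3) := by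
              rw [← pow_add]; congr 1
            rw [a1, a2]; field_simp
          have e2 : κ ^ ((m + 3) * (m + 1)) ≤ κ := by
            calc κ ^ ((m + 3) * (m + 1)) ≤ κ ^ 1 := pow_le_pow_of_le_one hκ.le hκ1 (by nlinarith)
              _ = κ := pow_one _
          calc 2 * ρ ^ (m + 1) * σ ^ ((m + 2) ^ 2) * υ ^ ((m + 3) * (m + 2)) =
              2 * (κ ^ ((m + 3) * (m + 1)) * σ * υ ^ (m + 3)) := by rw [← e1]; ring
            _ ≤ 2 * (κ * σ * υ ^ (m + 3)) := by gcongr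
            _ = _ := by ring
  have hfar : ∫⁻ w in Kset m A b, ∫⁻ r in {r : ℝ | R < |r|}, ψ w r ≤ ENNReal.ofReal (2 * (σ * κ * υ ^ (m + 3))) := by
    refine (far_est (volume.restrict (Kset m A b)) m (fun q => g (p.1 + Fin.cons q.2 (q.2 • q.1.1), p.2 + q.2 * q.1.2))
      (hg.comp (FF_arg_meas m p)) R hR0).trans ?_
    have h1 : ∫⁻ x, g x ^ (((m : ℝ) + 3) / (m + 2)) = ∫⁻ w : XX m, ∫⁻ r : ℝ, ENNReal.ofReal (|r| ^ (m + 1)) *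
        g (p + (Fin.cons r (r • w.1), r * w.2)) ^ (((m : ℝ) + 3) / (m + 2)) := by
      rw [← lintegral_add_left_eq_self _ p, polar_XX]
      exact (hg.pow_const _).comp (measurable_const_add p)
    rw [Measure.restrict_apply_univ, ← hV, ENNReal.mul_rpow_of_nonneg _ _ (by positivity), hV3]
    have h2 : (∫⁻ w in Kset m A b, (∫⁻ r : ℝ, ENNReal.ofReal (|r| ^ (m + 1)) *
        g (p.1 + Fin.cons r (r • w.1), p.2 + r * w.2) ^ (((m : ℝ) + 3) / (m + 2)))) ^ (((m : ℝ) + 2) / (m + 3)) ≤ 1 := by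
      refine ENNReal.rpow_le_one ?_ (by positivity)
      refine (setLIntegral_le_lintegral _ _).trans ?_
      refine le_trans (le_of_eq ?_) hN
      rw [h1]; rfl
    have h3 : ENNReal.ofReal (2 / R) ^ (1 / ((m : ℝ) + 3)) ≤ ENNReal.ofReal (2 * (κ * υ * σ)) := by
      have := root_le (2 / R) (2 * (κ * υ * σ)) (by positivity) (by positivity) (m + 3) (by omega) ?_
      · push_cast at this; exact this
      · rw [hR, one_div_pow, mul_pow 2, div_div_eq_mul_div, div_one]
        refine mul_le_mul_of_nonneg_right h22 (by positivity)
    calc _ ≤ 1 * (ENNReal.ofReal (υ ^ (m + 2)) * ENNReal.ofReal (2 * (κ * υ * σ))) := by gcongr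
      _ = _ := by
        rw [one_mul, ← ENNReal.ofReal_mul (by positivity)]
        congr 1; ring
  have hmid : ∫⁻ w in Kset m A b, ∫⁻ r in {r : ℝ | ρ < |r| ∧ |r| ≤ R}, ψ w r ≤
      ENNReal.ofReal (2 * (σ * κ * υ ^ (m + 3))) := by
    refine (mid_est m g hg p A b ρ R hρ0 hR0).trans ?_
    have h1 := hK (coneA m A b R) p (coneA_inj m A hA b R hR0)
    rw [cone_vol m A b R hR0 p, ← hV, ENNReal.mul_rpow_of_nonneg _ _ (by positivity), hV3] at h1
    have h3 : ENNReal.ofReal (2 * R ^ (m + 2)) ^ (1 / ((m : ℝ) + 3)) ≤ ENNReal.ofReal (2 * (1 / (κ * υ * σ)) ^ (m + 2)) := by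
      have := root_le (2 * R ^ (m + 2)) (2 * (1 / (κ * υ * σ)) ^ (m + 2)) (by positivity) (by positivity) (m + 3) (by omega) ?_
      · push_cast at this; exact this
      · rw [hR, mul_pow, ← pow_mul, ← pow_mul, mul_comm (m + 2)]
        refine mul_le_mul_of_nonneg_right h22 (by positivity)
    calc _ ≤ ENNReal.ofReal ρ⁻¹ * (ENNReal.ofReal (κ ^ (3 * (m + 3))) * 
          (ENNReal.ofReal (2 * (1 / (κ * υ * σ)) ^ (m + 2)) * ENNReal.ofReal (υ ^ (m + 2)))) := by
          gcongr
          exact h1.trans (by gcongr)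
      _ = ENNReal.ofReal (2 * (σ * κ ^ (m + 4) * υ ^ (m + 3))) := by
        rw [← ENNReal.ofReal_mul (by positivity), ← ENNReal.ofReal_mul (by positivity), ← ENNReal.ofReal_mul (by positivity)]
        congr 1
        have a1 : κ ^ (3 * (m + 3)) = κ ^ (m + 3) * κ ^ (m + 2) * κ ^ (m + 4) := by
          rw [← pow_add, ← pow_add]; congr 1; ring
        have a2 : υ ^ (m + 3) = υ ^ (m + 2) * υ := pow_succ _ _
        have a3 : σ ^ (m + 3) = σ ^ (m + 2) * σ := pow_succ _ _
        rw [hρ, a1, div_pow, one_div_pow, mul_pow, mul_pow, mul_pow, a2, a3]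
        field_simp
      _ ≤ _ := by
        gcongr
        calc κ ^ (m + 4) ≤ κ ^ 1 := pow_le_pow_of_le_one hκ.le hκ1 (by omega)
          _ = κ := pow_one _
  have hm1 : Measurable fun w => ∫⁻ r in {r : ℝ | |r| ≤ ρ}, ψ w r := hψm.lintegral_prod_right'
  have hm2 : Measurable fun w => ∫⁻ r in {r : ℝ | ρ < |r| ∧ |r| ≤ R}, ψ w r := hψm.lintegral_prod_right'
  calc ∫⁻ w in Kset m A b, FF m g p w
      ≤ ∫⁻ w in Kset m A b, ((∫⁻ r in {r : ℝ | |r| ≤ ρ}, ψ w r) +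
      (∫⁻ r in {r : ℝ | ρ < |r| ∧ |r| ≤ R}, ψ w r) + ∫⁻ r in {r : ℝ | R < |r|}, ψ w r) :=
        lintegral_mono fun w => hsplit w
    _ = (∫⁻ w in Kset m A b, (∫⁻ r in {r : ℝ | |r| ≤ ρ}, ψ w r)) +
      (∫⁻ w in Kset m A b, (∫⁻ r in {r : ℝ | ρ < |r| ∧ |r| ≤ R}, ψ w r)) + ∫⁻ w in Kset m A b, ∫⁻ r in {r : ℝ | R < |r|}, ψ w r := by
        rw [lintegral_add_left (by fun_prop), lintegral_add_left hm1]
    _ ≤ ENNReal.ofReal (2 * (σ * κ * υ ^ (m + 3))) + ENNReal.ofReal (2 * (σ * κ * υ ^ (m + 3))) +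
        ENNReal.ofReal (2 * (σ * κ * υ ^ (m + 3))) := by gcongr
    _ = _ := by
      rw [hV2, ← ENNReal.ofReal_add (by positivity) (by positivity), ← ENNReal.ofReal_add (by positivity) (by positivity),
        ← ENNReal.ofReal_mul (by positivity)]
      congr 1; ring

lemma RR_meas (m : ℕ) (f : XX m → ℝ≥0∞) (hf : Measurable f) : Measurable (RR m f) := by
  have : Measurable (fun u : (XX m) × (Fin m → ℝ) => f (u.2, u.1.2 + ∑ i, u.1.1 i * u.2 i)) := by
    apply hf.comp; fun_prop
  exact this.lintegral_prod_right'

lemma pointwise (m : ℕ) (θ C : ℝ) (hcl : Claim m θ C) (g : XX (m + 1) → ℝ≥0∞) (hg : Measurable g) (σ : ℝ) (hσ : 0 < σ)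
    (hs : ∀ x, g x ≤ ENNReal.ofReal (σ ^ ((m + 2) ^ 2)))
    (hN : ∫⁻ x, g x ^ (((m : ℝ) + 3) / (m + 2)) ≤ 1)
    (κ : ℝ) (hκ : 0 < κ) (hκ1 : κ ≤ 1)
    (hK : ∀ (A : XX (m + 1) →ₗ[ℝ] (Fin (m + 2) → ℝ)) (b : XX (m + 1)), Function.Injective A →
      ∫⁻ x in Kset (m + 1) A b, g x ≤
      ENNReal.ofReal (κ ^ (3 * (m + 3))) * volume (Kset (m + 1) A b) ^ (1 / ((m : ℝ) + 3)))
    (p : XX (m + 1)) : BB g (m + 2) p ≤ ENNReal.ofReal ((6 * σ) ^ (m + 2)) * ENNReal.ofReal (C * κ ^ θ) := by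
  have hFm := FF_meas m g hg p
  rw [BB_eq m _ g hg p]
  have h1 := hcl (fun w => ENNReal.ofReal (1 / (6 * σ)) * FF m g p w) (by fun_prop) κ hκ hκ1 ?_ ?_
  · have h2 : ∀ x, RR m (FF m g p) x = ENNReal.ofReal (6 * σ) * RR m (fun w => ENNReal.ofReal (1 / (6 * σ)) * FF m g p w) x := by
      intro x
      unfold RR
      rw [lintegral_const_mul' _ _ ENNReal.ofReal_ne_top, ← mul_assoc, ← ENNReal.ofReal_mul (by positivity),
        mul_one_div_cancel (by positivity), ENNReal.ofReal_one, one_mul]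
    simp_rw [h2, mul_pow]
    rw [lintegral_const_mul' _ _ (by finiteness)]
    rw [← ENNReal.ofReal_pow (by positivity), ← mul_pow]
    gcongr
  · refine le_trans ?_ ((F_norm m g hg σ hσ hs p).trans hN)
    gcongr
    norm_num
  · intro A b hA
    have h2 := F_body m g hg σ hσ hs hN κ hκ hκ1 hK p A b hA
    rw [lintegral_const_mul' _ _ ENNReal.ofReal_ne_top]
    calc _ ≤ ENNReal.ofReal (1 / (6 * σ)) * (ENNReal.ofReal (6 * σ * κ) * volume (Kset m A b) ^ (1 / ((m : ℝ) + 2))) := by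
          gcongr
      _ = _ := by
        rw [← mul_assoc, ← ENNReal.ofReal_mul (by positivity)]
        congr 2; field_simp

end

noncomputable section
open MeasureTheory ENNReal
open scoped RealInnerProductSpace Pointwise

lemma claim_zero : Claim 0 0 1 := by
  intro f hf l hl hl1 hN _
  have h1 : ∀ x : XX 0, RR 0 f x = f x := by
    intro x
    unfold RR
    have : ∀ y : Fin 0 → ℝ, f (y, x.2 + ∑ i, x.1 i * y i) = f x := by
      intro y
      congr 1
      exact Prod.ext (Subsingleton.elim _ _) (by simp)
    simp_rw [this]
    rw [lintegral_const]
    simp [volume_pi]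
  simp_rw [h1]
  simp only [Nat.cast_zero, zero_add, div_one, Real.rpow_zero, mul_one, ENNReal.ofReal_one] at hN ⊢
  refine le_trans (le_of_eq ?_) hN
  congr 1; ext x
  rw [← ENNReal.rpow_natCast]; norm_num

lemma exists_root (s : ℝ≥0∞) (h0 : s ≠ 0) (h1 : s ≠ ⊤) (k : ℕ) (hk : 0 < k) :
    ∃ σ : ℝ, 0 < σ ∧ s = ENNReal.ofReal (σ ^ k) := by
  have hVp : 0 < s.toReal := ENNReal.toReal_pos h0 h1
  refine ⟨s.toReal ^ (1 / (k : ℝ)), by positivity, ?_⟩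
  rw [← Real.rpow_natCast, ← Real.rpow_mul hVp.le, one_div_mul_cancel (by positivity), Real.rpow_one,
      ENNReal.ofReal_toReal h1]

lemma claim_step (m : ℕ) (θ C : ℝ) (hC : 0 ≤ C) (hcl : Claim m θ C) :
    Claim (m + 1) (θ / (3 * (m + 3))) (12 ^ (m + 2) * C) := by
  intro f hf l hl hl1 hN hK
  have c1 : (((m + 1 : ℕ) : ℝ) + 2) = m + 3 := by push_cast; ring
  have c2 : (((m + 1 : ℕ) : ℝ) + 1) = m + 2 := by push_cast; ring
  rw [c1, c2] at hN
  simp only [c1] at hK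
  set κ : ℝ := l ^ (1 / (3 * ((m : ℝ) + 3))) with hκd
  have hκ : 0 < κ := by positivity
  have hκ1 : κ ≤ 1 := Real.rpow_le_one hl.le hl1 (by positivity)
  have hκl : κ ^ (3 * (m + 3)) = l := by
    rw [hκd, ← Real.rpow_natCast, ← Real.rpow_mul hl.le]
    push_cast
    rw [one_div_mul_cancel (by positivity), Real.rpow_one]
  have hκθ : κ ^ θ = l ^ (θ / (3 * ((m : ℝ) + 3))) := by
    rw [hκd, ← Real.rpow_mul hl.le]; congr 1; ring
  have hae : ∀ᵐ p, f p < ⊤ := by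
    have := ae_lt_top (hf.pow_const _) (hN.trans_lt ENNReal.one_lt_top).ne
    filter_upwards [this] with p hp
    by_contra h
    rw [not_lt, top_le_iff] at h
    rw [h, ENNReal.top_rpow_of_pos (by positivity)] at hp
    exact lt_irrefl _ hp
  have hpt : ∀ᵐ p, f p * BB (cutf f (f p)) (m + 2) p ≤
      (ENNReal.ofReal (6 ^ (m + 2)) * ENNReal.ofReal (C * κ ^ θ)) * f p ^ (((m : ℝ) + 3) / (m + 2)) := by
    filter_upwards [hae] with p hp
    rcases eq_or_ne (f p) 0 with h0 | h0
    · rw [h0]; simp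
    obtain ⟨σ, hσ, hfσ⟩ := exists_root (f p) h0 hp.ne ((m + 2) ^ 2) (by positivity)
    have h1 := pointwise m θ C hcl (cutf f (f p)) ((cutf_meas f hf).comp (measurable_const.prodMk measurable_id)) σ hσ
      (fun x => by rw [← hfσ]; exact cutf_le _ _ _)
      (le_trans (lintegral_mono fun x => by gcongr; exact cutf_le' _ _ _) hN) κ hκ hκ1
      (fun A b hA => by
        rw [hκl]
        exact le_trans (lintegral_mono fun x => cutf_le' _ _ _) (hK A b hA)) p
    have h2 : f p ^ (((m : ℝ) + 3) / (m + 2)) = f p * ENNReal.ofReal (σ ^ (m + 2)) := by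
      have : ((m : ℝ) + 3) / (m + 2) = 1 + 1 / (m + 2) := by field_simp; ring
      rw [this, ENNReal.rpow_add _ _ h0 hp.ne, ENNReal.rpow_one]
      congr 1
      rw [hfσ, ofReal_pow_root σ hσ.le _ _ (m + 2) (by push_cast; field_simp) (by positivity)]
    calc _ ≤ f p * (ENNReal.ofReal ((6 * σ) ^ (m + 2)) * ENNReal.ofReal (C * κ ^ θ)) := by gcongr
      _ = _ := by
        rw [h2, mul_pow, ENNReal.ofReal_mul (by positivity)]; ring
  calc ∫⁻ x, RR (m + 1) f x ^ (m + 1 + 2) ≤ 2 ^ (m + 2) * ∫⁻ p, f p * BB (cutf f (f p)) (m + 2) p :=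
        RR_pow_le (m + 1) (m + 2) f hf
    _ ≤ 2 ^ (m + 2) * ∫⁻ p, (ENNReal.ofReal (6 ^ (m + 2)) * ENNReal.ofReal (C * κ ^ θ)) * f p ^ (((m : ℝ) + 3) / (m + 2)) := by
        gcongr 2 ^ (m + 2) * ?_
        exact lintegral_mono_ae hpt
    _ ≤ 2 ^ (m + 2) * ((ENNReal.ofReal (6 ^ (m + 2)) * ENNReal.ofReal (C * κ ^ θ)) * 1) := by
        rw [lintegral_const_mul _ (by fun_prop)]
        gcongr
    _ = _ := by
        rw [mul_one, hκθ, ← mul_assoc]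
        have : (2 : ℝ≥0∞) ^ (m + 2) = ENNReal.ofReal (2 ^ (m + 2)) := by
          rw [ENNReal.ofReal_pow (by norm_num)]; norm_num
        rw [this, ← ENNReal.ofReal_mul (by positivity), ← ENNReal.ofReal_mul (by positivity), ← mul_pow]
        congr 1; norm_num; ring

lemma claim_ind (θ C : ℝ) (hθ : 0 < θ) (hC : 0 ≤ C) (h1 : Claim 1 θ C) (n : ℕ) :
    ∃ θ' C' : ℝ, 0 < θ' ∧ 0 ≤ C' ∧ Claim (n + 1) θ' C' := by
  induction n with
  | zero => exact ⟨θ, C, hθ, hC, h1⟩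
  | succ n ih =>
    obtain ⟨θ', C', h1, h2, h3⟩ := ih
    exact ⟨_, _, by positivity, by positivity, claim_step (n + 1) θ' C' h2 h3⟩

end

noncomputable section
open MeasureTheory ENNReal
open scoped RealInnerProductSpace Pointwise

def ph (e : ℝ × ℝ → ℝ≥0∞) (p : ℝ × ℝ) (a : ℝ) : ℝ≥0∞ := ∫⁻ r : ℝ, e (p.1 + r, p.2 + a * r)

def Bq (e : ℝ × ℝ → ℝ≥0∞) (p : ℝ × ℝ) : ℝ≥0∞ := ∫⁻ a : ℝ, ph e p a ^ 2

def Ln (e : ℝ × ℝ → ℝ≥0∞) (x : ℝ × ℝ) : ℝ≥0∞ := ∫⁻ y : ℝ, e (y, x.2 + x.1 * y)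

lemma ph_meas (e : ℝ × ℝ → ℝ≥0∞) (he : Measurable e) : Measurable fun q : (ℝ × ℝ) × ℝ => ph e q.1 q.2 := by
  have : Measurable (fun u : ((ℝ × ℝ) × ℝ) × ℝ => e (u.1.1.1 + u.2, u.1.1.2 + u.1.2 * u.2)) := by
    apply he.comp; fun_prop
  exact this.lintegral_prod_right'

lemma Ln_meas (e : ℝ × ℝ → ℝ≥0∞) (he : Measurable e) : Measurable (Ln e) := by
  have : Measurable (fun u : (ℝ × ℝ) × ℝ => e (u.2, u.1.2 + u.1.1 * u.2)) := by
    apply he.comp; fun_prop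
  exact this.lintegral_prod_right'

lemma Bq_meas (e : ℝ × ℝ → ℝ≥0∞) (he : Measurable e) : Measurable (Bq e) :=
  ((ph_meas e he).pow_const 2).lintegral_prod_right'

lemma ph_shift (e : ℝ × ℝ → ℝ≥0∞) (p : ℝ × ℝ) (a r : ℝ) :
    ph e (p.1 + r, p.2 + a * r) a = ph e p a := by
  unfold ph
  rw [← lintegral_add_left_eq_self (fun s => e (p.1 + s, p.2 + a * s)) r]
  congr 1; ext s
  congr 2 <;> ring

lemma ph_line (e : ℝ × ℝ → ℝ≥0∞) (x : ℝ × ℝ) (y : ℝ) :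
    ph e (y, x.2 + x.1 * y) x.1 = Ln e x := by
  unfold ph Ln
  rw [← lintegral_add_left_eq_self (fun s => e (s, x.2 + x.1 * s)) y]
  congr 1; ext s
  congr 2 ; ring

lemma polar2 (p : ℝ × ℝ) (h : ℝ × ℝ → ℝ≥0∞) (hh : Measurable h) :
    ∫⁻ q, h q = ∫⁻ a : ℝ, ∫⁻ r : ℝ, ENNReal.ofReal |r| * h (p.1 + r, p.2 + a * r) := by
  have := polar_gen (volume : Measure ℝ) (fun q => h (p + q)) (hh.comp (measurable_const_add p))
  rw [← lintegral_add_left_eq_self _ p, Measure.volume_eq_prod, lintegral_prod]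
  · rw [this]
    simp [mul_comm, Prod.fst_add]
    rfl
  · exact (hh.comp (measurable_const_add p)).aemeasurable

lemma swap2 (Φ : (ℝ × ℝ) × ℝ → ℝ≥0∞) (hΦ : Measurable Φ) :
    ∫⁻ x : ℝ × ℝ, ∫⁻ y : ℝ, Φ ((y, x.2 + x.1 * y), x.1) = ∫⁻ p : ℝ × ℝ, ∫⁻ a : ℝ, Φ (p, a) := by
  have hm : Measurable (fun q : (ℝ × ℝ) × ℝ => Φ ((q.2, q.1.2 + q.1.1 * q.2), q.1.1)) := by
    apply hΦ.comp; fun_prop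
  calc ∫⁻ x : ℝ × ℝ, ∫⁻ y : ℝ, Φ ((y, x.2 + x.1 * y), x.1)
      = ∫⁻ a : ℝ, ∫⁻ v : ℝ, ∫⁻ y : ℝ, Φ ((y, v + a * y), a) := by
        rw [Measure.volume_eq_prod, lintegral_prod _ hm.lintegral_prod_right'.aemeasurable]
    _ = ∫⁻ a : ℝ, ∫⁻ y : ℝ, ∫⁻ v : ℝ, Φ ((y, v + a * y), a) := by
        congr 1; ext a
        rw [lintegral_lintegral_swap]
        apply Measurable.aemeasurable
        apply hΦ.comp; fun_prop
    _ = ∫⁻ a : ℝ, ∫⁻ y : ℝ, ∫⁻ v : ℝ, Φ ((y, v), a) := by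
        congr 1; ext a; congr 1; ext y
        exact lintegral_add_right_eq_self (fun v => Φ ((y, v), a)) _
    _ = ∫⁻ a : ℝ, ∫⁻ p : ℝ × ℝ, Φ (p, a) := by
        congr 1; ext a
        rw [Measure.volume_eq_prod, lintegral_prod]
        apply Measurable.aemeasurable
        apply hΦ.comp; fun_prop
    _ = _ := by
        rw [lintegral_lintegral_swap]
        apply Measurable.aemeasurable
        apply hΦ.comp; fun_prop

lemma Bq_le (e : ℝ × ℝ → ℝ≥0∞) (he : Measurable e) (h1 : ∀ q, e q ≤ 1) (p : ℝ × ℝ) :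
    Bq e p ≤ 16 * ∫⁻ q, e q := by
  rw [polar2 p e he, ← lintegral_const_mul']
  swap
  · norm_num
  unfold Bq
  apply lintegral_mono
  intro a
  have h2 := one_dim 0 (fun r => e (p.1 + r, p.2 + a * r)) (by apply he.comp; fun_prop) 1 one_pos
    (fun r => by simpa using h1 _)
  have h3 : ∫⁻ r : ℝ, ENNReal.ofReal (|r| ^ (0 + 1)) * e (p.1 + r, p.2 + a * r) ^ ((((0 : ℕ) : ℝ) + 3) / ((0 : ℕ) + 2)) ≤
      ∫⁻ r : ℝ, ENNReal.ofReal |r| * e (p.1 + r, p.2 + a * r) := by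
    apply lintegral_mono
    intro r
    simp only [zero_add, pow_one]
    gcongr
    refine ENNReal.rpow_le_self_of_le_one (h1 _) (by norm_num)
  simp only [pow_zero, ENNReal.ofReal_one, one_mul] at h2
  set W := ∫⁻ r : ℝ, ENNReal.ofReal |r| * e (p.1 + r, p.2 + a * r)
  calc ph e p a ^ 2 ≤ (ENNReal.ofReal (4 * 1) * W ^ ((((0 : ℕ) : ℝ) + 1) / ((0 : ℕ) + 2))) ^ 2 := by
        gcongr
        exact h2.trans (by gcongr)
    _ = 16 * W := by
        rw [mul_pow, ← ENNReal.rpow_natCast (W ^ _), ← ENNReal.rpow_mul]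
        norm_num

lemma I_eq (e : ℝ × ℝ → ℝ≥0∞) (he : Measurable e) :
    ∫⁻ x, Ln e x ^ 3 = ∫⁻ p, e p * Bq e p := by
  have hp := ph_meas e he
  have h := swap2 (fun t => e t.1 * ph e t.1 t.2 ^ 2) ((he.comp measurable_fst).mul (hp.pow_const 2))
  simp only [ph_line] at h
  have h2 : ∀ x : ℝ × ℝ, ∫⁻ y : ℝ, e (y, x.2 + x.1 * y) * Ln e x ^ 2 = Ln e x ^ 3 := by
    intro x
    rw [lintegral_mul_const _ (by apply he.comp; fun_prop), pow_succ' _ 2]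
    rfl
  simp only [h2] at h
  rw [h]
  congr 1; ext p
  rw [lintegral_const_mul _ (by fun_prop)]
  rfl

lemma cov_inv (a h q : ℝ) (hh : h ≠ 0) (ψ : ℝ → ℝ≥0∞) :
    ∫⁻ y : ℝ, ENNReal.ofReal (((q - y) ^ 2)⁻¹) * ψ (a + h / (q - y)) ≤ ENNReal.ofReal |h|⁻¹ * ∫⁻ s, ψ s := by
  have h1 := lintegral_image_eq_lintegral_abs_deriv_mul (s := {q}ᶜ) (f := fun y => a + h / (q - y))
    (f' := fun y => h / (q - y) ^ 2) (measurableSet_singleton q).compl ?_ ?_ ψ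
  · have h2 : ∫⁻ y : ℝ, ENNReal.ofReal (((q - y) ^ 2)⁻¹) * ψ (a + h / (q - y)) =
        ∫⁻ y in {q}ᶜ, ENNReal.ofReal (((q - y) ^ 2)⁻¹) * ψ (a + h / (q - y)) := by
      rw [restrict_compl_singleton]
    rw [h2]
    calc _ = ENNReal.ofReal |h|⁻¹ * ∫⁻ y in {q}ᶜ, ENNReal.ofReal |h / (q - y) ^ 2| * ψ (a + h / (q - y)) := by
          rw [← lintegral_const_mul' _ _ ENNReal.ofReal_ne_top]
          congr 1; ext y
          rw [← mul_assoc, ← ENNReal.ofReal_mul (by positivity)]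
          congr 2
          rw [abs_div, abs_of_nonneg (sq_nonneg (q - y))]
          have : |h| ≠ 0 := by positivity
          field_simp
      _ ≤ _ := by
          rw [← h1]
          gcongr
          exact Measure.restrict_le_self
  · intro y hy
    have hy' : q - y ≠ 0 := sub_ne_zero.mpr fun h => hy h.symm
    apply HasDerivAt.hasDerivWithinAt
    have := ((hasDerivAt_const y h).div ((hasDerivAt_id y).const_sub q) hy').const_add a
    simpa using this
  · intro y hy z hz hyz
    have hy' : q - y ≠ 0 := sub_ne_zero.mpr fun h => hy h.symm
    have hz' : q - z ≠ 0 := sub_ne_zero.mpr fun h => hz h.symm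
    replace hyz := add_left_cancel hyz
    rw [div_eq_div_iff hy' hz'] at hyz
    have := mul_left_cancel₀ hh hyz
    linarith

end

noncomputable section
open MeasureTheory ENNReal
open scoped RealInnerProductSpace Pointwise

lemma CS {α : Type*} [MeasurableSpace α] (μ : Measure α) (f g : α → ℝ≥0∞) (hf : AEMeasurable f μ)
    (hg : AEMeasurable g μ) :
    ∫⁻ x, f x * g x ∂μ ≤ ((∫⁻ x, f x ^ 2 ∂μ) * ∫⁻ x, g x ^ 2 ∂μ) ^ (1 / 2 : ℝ) := by
  have h := ENNReal.lintegral_mul_le_Lp_mul_Lq μ (Real.HolderConjugate.two_two) hf hg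
  rw [ENNReal.mul_rpow_of_nonneg _ _ (by norm_num)]
  simp only [← ENNReal.rpow_natCast]
  exact_mod_cast h

def Krect (p : ℝ × ℝ) (a M H : ℝ) : Set (ℝ × ℝ) := {q | |q.1 - p.1| ≤ M ∧ |q.2 - p.2 - a * (q.1 - p.1)| ≤ H}

lemma Krect_meas (p : ℝ × ℝ) (a M H : ℝ) : MeasurableSet (Krect p a M H) :=
  MeasurableSet.inter (s₁ := {q : ℝ × ℝ | |q.1 - p.1| ≤ M}) (s₂ := {q : ℝ × ℝ | |q.2 - p.2 - a * (q.1 - p.1)| ≤ H})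
    (measurableSet_le (by fun_prop) measurable_const) (measurableSet_le (by fun_prop) measurable_const)

def Qt (e : ℝ × ℝ → ℝ≥0∞) (p : ℝ × ℝ) (a H : ℝ) : ℝ≥0∞ :=
  ∫⁻ a' : ℝ, ph e p a' * ∫⁻ r : ℝ, if H < |r * (a' - a)| then e (p.1 + r, p.2 + a' * r) else 0

lemma Qt_inner_meas (e : ℝ × ℝ → ℝ≥0∞) (he : Measurable e) :
    Measurable fun t : ((ℝ × ℝ) × ℝ × ℝ) × ℝ => ∫⁻ r : ℝ, if t.1.2.2 < |r * (t.2 - t.1.2.1)| then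
      e (t.1.1.1 + r, t.1.1.2 + t.2 * r) else 0 := by
  have : Measurable fun t : (((ℝ × ℝ) × ℝ × ℝ) × ℝ) × ℝ => if t.1.1.2.2 < |t.2 * (t.1.2 - t.1.1.2.1)| then
      e (t.1.1.1.1 + t.2, t.1.1.1.2 + t.1.2 * t.2) else 0 := by
    refine Measurable.ite (measurableSet_lt (by fun_prop) (by fun_prop)) ?_ measurable_const
    apply he.comp; fun_prop
  exact this.lintegral_prod_right'

lemma Qt_meas (e : ℝ × ℝ → ℝ≥0∞) (he : Measurable e) :
    Measurable fun t : (ℝ × ℝ) × ℝ × ℝ => Qt e t.1 t.2.1 t.2.2 := by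
  have h1 := Qt_inner_meas e he
  have h2 : Measurable fun t : ((ℝ × ℝ) × ℝ × ℝ) × ℝ => ph e t.1.1 t.2 :=
    (ph_meas e he).comp (f := fun t : ((ℝ × ℝ) × ℝ × ℝ) × ℝ => (t.1.1, t.2)) (by fun_prop)
  exact (h2.mul h1).lintegral_prod_right'

lemma Q_split (e : ℝ × ℝ → ℝ≥0∞) (he : Measurable e) (h1 : ∀ q, e q ≤ 1) (p : ℝ × ℝ) (a M H : ℝ)
    (hM : 0 < M) :
    ∫⁻ a', (if ph e p a' ^ 2 ≤ ph e p a ^ 2 then ph e p a' ^ 2 else 0) ≤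
      ph e p a * (ENNReal.ofReal M⁻¹ * ∫⁻ q, e q) +
      ((16 * ∫⁻ q, e q) * (16 * ∫⁻ q in Krect p a M H, e q)) ^ (1 / 2 : ℝ) + Qt e p a H := by
  set eK := (Krect p a M H).indicator e with heK
  have hKm := Krect_meas p a M H
  have heKm : Measurable eK := he.indicator hKm
  have hphm : ∀ e : ℝ × ℝ → ℝ≥0∞, Measurable e → Measurable (ph e p) := fun e he =>
    (ph_meas e he).comp (measurable_const.prodMk measurable_id)
  have hp1 := hphm e he
  have hp2 := hphm eK heKm
  have hW : Measurable fun a' : ℝ => ∫⁻ r : ℝ, ENNReal.ofReal |r| * e (p.1 + r, p.2 + a' * r) := by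
    have : Measurable fun t : ℝ × ℝ => ENNReal.ofReal |t.2| * e (p.1 + t.2, p.2 + t.1 * t.2) := by
      apply Measurable.mul
      · fun_prop
      · apply he.comp; fun_prop
    exact this.lintegral_prod_right'
  have hpt : ∀ a', (if ph e p a' ^ 2 ≤ ph e p a ^ 2 then ph e p a' ^ 2 else 0) ≤
      ph e p a * (ENNReal.ofReal M⁻¹ * ∫⁻ r : ℝ, ENNReal.ofReal |r| * e (p.1 + r, p.2 + a' * r)) +
      ph e p a' * ph eK p a' +
      ph e p a' * ∫⁻ r : ℝ, if H < |r * (a' - a)| then e (p.1 + r, p.2 + a' * r) else 0 := by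
    intro a'
    split_ifs with hle
    swap
    · exact zero_le
    have hle' : ph e p a' ≤ ph e p a := by
      by_contra hcon
      exact absurd hle (not_le.mpr (ENNReal.pow_lt_pow_left (by norm_num) (not_le.mp hcon)))
    have hm1 : Measurable fun r : ℝ => e (p.1 + r, p.2 + a' * r) := by apply he.comp; fun_prop
    have hm2 : Measurable fun r : ℝ => eK (p.1 + r, p.2 + a' * r) := by apply heKm.comp; fun_prop
    have hsum : ph e p a' ≤ (ENNReal.ofReal M⁻¹ * ∫⁻ r : ℝ, ENNReal.ofReal |r| * e (p.1 + r, p.2 + a' * r)) +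
        ph eK p a' + ∫⁻ r : ℝ, if H < |r * (a' - a)| then e (p.1 + r, p.2 + a' * r) else 0 := by
      unfold ph
      rw [← lintegral_const_mul' _ _ ENNReal.ofReal_ne_top, ← lintegral_add_left (by fun_prop),
        ← lintegral_add_left (by fun_prop)]
      apply lintegral_mono
      intro r
      by_cases c1 : H < |r * (a' - a)|
      · simp only [c1, if_true]
        exact le_add_self
      by_cases c2 : M < |r|
      · refine le_trans ?_ (le_trans (le_self_add (a := ENNReal.ofReal M⁻¹ * (ENNReal.ofReal |r| * e (p.1 + r, p.2 + a' * r)))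
          (b := eK (p.1 + r, p.2 + a' * r))) le_self_add)
        rw [← mul_assoc, ← ENNReal.ofReal_mul (by positivity)]
        refine le_mul_of_one_le_left zero_le ?_
        rw [ENNReal.one_le_ofReal, inv_mul_eq_div, one_le_div hM]
        exact c2.le
      · have : (p.1 + r, p.2 + a' * r) ∈ Krect p a M H := by
          simp only [Krect, Set.mem_ofPred_eq]
          refine ⟨by simpa using c2, ?_⟩
          rw [not_lt] at c1
          refine le_trans (le_of_eq ?_) c1
          congr 1; ring
        have h2 : eK (p.1 + r, p.2 + a' * r) = e (p.1 + r, p.2 + a' * r) := Set.indicator_of_mem this _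
        simp only [h2]
        exact le_trans le_add_self le_self_add
    calc ph e p a' ^ 2 = ph e p a' * ph e p a' := sq _
      _ ≤ ph e p a' * ((ENNReal.ofReal M⁻¹ * ∫⁻ r : ℝ, ENNReal.ofReal |r| * e (p.1 + r, p.2 + a' * r)) +
        ph eK p a' + ∫⁻ r : ℝ, if H < |r * (a' - a)| then e (p.1 + r, p.2 + a' * r) else 0) := by gcongr
      _ = ph e p a' * (ENNReal.ofReal M⁻¹ * ∫⁻ r : ℝ, ENNReal.ofReal |r| * e (p.1 + r, p.2 + a' * r)) +
        ph e p a' * ph eK p a' + ph e p a' * ∫⁻ r : ℝ, if H < |r * (a' - a)| then e (p.1 + r, p.2 + a' * r) else 0 := by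
          rw [mul_add, mul_add]
      _ ≤ _ := by gcongr
  refine (lintegral_mono hpt).trans ?_
  rw [lintegral_add_left (by fun_prop), lintegral_add_left (by fun_prop)]
  refine add_le_add (add_le_add ?_ ?_) le_rfl
  · rw [lintegral_const_mul _ (by fun_prop), lintegral_const_mul _ (by fun_prop), ← polar2 p e he]
  · refine (CS volume _ _ hp1.aemeasurable hp2.aemeasurable).trans ?_
    gcongr
    · exact Bq_le e he h1 p
    · have := Bq_le eK heKm (fun q => by
        rw [heK]; exact (Set.indicator_le_self' (fun _ _ => zero_le) q).trans (h1 q)) p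
      rw [heK, lintegral_indicator hKm] at this
      exact this

lemma T_est (e : ℝ × ℝ → ℝ≥0∞) (he : Measurable e) (h1 : ∀ q, e q ≤ 1) (x : ℝ × ℝ) (H : ℝ) (hH : 0 < H) :
    ∫⁻ y, e (y, x.2 + x.1 * y) * Qt e (y, x.2 + x.1 * y) x.1 H ≤
      (∫⁻ q, e q) * (Ln e x * (ENNReal.ofReal H⁻¹ * (16 * ∫⁻ q, e q))) ^ (1 / 2 : ℝ) := by
  have hph := ph_meas e he
  set hq : ℝ → ℝ × ℝ → ℝ≥0∞ := fun y q => if H < |q.2 - x.2 - x.1 * q.1| then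
    ENNReal.ofReal |q.1 - y|⁻¹ * (e q * ph e q (x.1 + (q.2 - x.2 - x.1 * q.1) / (q.1 - y))) else 0 with hhq
  have hqm : Measurable fun t : ℝ × (ℝ × ℝ) => hq t.1 t.2 := by
    refine Measurable.ite (measurableSet_lt (by fun_prop) (by fun_prop)) ?_ measurable_const
    apply Measurable.mul
    · fun_prop
    · apply (he.comp measurable_snd).mul
      exact hph.comp (f := fun t : ℝ × (ℝ × ℝ) => (t.2, x.1 + (t.2.2 - x.2 - x.1 * t.2.1) / (t.2.1 - t.1))) (by fun_prop)
  have hle : Measurable fun y : ℝ => e (y, x.2 + x.1 * y) := by apply he.comp; fun_prop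
  have hQ : ∀ y, Qt e (y, x.2 + x.1 * y) x.1 H ≤ ∫⁻ q, hq y q := by
    intro y
    rw [polar2 (y, x.2 + x.1 * y) (hq y) (hqm.comp (measurable_const.prodMk measurable_id))]
    unfold Qt
    apply lintegral_mono
    intro a'
    simp only
    rw [← lintegral_const_mul]
    swap
    · refine Measurable.ite (measurableSet_lt (by fun_prop) (by fun_prop)) ?_ measurable_const
      apply he.comp; fun_prop
    apply lintegral_mono_ae
    have h0 : ∀ᵐ r : ℝ, r ≠ 0 := by simp [ae_iff]
    filter_upwards [h0] with r hr
    simp only [hhq]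
    have e1 : x.2 + x.1 * y + a' * r - x.2 - x.1 * (y + r) = r * (a' - x.1) := by ring
    rw [e1]
    by_cases c : H < |r * (a' - x.1)|
    · simp only [c, if_true]
      have e2 : x.1 + r * (a' - x.1) / (y + r - y) = a' := by
        rw [add_sub_cancel_left]; field_simp; ring
      have e3 := ph_shift e (y, x.2 + x.1 * y) a' r
      simp only at e3
      rw [e2, e3, add_sub_cancel_left, ← mul_assoc (ENNReal.ofReal |r|), ← ENNReal.ofReal_mul (by positivity),
        mul_inv_cancel₀ (by positivity), ENNReal.ofReal_one, one_mul, mul_comm]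
    · simp only [c, if_false]; simp
  calc ∫⁻ y, e (y, x.2 + x.1 * y) * Qt e (y, x.2 + x.1 * y) x.1 H
      ≤ ∫⁻ y, ∫⁻ q, e (y, x.2 + x.1 * y) * hq y q := by
        apply lintegral_mono
        intro y
        simp only
        rw [lintegral_const_mul _ (f := hq y) (hqm.comp (measurable_const.prodMk measurable_id))]
        gcongr
        exact hQ y
    _ = ∫⁻ q, ∫⁻ y, e (y, x.2 + x.1 * y) * hq y q := by
        rw [lintegral_lintegral_swap]
        exact ((hle.comp measurable_fst).mul hqm).aemeasurable
    _ ≤ ∫⁻ q, e q * (Ln e x * (ENNReal.ofReal H⁻¹ * (16 * ∫⁻ q, e q))) ^ (1 / 2 : ℝ) := by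
        apply lintegral_mono
        intro q
        simp only [hhq]
        by_cases c : H < |q.2 - x.2 - x.1 * q.1|
        swap
        · simp [c]
        simp only [c, if_true]
        set h := q.2 - x.2 - x.1 * q.1 with hh
        have hh0 : h ≠ 0 := by
          intro h0; rw [h0, abs_zero] at c; linarith
        have hpm : Measurable fun y : ℝ => ph e q (x.1 + h / (q.1 - y)) :=
          hph.comp (f := fun y : ℝ => (q, x.1 + h / (q.1 - y))) (by fun_prop)
        have e1 : ∀ y, e (y, x.2 + x.1 * y) * (ENNReal.ofReal |q.1 - y|⁻¹ * (e q * ph e q (x.1 + h / (q.1 - y)))) =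
            e q * (e (y, x.2 + x.1 * y) * (ENNReal.ofReal |q.1 - y|⁻¹ * ph e q (x.1 + h / (q.1 - y)))) := by
          intro y; ring
        simp_rw [e1]
        rw [lintegral_const_mul _ (by fun_prop)]
        gcongr
        refine (CS volume _ _ hle.aemeasurable (by fun_prop)).trans ?_
        gcongr
        · apply lintegral_mono
          intro y
          simp only
          rw [sq]
          exact mul_le_of_le_one_left zero_le (h1 _)
        · calc ∫⁻ y, (ENNReal.ofReal |q.1 - y|⁻¹ * ph e q (x.1 + h / (q.1 - y))) ^ 2
              = ∫⁻ y, ENNReal.ofReal (((q.1 - y) ^ 2)⁻¹) * (ph e q (x.1 + h / (q.1 - y))) ^ 2 := by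
                congr 1; ext y
                rw [mul_pow, ← ENNReal.ofReal_pow (by positivity), inv_pow, sq_abs]
            _ ≤ ENNReal.ofReal |h|⁻¹ * Bq e q := cov_inv x.1 h q.1 hh0 (fun s => ph e q s ^ 2)
            _ ≤ ENNReal.ofReal H⁻¹ * (16 * ∫⁻ q, e q) := by
                gcongr
                exact Bq_le e he h1 q
    _ = _ := lintegral_mul_const _ he

end

noncomputable section
open MeasureTheory ENNReal
open scoped RealInnerProductSpace Pointwise

lemma I_triv (e : ℝ × ℝ → ℝ≥0∞) (he : Measurable e) (h1 : ∀ q, e q ≤ 1) :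
    ∫⁻ x, Ln e x ^ 3 ≤ 16 * (∫⁻ q, e q) ^ 2 := by
  rw [I_eq e he]
  calc ∫⁻ p, e p * Bq e p ≤ ∫⁻ p, e p * (16 * ∫⁻ q, e q) := by
        gcongr with p
        exact Bq_le e he h1 p
    _ = _ := by rw [lintegral_mul_const _ he]; ring

lemma set_est (e : ℝ × ℝ → ℝ≥0∞) (he : Measurable e) (h1 : ∀ q, e q ≤ 1) (N : ℝ) (hN0 : 0 < N)
    (hN : ∫⁻ q, e q = ENNReal.ofReal N) (α τ : ℝ) (hα : 0 < α) (hτ : 0 ≤ τ)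
    (hK : ∀ (p : ℝ × ℝ) (a M H : ℝ), 0 < M → 0 < H → M * H = α ^ 4 * N →
      ∫⁻ q in Krect p a M H, e q ≤ ENNReal.ofReal (τ ^ 2 * N)) :
    ∫⁻ x, Ln e x ^ 3 ≤ ENNReal.ofReal (2 * N ^ 2 * (1 / α ^ 2 + 16 * τ + 4 / α)) := by
  have hph := ph_meas e he
  have hB := Bq_meas e he
  have hLn := Ln_meas e he
  set I := ∫⁻ x, Ln e x ^ 3 with hI
  have hItop : I ≠ ⊤ := by
    have := I_triv e he h1
    rw [hN] at this
    exact ne_top_of_le_ne_top (by finiteness) this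
  rcases eq_or_ne I 0 with hI0 | hI0
  · rw [hI0]; exact zero_le
  set S := ∫⁻ p, e p * Bq e p ^ 2 with hS
  have hIS : I ^ 2 ≤ ENNReal.ofReal N * S := by
    have h2 := CS volume (fun p => e p ^ (1 / 2 : ℝ)) (fun p => e p ^ (1 / 2 : ℝ) * Bq e p) (by fun_prop) (by fun_prop)
    have e0 : ∀ p, (e p ^ (1 / 2 : ℝ)) ^ 2 = e p := by
      intro p
      rw [← ENNReal.rpow_natCast, ← ENNReal.rpow_mul]; norm_num
    have e1 : ∀ p, e p ^ (1 / 2 : ℝ) * (e p ^ (1 / 2 : ℝ) * Bq e p) = e p * Bq e p := by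
      intro p
      rw [← mul_assoc, ← sq, e0]
    simp only [mul_pow, e0, e1] at h2
    rw [← I_eq e he, hN] at h2
    calc I ^ 2 ≤ ((ENNReal.ofReal N * S) ^ (1 / 2 : ℝ)) ^ 2 := by gcongr
      _ = _ := by rw [← ENNReal.rpow_natCast, ← ENNReal.rpow_mul]; norm_num
  set Hf : ℝ≥0∞ → ℝ := fun φ => α ^ 2 * N / φ.toReal with hHf
  have hHm : Measurable Hf := by fun_prop
  have hQm : Measurable fun t : (ℝ × ℝ) × ℝ => Qt e t.1 t.2 (Hf (ph e t.1 t.2)) :=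
    (Qt_meas e he).comp (f := fun t : (ℝ × ℝ) × ℝ => (t.1, t.2, Hf (ph e t.1 t.2))) (by fun_prop)
  set D := ENNReal.ofReal (N * (1 / α ^ 2 + 16 * τ)) with hD
  have hQ : ∀ p, ∀ᵐ a : ℝ, ph e p a ^ 2 * (∫⁻ a', (if ph e p a' ^ 2 ≤ ph e p a ^ 2 then ph e p a' ^ 2 else 0)) ≤
      D * ph e p a ^ 2 + ph e p a ^ 2 * Qt e p a (Hf (ph e p a)) := by
    intro p
    have hfin : ∀ᵐ a : ℝ, ph e p a ^ 2 < ⊤ := by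
      apply ae_lt_top
      · exact (hph.comp (measurable_const.prodMk measurable_id)).pow_const 2
      · have := Bq_le e he h1 p
        rw [hN] at this
        exact ne_top_of_le_ne_top (by finiteness) this
    filter_upwards [hfin] with a ha
    rcases eq_or_ne (ph e p a) 0 with h0 | h0
    · rw [h0]; simp
    have htop : ph e p a ≠ ⊤ := by
      intro h; rw [h] at ha; simp at ha
    obtain ⟨φ, hφ, hφe⟩ : ∃ φ : ℝ, 0 < φ ∧ ph e p a = ENNReal.ofReal φ :=
      ⟨_, ENNReal.toReal_pos h0 htop, (ENNReal.ofReal_toReal htop).symm⟩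
    have hH : Hf (ph e p a) = α ^ 2 * N / φ := by
      simp only [hHf, hφe, ENNReal.toReal_ofReal hφ.le]
    have h2 := Q_split e he h1 p a (α ^ 2 * φ) (Hf (ph e p a)) (by positivity)
    have h3 := hK p a (α ^ 2 * φ) (Hf (ph e p a)) (by positivity) (by rw [hH]; positivity) (by rw [hH]; field_simp)
    have h4 : ph e p a * (ENNReal.ofReal (α ^ 2 * φ)⁻¹ * ∫⁻ q, e q) +
      ((16 * ∫⁻ q, e q) * (16 * ∫⁻ q in Krect p a (α ^ 2 * φ) (Hf (ph e p a)), e q)) ^ (1 / 2 : ℝ) ≤ D := by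
      have h5 : ((16 * ∫⁻ q, e q) * (16 * ∫⁻ q in Krect p a (α ^ 2 * φ) (Hf (ph e p a)), e q)) ^ (1 / 2 : ℝ) ≤
          ENNReal.ofReal (16 * τ * N) := by
        calc _ ≤ ((16 * ENNReal.ofReal N) * (16 * ENNReal.ofReal (τ ^ 2 * N))) ^ (1 / 2 : ℝ) := by
              rw [hN]; gcongr
          _ = (ENNReal.ofReal ((16 * τ * N) ^ 2)) ^ (1 / 2 : ℝ) := by
              have : (16 : ℝ≥0∞) = ENNReal.ofReal 16 := by norm_num
              rw [this, ← ENNReal.ofReal_mul (by positivity), ← ENNReal.ofReal_mul (by positivity),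
                ← ENNReal.ofReal_mul (by positivity)]
              congr 2; ring
          _ = _ := by
              rw [ofReal_pow_root _ (by positivity) 2 _ 1 (by norm_num) (by norm_num), pow_one]
      rw [hN, hφe, ← ENNReal.ofReal_mul (by positivity), ← ENNReal.ofReal_mul (by positivity)]
      rw [hφe, hN] at h5
      refine (add_le_add le_rfl h5).trans ?_
      rw [← ENNReal.ofReal_add (by positivity) (by positivity)]
      apply le_of_eq
      rw [hD]; congr 1; field_simp
    calc _ ≤ ph e p a ^ 2 * (D + Qt e p a (Hf (ph e p a))) := by
          gcongr
          exact h2.trans (add_le_add h4 le_rfl)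
      _ = _ := by ring
  set T := ∫⁻ p, ∫⁻ a, e p * (ph e p a ^ 2 * Qt e p a (Hf (ph e p a))) with hT
  have hSle : S ≤ 2 * (D * I + T) := by
    have hpm : ∀ p, Measurable (ph e p) := fun p => hph.comp (measurable_const.prodMk measurable_id)
    have hqm : ∀ p, Measurable fun a => Qt e p a (Hf (ph e p a)) := fun p => hQm.comp (measurable_const.prodMk measurable_id)
    calc S ≤ ∫⁻ p, e p * (2 * ((D * Bq e p) + ∫⁻ a, ph e p a ^ 2 * Qt e p a (Hf (ph e p a)))) := by
          apply lintegral_mono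
          intro p
          have hpm' := hpm p
          have hqm' := hqm p
          have h2 := order_pow volume (fun a => ph e p a ^ 2) (by fun_prop) 1
          simp only [pow_one, Nat.reduceAdd] at h2
          show e p * Bq e p ^ 2 ≤ _
          refine mul_le_mul' le_rfl ?_
          refine h2.trans ?_
          refine mul_le_mul' (by norm_num) ?_
          refine (lintegral_mono_ae (hQ p)).trans (le_of_eq ?_)
          rw [lintegral_add_left (by fun_prop), lintegral_const_mul _ (by fun_prop)]
          rfl
      _ = ∫⁻ p, (2 * D * (e p * Bq e p) + 2 * ∫⁻ a, e p * (ph e p a ^ 2 * Qt e p a (Hf (ph e p a)))) := by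
          congr 1; ext p
          have hpm' := hpm p
          have hqm' := hqm p
          rw [lintegral_const_mul _ (by fun_prop)]
          ring
      _ = _ := by
          rw [lintegral_add_left (by fun_prop), lintegral_const_mul _ (by fun_prop), lintegral_const_mul' _ _ (by norm_num),
            ← I_eq e he]
          ring
  have hTle : T ≤ ENNReal.ofReal (4 / α * N) * I := by
    have h2 := swap2 (fun t => e t.1 * (ph e t.1 t.2 ^ 2 * Qt e t.1 t.2 (Hf (ph e t.1 t.2)))) (by fun_prop)
    simp only [ph_line] at h2
    rw [hT, ← h2, hI, ← lintegral_const_mul _ (by fun_prop)]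
    apply lintegral_mono
    intro x
    simp only
    have hlq : Measurable fun y : ℝ => e (y, x.2 + x.1 * y) * Qt e (y, x.2 + x.1 * y) x.1 (Hf (Ln e x)) := by
      apply Measurable.mul
      · apply he.comp; fun_prop
      · exact (Qt_meas e he).comp (f := fun y : ℝ => ((y, x.2 + x.1 * y), x.1, Hf (Ln e x))) (by fun_prop)
    have e1 : ∀ y, e (y, x.2 + x.1 * y) * (Ln e x ^ 2 * Qt e (y, x.2 + x.1 * y) x.1 (Hf (Ln e x))) =
      Ln e x ^ 2 * (e (y, x.2 + x.1 * y) * Qt e (y, x.2 + x.1 * y) x.1 (Hf (Ln e x))) := by intro y; ring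
    simp_rw [e1]
    rw [lintegral_const_mul _ hlq]
    rcases eq_or_ne (Ln e x) 0 with h0 | h0
    · rw [h0]; simp
    rcases eq_or_ne (Ln e x) ⊤ with h0' | h0'
    · have h3' : (Ln e x) ^ 3 = ⊤ := by rw [h0']; exact ENNReal.top_pow (by norm_num)
      rw [h3', ENNReal.mul_top]
      · exact le_top
      · simp; positivity
    obtain ⟨φ, hφ, hφe⟩ : ∃ φ : ℝ, 0 < φ ∧ Ln e x = ENNReal.ofReal φ :=
      ⟨_, ENNReal.toReal_pos h0 h0', (ENNReal.ofReal_toReal h0').symm⟩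
    have hH : Hf (Ln e x) = α ^ 2 * N / φ := by
      simp only [hHf, hφe, ENNReal.toReal_ofReal hφ.le]
    have h3 := T_est e he h1 x (Hf (Ln e x)) (by rw [hH]; positivity)
    have h4 : (Ln e x * (ENNReal.ofReal (Hf (Ln e x))⁻¹ * (16 * ∫⁻ q, e q))) ^ (1 / 2 : ℝ) = ENNReal.ofReal (4 / α * φ) := by
      have : (16 : ℝ≥0∞) = ENNReal.ofReal 16 := by norm_num
      rw [hH, hφe, hN, this, ← ENNReal.ofReal_mul (by positivity), ← ENNReal.ofReal_mul (by positivity),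
                ← ENNReal.ofReal_mul (by positivity)]
      have e2 : φ * ((α ^ 2 * N / φ)⁻¹ * (16 * N)) = (4 / α * φ) ^ 2 := by field_simp; norm_num
      rw [e2, ofReal_pow_root _ (by positivity) 2 _ 1 (by norm_num) (by norm_num), pow_one]
    rw [h4, hN] at h3
    calc _ ≤ Ln e x ^ 2 * (ENNReal.ofReal N * ENNReal.ofReal (4 / α * φ)) := by gcongr
      _ = _ := by
        rw [ENNReal.ofReal_mul (p := 4 / α) (by positivity), ENNReal.ofReal_mul (p := 4 / α) (by positivity), ← hφe]; ring
  have hfin : I * I ≤ I * ENNReal.ofReal (2 * N ^ 2 * (1 / α ^ 2 + 16 * τ + 4 / α)) := by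
    calc I * I = I ^ 2 := (sq I).symm
      _ ≤ ENNReal.ofReal N * (2 * (D * I + ENNReal.ofReal (4 / α * N) * I)) := by
          refine hIS.trans ?_
          gcongr
          exact hSle.trans (by gcongr)
      _ = I * (ENNReal.ofReal N * (ENNReal.ofReal 2 * (D + ENNReal.ofReal (4 / α * N)))) := by
          have : (2 : ℝ≥0∞) = ENNReal.ofReal 2 := by norm_num
          rw [this]; ring
      _ = _ := by
          rw [hD, ← ENNReal.ofReal_add (by positivity) (by positivity), ← ENNReal.ofReal_mul (by positivity),
            ← ENNReal.ofReal_mul (by positivity)]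
          congr 2; ring
  exact (ENNReal.mul_le_mul_iff_right hI0 hItop).mp hfin

end

noncomputable section
open MeasureTheory ENNReal
open scoped RealInnerProductSpace Pointwise

lemma plane_est (e : ℝ × ℝ → ℝ≥0∞) (he : Measurable e) (h1 : ∀ q, e q ≤ 1) (N' Λ : ℝ) (hN' : 0 ≤ N')
    (hΛ : 0 < Λ) (hN : ∫⁻ q, e q ≤ ENNReal.ofReal N')
    (hK : ∀ (p : ℝ × ℝ) (a M H β : ℝ), 0 < M → 0 < H → 0 < β → 4 * M * H ≤ β ^ 3 →
      ∫⁻ q in Krect p a M H, e q ≤ ENNReal.ofReal (Λ * β)) :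
    ∫⁻ x, Ln e x ^ 3 ≤ ENNReal.ofReal (74 * N' ^ (9 / 5 : ℝ) * Λ ^ (3 / 10 : ℝ)) := by
  have htop : ∫⁻ q, e q ≠ ⊤ := ne_top_of_le_ne_top ENNReal.ofReal_ne_top hN
  rcases eq_or_ne (∫⁻ q, e q) 0 with h0 | h0
  · refine (I_triv e he h1).trans ?_
    rw [h0]; simp
  obtain ⟨N, hN0, hNe⟩ : ∃ N : ℝ, 0 < N ∧ ∫⁻ q, e q = ENNReal.ofReal N :=
    ⟨_, ENNReal.toReal_pos h0 htop, (ENNReal.ofReal_toReal htop).symm⟩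
  have hNN : N ≤ N' := by
    rw [hNe] at hN
    exact (ENNReal.ofReal_le_ofReal_iff hN').1 hN
  set ν : ℝ := N ^ (1 / 3 : ℝ) with hν
  have hν0 : 0 < ν := by positivity
  have hν3 : N = ν ^ 3 := by
    rw [hν, ← Real.rpow_natCast, ← Real.rpow_mul hN0.le]; norm_num
  set s : ℝ := (Λ / ν ^ 2) ^ (1 / 10 : ℝ) with hs
  have hs0 : 0 < s := by positivity
  have hs10 : Λ = s ^ 10 * ν ^ 2 := by
    have : s ^ 10 = Λ / ν ^ 2 := by
      rw [hs, ← Real.rpow_natCast, ← Real.rpow_mul (by positivity)]; norm_num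
    rw [this]; field_simp
  have key : ∫⁻ x, Ln e x ^ 3 ≤ ENNReal.ofReal (74 * ν ^ 6 * s ^ 3) := by
    rcases le_or_gt s 1 with h | h
    · refine (set_est e he h1 N hN0 hNe (s ^ 3)⁻¹ (2 * s ^ 3) (by positivity) (by positivity) ?_).trans ?_
      · intro p a M H hM hH hMH
        refine (hK p a M H (4 * ν / s ^ 4) hM hH (by positivity) ?_).trans ?_
        · have : 4 * M * H = 4 * (ν ^ 3 / s ^ 12) := by
            rw [mul_assoc, hMH, hν3]; field_simp
          rw [this]
          have : (4 * ν / s ^ 4) ^ 3 = 64 * (ν ^ 3 / s ^ 12) := by ring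
          rw [this]
          have : 0 < ν ^ 3 / s ^ 12 := by positivity
          linarith
        · apply ENNReal.ofReal_le_ofReal
          rw [hs10, hν3]
          apply le_of_eq
          field_simp; norm_num
      · apply ENNReal.ofReal_le_ofReal
        rw [hν3]
        have e1 : 1 / ((s ^ 3)⁻¹) ^ 2 = s ^ 6 := by field_simp
        have e2 : 4 / (s ^ 3)⁻¹ = 4 * s ^ 3 := by field_simp
        rw [e1, e2]
        have : s ^ 6 ≤ s ^ 3 := pow_le_pow_of_le_one hs0.le h (by norm_num)
        have h6 : 0 < ν ^ 6 := by positivity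
        nlinarith
    · refine (I_triv e he h1).trans ?_
      rw [hNe, hν3, ← ENNReal.ofReal_pow (by positivity)]
      have : (16 : ℝ≥0∞) = ENNReal.ofReal 16 := by norm_num
      rw [this, ← ENNReal.ofReal_mul (by positivity)]
      apply ENNReal.ofReal_le_ofReal
      have : 1 ≤ s ^ 3 := one_le_pow₀ h.le
      have h6 : 0 < ν ^ 6 := by positivity
      nlinarith
  refine key.trans (ENNReal.ofReal_le_ofReal ?_)
  have e3 : ν ^ 6 * s ^ 3 = N ^ (9 / 5 : ℝ) * Λ ^ (3 / 10 : ℝ) := by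
    have : s ^ 3 = Λ ^ (3 / 10 : ℝ) / ν ^ (3 / 5 : ℝ) := by
      rw [hs, ← Real.rpow_natCast, ← Real.rpow_mul (by positivity), Real.div_rpow hΛ.le (by positivity),
        ← Real.rpow_natCast ν 2, ← Real.rpow_mul hν0.le]
      norm_num
    rw [this, hν3, ← Real.rpow_natCast ν 3, ← Real.rpow_mul hν0.le, ← Real.rpow_natCast ν 6, mul_div_assoc',
      mul_comm, mul_div_assoc, ← Real.rpow_sub hν0]
    norm_num
    ring
  rw [mul_assoc, mul_assoc, e3]
  gcongr


end

noncomputable section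
open MeasureTheory ENNReal
open scoped RealInnerProductSpace Pointwise

lemma lint1 (G : (Fin 1 → ℝ) → ℝ≥0∞) : ∫⁻ y, G y = ∫⁻ t : ℝ, G (fun _ => t) := by
  have h := ((volume_preserving_funUnique (Fin 1) ℝ).symm).lintegral_comp_emb
    (MeasurableEquiv.measurableEmbedding _) G
  exact h.symm

def UU (q : ℝ × ℝ) : XX 1 := (fun _ => q.1, q.2)

lemma UU_mp : MeasurePreserving UU ∧ MeasurableEmbedding UU := by
  have h := ((volume_preserving_funUnique (Fin 1) ℝ).symm).prod (MeasurePreserving.id (volume : Measure ℝ))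
  constructor
  · exact h
  · exact (((MeasurableEquiv.funUnique (Fin 1) ℝ).symm).prodCongr (MeasurableEquiv.refl ℝ)).measurableEmbedding

lemma UU_meas : Measurable UU := UU_mp.1.measurable

lemma lintU (G : XX 1 → ℝ≥0∞) : ∫⁻ x, G x = ∫⁻ q, G (UU q) :=
  (UU_mp.1.lintegral_comp_emb UU_mp.2 G).symm

lemma RR_UU (f : XX 1 → ℝ≥0∞) (x : ℝ × ℝ) : RR 1 f (UU x) = Ln (fun q => f (UU q)) x := by
  simp only [RR, Ln, UU, lint1]
  simp

lemma BB_UU (f : XX 1 → ℝ≥0∞) (p : ℝ × ℝ) : BB f 2 (UU p) = Bq (fun q => f (UU q)) p := by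
  simp only [BB, Bq, ph, UU, lint1]
  simp only [Finset.univ_unique, Finset.sum_singleton]
  rfl

lemma I_eq1 (f : XX 1 → ℝ≥0∞) (hf : Measurable f) :
    ∫⁻ x, (RR 1 f x) ^ 3 = ∫⁻ p, f p * BB f 2 p := by
  rw [lintU, lintU]
  simp only [RR_UU, BB_UU]
  exact I_eq _ (hf.comp UU_meas)

lemma Krect_vol (p : ℝ × ℝ) (a M H : ℝ) (hM : 0 < M) (hH : 0 < H) :
    volume (Krect p a M H) = ENNReal.ofReal (4 * M * H) := by
  have h1 : ∀ y : ℝ, volume (Prod.mk y ⁻¹' Krect p a M H) =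
      (Set.Icc (p.1 - M) (p.1 + M)).indicator (fun _ => ENNReal.ofReal (2 * H)) y := by
    intro y
    by_cases hy : y ∈ Set.Icc (p.1 - M) (p.1 + M)
    · rw [Set.indicator_of_mem hy]
      have : Prod.mk y ⁻¹' Krect p a M H = Set.Icc (p.2 + a * (y - p.1) - H) (p.2 + a * (y - p.1) + H) := by
        ext u
        rw [Set.mem_Icc] at hy
        simp only [Set.mem_preimage, Krect, Set.mem_ofPred_eq, Set.mem_Icc, abs_le]
        constructor
        · rintro ⟨_, h, h'⟩; constructor <;> linarith
        · rintro ⟨h, h'⟩; refine ⟨⟨?_, ?_⟩, ?_, ?_⟩ <;> linarith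
      rw [this, Real.volume_Icc]; congr 1; ring
    · rw [Set.indicator_of_notMem hy]
      have : Prod.mk y ⁻¹' Krect p a M H = ∅ := by
        ext u
        simp only [Set.mem_preimage, Krect, Set.mem_ofPred_eq, abs_le, Set.mem_empty_iff_false, iff_false]
        rintro ⟨⟨h, h'⟩, _⟩
        exact hy ⟨by linarith, by linarith⟩
      rw [this]; simp
  rw [Measure.volume_eq_prod, Measure.prod_apply (Krect_meas p a M H)]
  simp_rw [h1]
  rw [lintegral_indicator_const measurableSet_Icc, Real.volume_Icc, ← ENNReal.ofReal_mul (by positivity)]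
  congr 1; ring

lemma Krect_Kset (p : ℝ × ℝ) (a M H : ℝ) (hM : 0 < M) (hH : 0 < H) :
    ∃ A : XX 1 →ₗ[ℝ] (Fin 2 → ℝ), Function.Injective A ∧ UU ⁻¹' (Kset 1 A (UU p)) = Krect p a M H := by
  let A : XX 1 →ₗ[ℝ] (Fin 2 → ℝ) :=
    { toFun := fun w => ![w.1 0 / M, (w.2 - a * w.1 0) / H]
      map_add' := by
        intro x y; ext i; fin_cases i <;> simp <;> ring
      map_smul' := by
        intro c x; ext i; fin_cases i <;> simp <;> ring }
  have hA : ∀ w, A w = ![w.1 0 / M, (w.2 - a * w.1 0) / H] := fun w => rfl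
  refine ⟨A, ?_, ?_⟩
  · rw [injective_iff_map_eq_zero]
    intro w hw
    rw [hA] at hw
    have h0 := congrFun hw 0
    have h1 := congrFun hw 1
    simp [hM.ne', hH.ne'] at h0 h1
    rw [h0] at h1
    refine Prod.ext ?_ ?_
    · ext i; fin_cases i; simpa using h0
    · simpa using h1
  · ext q
    simp only [Set.mem_preimage, Kset, Set.mem_ofPred_eq, hA, Krect, Fin.forall_fin_two, UU]
    simp [abs_div, abs_of_pos hM, abs_of_pos hH, div_le_one hM, div_le_one hH]

/-- a single level of the dyadic decomposition -/
lemma level_est (g : XX 1 → ℝ≥0∞) (hg : Measurable g) (η δ l : ℝ) (hη : 0 < η) (hδ : 0 < δ) (hl : 0 < l)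
    (h1 : ∀ x, g x ≤ ENNReal.ofReal (η ^ 2)) (h2 : ∀ x, g x = 0 ∨ ENNReal.ofReal ((δ * η) ^ 2) ≤ g x)
    (hn : ∫⁻ x, g x ^ (3 / 2 : ℝ) ≤ 1)
    (hK : ∀ (A : XX 1 →ₗ[ℝ] (Fin 2 → ℝ)) (b : XX 1), Function.Injective A →
      ∫⁻ x in Kset 1 A b, g x ≤ ENNReal.ofReal l * volume (Kset 1 A b) ^ (1 / 3 : ℝ)) :
    ∫⁻ x, (RR 1 g x) ^ 3 ≤ ENNReal.ofReal (74 * δ⁻¹ ^ (9 / 5 : ℝ) * l ^ (3 / 10 : ℝ)) *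
      ∫⁻ x, g x ^ (3 / 2 : ℝ) := by
  have htop : ∫⁻ x, g x ^ (3 / 2 : ℝ) ≠ ⊤ := ne_top_of_le_ne_top ENNReal.one_ne_top hn
  obtain ⟨n, hn0, hne⟩ : ∃ n : ℝ, 0 ≤ n ∧ ∫⁻ x, g x ^ (3 / 2 : ℝ) = ENNReal.ofReal n :=
    ⟨_, ENNReal.toReal_nonneg, (ENNReal.ofReal_toReal htop).symm⟩
  have hn1 : n ≤ 1 := by
    rw [hne] at hn; simpa using hn
  set e : ℝ × ℝ → ℝ≥0∞ := fun q => ENNReal.ofReal (η ^ 2)⁻¹ * g (UU q) with he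
  have hem : Measurable e := by
    have := hg.comp UU_meas
    exact this.const_mul _
  have hgint : ∫⁻ x, g x ≤ ENNReal.ofReal ((δ * η)⁻¹ * n) := by
    rw [ENNReal.ofReal_mul (by positivity), ← hne, ← lintegral_const_mul _ (by fun_prop)]
    apply lintegral_mono
    intro x
    rcases h2 x with h0 | h0
    · simp [h0]
    · have hgt : g x ≠ ⊤ := ne_top_of_le_ne_top ENNReal.ofReal_ne_top (h1 x)
      show g x ≤ ENNReal.ofReal (δ * η)⁻¹ * g x ^ (3 / 2 : ℝ)
      have hg0 : g x ≠ 0 := by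
        intro h; rw [h] at h0; simp at h0; rcases h0 with h0 | h0 <;> linarith
      have e1 : g x ^ (3 / 2 : ℝ) = g x ^ (1 / 2 : ℝ) * g x := by
        conv_rhs => rw [← ENNReal.rpow_one (g x), ← ENNReal.rpow_mul, ← ENNReal.rpow_add _ _ hg0 hgt]
        norm_num
      have e2 : ENNReal.ofReal (δ * η) ≤ g x ^ (1 / 2 : ℝ) := by
        have := ENNReal.rpow_le_rpow h0 (z := (1 / 2 : ℝ)) (by norm_num)
        rwa [ofReal_pow_root _ (by positivity) 2 _ 1 (by norm_num) (by norm_num), pow_one] at this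
      rw [e1, ← mul_assoc]
      have : 1 ≤ ENNReal.ofReal (δ * η)⁻¹ * g x ^ (1 / 2 : ℝ) := by
        calc 1 = ENNReal.ofReal (δ * η)⁻¹ * ENNReal.ofReal (δ * η) := by
              rw [← ENNReal.ofReal_mul (by positivity), inv_mul_cancel₀ (by positivity)]; simp
          _ ≤ _ := by gcongr
      exact le_mul_of_one_le_left zero_le this
  have main := plane_est e hem ?_ ((η ^ 2)⁻¹ * ((δ * η)⁻¹ * n)) ((η ^ 2)⁻¹ * l) (by positivity) (by positivity) ?_ ?_
  · have e1 : ∀ q, RR 1 g (UU q) = ENNReal.ofReal (η ^ 2) * Ln e q := by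
      intro q
      rw [RR_UU]
      unfold Ln
      rw [he, lintegral_const_mul' _ _ ENNReal.ofReal_ne_top, ← mul_assoc, ← ENNReal.ofReal_mul (by positivity),
        mul_inv_cancel₀ (by positivity)]
      simp
    rw [lintU]
    simp only [e1, mul_pow]
    rw [lintegral_const_mul' _ _ (by simp), hne]
    refine (mul_le_mul' le_rfl main).trans ?_
    rw [← ENNReal.ofReal_pow (by positivity), ← ENNReal.ofReal_mul (by positivity), ← ENNReal.ofReal_mul (by positivity)]
    apply ENNReal.ofReal_le_ofReal
    have e2 : (η ^ 2)⁻¹ * ((δ * η)⁻¹ * n) = (η ^ (-3 : ℝ)) * (δ⁻¹ * n) := by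
      rw [Real.rpow_neg hη.le]; norm_cast; field_simp
    have e3 : (η ^ 2)⁻¹ = η ^ (-2 : ℝ) := by
      rw [Real.rpow_neg hη.le]; norm_cast
    have hnn : n ^ (9 / 5 : ℝ) ≤ n := by
      conv_rhs => rw [← Real.rpow_one n]
      exact Real.rpow_le_rpow_of_exponent_ge' hn0 hn1 (by norm_num) (by norm_num)
    rw [e2, e3, Real.mul_rpow (by positivity) (by positivity), Real.mul_rpow (by positivity) (by positivity),
      Real.mul_rpow (by positivity) (by positivity), ← Real.rpow_mul hη.le, ← Real.rpow_mul hη.le]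
    have e4 : (η ^ 2) ^ 3 * (η ^ ((-3 : ℝ) * (9 / 5)) * η ^ ((-2 : ℝ) * (3 / 10))) = 1 := by
      rw [← Real.rpow_add hη]
      rw [show (-3 : ℝ) * (9 / 5) + -2 * (3 / 10) = -6 by norm_num, Real.rpow_neg hη.le]
      norm_cast
      field_simp
    calc _ = ((η ^ 2) ^ 3 * (η ^ ((-3 : ℝ) * (9 / 5)) * η ^ ((-2 : ℝ) * (3 / 10)))) *
          (74 * δ⁻¹ ^ (9 / 5 : ℝ) * l ^ (3 / 10 : ℝ) * n ^ (9 / 5 : ℝ)) := by ring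
      _ ≤ _ := by
        rw [e4, one_mul]; gcongr
  · intro q
    calc e q ≤ ENNReal.ofReal (η ^ 2)⁻¹ * ENNReal.ofReal (η ^ 2) := by
          simp only [he]; gcongr; exact h1 _
      _ = 1 := by
          rw [← ENNReal.ofReal_mul (by positivity), inv_mul_cancel₀ (by positivity)]; simp
  · simp only [he]
    rw [lintegral_const_mul' _ _ ENNReal.ofReal_ne_top, ← lintU g, ENNReal.ofReal_mul (by positivity)]
    gcongr
  · intro p a M H β hM hH hβ hb
    obtain ⟨A, hA, hAe⟩ := Krect_Kset p a M H hM hH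
    have h3 := hK A (UU p) hA
    have e1 : volume (Kset 1 A (UU p)) = ENNReal.ofReal (4 * M * H) := by
      rw [← Krect_vol p a M H hM hH, ← hAe, UU_mp.1.measure_preimage_emb UU_mp.2]
    have e2 : ∫⁻ x in Kset 1 A (UU p), g x = ∫⁻ q in Krect p a M H, g (UU q) := by
      rw [← hAe, UU_mp.1.setLIntegral_comp_preimage_emb UU_mp.2]
    rw [e1, e2] at h3
    simp only [he]
    rw [lintegral_const_mul' _ _ ENNReal.ofReal_ne_top, mul_assoc, ENNReal.ofReal_mul (by positivity),
      ENNReal.ofReal_mul hl.le]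
    gcongr
    refine h3.trans ?_
    gcongr
    have := root_le (4 * M * H) β (by positivity) hβ.le 3 (by norm_num) hb
    simpa using this


end

noncomputable section
open MeasureTheory ENNReal
open scoped RealInnerProductSpace Pointwise

lemma BB_inner_meas {m : ℕ} (g : XX m → ℝ≥0∞) (hg : Measurable g) :
    Measurable fun t : XX m × (Fin m → ℝ) => ∫⁻ z : Fin m → ℝ, g (t.1.1 + z, t.1.2 + ∑ i, t.2 i * z i) := by
  apply Measurable.lintegral_prod_right' (f := fun u : (XX m × (Fin m → ℝ)) × (Fin m → ℝ) =>
    g (u.1.1.1 + u.2, u.1.1.2 + ∑ i, u.1.2 i * u.2 i))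
  apply hg.comp; fun_prop

lemma BB_meas {m : ℕ} (g : XX m → ℝ≥0∞) (hg : Measurable g) (k : ℕ) : Measurable fun p => BB g k p := by
  unfold BB
  exact Measurable.lintegral_prod_right' (f := fun t : XX m × (Fin m → ℝ) =>
    (∫⁻ z : Fin m → ℝ, g (t.1.1 + z, t.1.2 + ∑ i, t.2 i * z i)) ^ k) ((BB_inner_meas g hg).pow_const k)

lemma sq_add_le (a b : ℝ≥0∞) : (a + b) ^ 2 ≤ 4 * a ^ 2 + 4 * b ^ 2 := by
  rcases le_total a b with h | h
  · calc (a + b) ^ 2 ≤ (b + b) ^ 2 := by gcongr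
      _ = 4 * b ^ 2 := by ring
      _ ≤ _ := le_add_self
  · calc (a + b) ^ 2 ≤ (a + a) ^ 2 := by gcongr
      _ = 4 * a ^ 2 := by ring
      _ ≤ _ := le_self_add

lemma BB_add {m : ℕ} (g g1 g2 : XX m → ℝ≥0∞) (hg1 : Measurable g1) (hg2 : Measurable g2)
    (h : ∀ q, g q ≤ g1 q + g2 q) (p : XX m) : BB g 2 p ≤ 4 * BB g1 2 p + 4 * BB g2 2 p := by
  unfold BB
  have m1 : Measurable fun a : Fin m → ℝ => ∫⁻ z : Fin m → ℝ, g1 (p.1 + z, p.2 + ∑ i, a i * z i) :=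
    (BB_inner_meas g1 hg1).comp (f := fun a => (p, a)) (by fun_prop)
  have m2 : Measurable fun a : Fin m → ℝ => ∫⁻ z : Fin m → ℝ, g2 (p.1 + z, p.2 + ∑ i, a i * z i) :=
    (BB_inner_meas g2 hg2).comp (f := fun a => (p, a)) (by fun_prop)
  rw [← lintegral_const_mul _ (by fun_prop), ← lintegral_const_mul _ (by fun_prop), ← lintegral_add_left (by fun_prop)]
  apply lintegral_mono
  intro a
  refine le_trans ?_ (sq_add_le _ _)
  have hm : Measurable fun z : Fin m → ℝ => g1 (p.1 + z, p.2 + ∑ i, a i * z i) := by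
    apply hg1.comp; fun_prop
  rw [← lintegral_add_left hm]
  exact pow_le_pow_left' (lintegral_mono fun z => h _) 2

lemma claim_one : Claim 1 (1 / 20) 700000 := by
  intro f hf l hl hl1 hN hK
  norm_num at hN hK
  replace hK : ∀ (A : XX 1 →ₗ[ℝ] (Fin 2 → ℝ)) (b : XX 1), Function.Injective A →
      ∫⁻ x in Kset 1 A b, f x ≤ ENNReal.ofReal l * volume (Kset 1 A b) ^ (1 / 3 : ℝ) :=
    fun A b hA => hK A b.1 b.2 hA
  obtain ⟨β, hβd⟩ : ∃ β : ℝ, β = 2 * l ^ (-1 / 40 : ℝ) := ⟨_, rfl⟩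
  have hlp : 1 ≤ l ^ (-1 / 40 : ℝ) := Real.one_le_rpow_of_pos_of_le_one_of_nonpos hl hl1 (by norm_num)
  have hβ1 : 1 < β := by rw [hβd]; linarith
  have hβ0 : 0 < β := by linarith
  set b : ℝ := β ^ 2 with hb
  have hb1 : 1 < b := one_lt_pow₀ hβ1 (by norm_num)
  have hb0 : 0 < b := by linarith
  set L : ℤ → ℝ≥0∞ := fun n => ENNReal.ofReal ((b ^ n) ^ 2) with hL
  have hLm : Monotone L := by
    intro i j hij
    apply ENNReal.ofReal_le_ofReal
    have : b ^ i ≤ b ^ j := zpow_le_zpow_right₀ hb1.le hij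
    gcongr
  set S : ℤ → Set (XX 1) := fun n => {q | L n < f q ∧ f q ≤ L (n + 1)} with hS
  have hSm : ∀ n, MeasurableSet (S n) := fun n =>
    (measurableSet_lt measurable_const hf).inter (measurableSet_le hf measurable_const)
  have hSd : Pairwise (Function.onFun Disjoint S) := by
    have key : ∀ i j, i < j → ∀ q, q ∈ S i → q ∈ S j → False := by
      intro i j hij q hi hj
      exact absurd (hi.2.trans (hLm (by omega : i + 1 ≤ j))) (not_le.2 hj.1)
    intro i j hij
    rw [Function.onFun, Set.disjoint_left]
    intro q hi hj
    rcases lt_or_gt_of_ne hij with h | h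
    · exact key i j h q hi hj
    · exact key j i h q hj hi
  set F : ℤ → XX 1 → ℝ≥0∞ := fun n => (S (n - 1) ∪ S n).indicator f with hF
  have hFm : ∀ n, Measurable (F n) := fun n => hf.indicator ((hSm _).union (hSm _))
  have hFle : ∀ n q, F n q ≤ f q := fun n q => Set.indicator_le_self _ _ _
  have hsum : ∑' n, ∫⁻ q in S n, f q ^ (3 / 2 : ℝ) ≤ 1 := by
    rw [← lintegral_iUnion hSm hSd]
    exact (setLIntegral_le_lintegral _ _).trans hN
  have hFsum : ∑' n, ∫⁻ q, F n q ^ (3 / 2 : ℝ) ≤ 2 := by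
    calc ∑' n, ∫⁻ q, F n q ^ (3 / 2 : ℝ)
        ≤ ∑' n, ((∫⁻ q in S (n - 1), f q ^ (3 / 2 : ℝ)) + ∫⁻ q in S n, f q ^ (3 / 2 : ℝ)) := by
          apply ENNReal.tsum_le_tsum
          intro n
          have : ∀ q, F n q ^ (3 / 2 : ℝ) = (S (n - 1) ∪ S n).indicator (fun q => f q ^ (3 / 2 : ℝ)) q := by
            intro q
            simp only [hF, Set.indicator]
            split_ifs <;> simp
          simp_rw [this]
          rw [lintegral_indicator ((hSm _).union (hSm _))]
          exact lintegral_union_le _ _ _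
      _ = (∑' n, ∫⁻ q in S n, f q ^ (3 / 2 : ℝ)) + ∑' n, ∫⁻ q in S n, f q ^ (3 / 2 : ℝ) := by
          rw [ENNReal.tsum_add]
          congr 1
          exact (Equiv.subRight (1 : ℤ)).tsum_eq (fun n => ∫⁻ q in S n, f q ^ (3 / 2 : ℝ))
      _ ≤ 1 + 1 := add_le_add hsum hsum
      _ = 2 := by norm_num
  set D : ℝ≥0∞ := ENNReal.ofReal (74 * (β ^ 4) ^ (9 / 5 : ℝ) * l ^ (3 / 10 : ℝ)) with hD
  have hlev : ∀ n, ∫⁻ p, F n p * BB (F n) 2 p ≤ D * ∫⁻ q, F n q ^ (3 / 2 : ℝ) := by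
    intro n
    rw [← I_eq1 _ (hFm n)]
    have h := level_est (F n) (hFm n) (b ^ (n + 1)) (β ^ 4)⁻¹ l (by positivity) (by positivity) hl ?_ ?_ ?_ ?_
    · rwa [inv_inv] at h
    · intro q
      simp only [hF, Set.indicator]
      split_ifs with h
      · rcases h with h | h
        · exact h.2.trans (hLm (by omega))
        · exact h.2
      · exact zero_le
    · intro q
      simp only [hF, Set.indicator]
      split_ifs with h
      · right
        have e1 : (β ^ 4)⁻¹ * b ^ (n + 1) = b ^ (n - 1) := by
          have : b ^ (n + 1) = b ^ (n - 1) * β ^ 4 := by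
            rw [show n + 1 = (n - 1) + 2 by ring, zpow_add₀ hb0.ne', hb]; norm_cast; ring
          rw [this]; field_simp
        rw [e1]
        rcases h with h | h
        · exact h.1.le
        · exact (hLm (by omega : n - 1 ≤ n)).trans h.1.le
      · left; rfl
    · refine le_trans (lintegral_mono fun q => ?_) hN
      exact ENNReal.rpow_le_rpow (hFle n q) (by norm_num)
    · intro A c hA
      refine le_trans (lintegral_mono fun q => hFle n q) ?_
      exact hK A c hA
  have hfin : ∀ᵐ p, f p ≠ ⊤ := by
    have : ∫⁻ x, f x ^ (3 / 2 : ℝ) ≠ ⊤ := ne_top_of_le_ne_top ENNReal.one_ne_top hN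
    filter_upwards [ae_lt_top (by fun_prop) this] with p hp
    intro h; rw [h] at hp; simp at hp
  have hpt : ∀ᵐ p, f p * BB (cutf f (f p)) 2 p ≤
      ENNReal.ofReal (144 / b) * f p ^ (3 / 2 : ℝ) + 4 * ∑' n, F n p * BB (F n) 2 p := by
    filter_upwards [hfin] with p hp
    rcases eq_or_ne (f p) 0 with h0 | h0
    · rw [h0]; simp
    obtain ⟨τ, hτ, hτe⟩ := exists_root (f p) h0 hp 4 (by norm_num)
    obtain ⟨n, hn1, hn2⟩ := _root_.exists_mem_Ioc_zpow (x := τ ^ 2) (y := b) (by positivity) hb1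
    have hpS : p ∈ S n := by
      refine ⟨?_, ?_⟩
      · rw [hτe]; simp only [hL]
        rw [ENNReal.ofReal_lt_ofReal_iff (by positivity), show τ ^ 4 = (τ ^ 2) ^ 2 by ring]
        gcongr
      · rw [hτe]; simp only [hL]
        apply ENNReal.ofReal_le_ofReal
        rw [show τ ^ 4 = (τ ^ 2) ^ 2 by ring]
        gcongr
    have hFp : F n p = f p := Set.indicator_of_mem (Set.mem_union_right _ hpS) _
    have hdec := BB_add (cutf f (f p)) (cutf f (ENNReal.ofReal ((τ / β) ^ 4))) (F n)
      ((cutf_meas f hf).comp (f := fun q => (ENNReal.ofReal ((τ / β) ^ 4), q)) (by fun_prop)) (hFm n) ?_ p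
    · have hp1 := pointwise 0 0 1 claim_zero (cutf f (ENNReal.ofReal ((τ / β) ^ 4)))
        ((cutf_meas f hf).comp (f := fun q => (ENNReal.ofReal ((τ / β) ^ 4), q)) (by fun_prop)) (τ / β) (by positivity)
        ?_ ?_ 1 one_pos le_rfl ?_ p
      · have hle : f p * BB (F n) 2 p ≤ ∑' n, F n p * BB (F n) 2 p := by
          rw [← hFp]
          exact ENNReal.le_tsum (f := fun n => F n p * BB (F n) 2 p) n
        have e1 : f p ^ (3 / 2 : ℝ) = ENNReal.ofReal (τ ^ 6) := by
          rw [hτe, ofReal_pow_root _ hτ.le 4 _ 6 (by norm_num) (by norm_num)]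
        have hp2 : f p * BB (cutf f (ENNReal.ofReal ((τ / β) ^ 4))) 2 p ≤ ENNReal.ofReal (τ ^ 4 * (36 * τ ^ 2 / b)) := by
          rw [ENNReal.ofReal_mul (by positivity), ← hτe]
          refine mul_le_mul' le_rfl (hp1.trans (le_of_eq ?_))
          rw [← ENNReal.ofReal_mul (by positivity)]
          congr 1
          rw [hb]; norm_num; ring
        calc _ ≤ f p * (4 * BB (cutf f (ENNReal.ofReal ((τ / β) ^ 4))) 2 p + 4 * BB (F n) 2 p) := by gcongr
          _ = 4 * (f p * BB (cutf f (ENNReal.ofReal ((τ / β) ^ 4))) 2 p) + 4 * (f p * BB (F n) 2 p) := by ring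
          _ ≤ ENNReal.ofReal 4 * ENNReal.ofReal (τ ^ 4 * (36 * τ ^ 2 / b)) + 4 * ∑' n, F n p * BB (F n) 2 p := by
              gcongr; norm_num
          _ = _ := by
              rw [e1, ← ENNReal.ofReal_mul (by positivity), ← ENNReal.ofReal_mul (by positivity)]
              congr 2; ring
      · intro q; exact cutf_le _ _ _
      · norm_num
        refine le_trans (lintegral_mono fun q => ?_) hN
        exact ENNReal.rpow_le_rpow (cutf_le' _ _ _) (by norm_num)
      · intro A c hA
        norm_num
        refine le_trans (lintegral_mono fun q => cutf_le' _ _ _) ?_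
        refine (hK A c hA).trans ?_
        have : ENNReal.ofReal l ≤ 1 := by simpa using hl1
        exact mul_le_of_le_one_left zero_le this
    · intro q
      by_cases hq : f q ≤ ENNReal.ofReal ((τ / β) ^ 4)
      · refine le_trans (cutf_le' _ _ _) ?_
        simp [cutf, hq]
      · by_cases hq2 : f q ≤ f p
        · have : q ∈ S (n - 1) ∪ S n := by
            have h3 : f q ≤ L (n + 1) := hq2.trans hpS.2
            have h4 : L (n - 1) < f q := by
              refine lt_of_le_of_lt ?_ (not_le.1 hq)
              apply ENNReal.ofReal_le_ofReal
              have : b ^ (n - 1) ≤ τ ^ 2 / b := by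
                rw [zpow_sub₀ hb0.ne', zpow_one]; gcongr
              calc (b ^ (n - 1)) ^ 2 ≤ (τ ^ 2 / b) ^ 2 := by gcongr
                _ = _ := by rw [hb]; ring
            rcases le_or_gt (f q) (L n) with h5 | h5
            · left; exact ⟨h4, by simpa using h5⟩
            · right; exact ⟨h5, h3⟩
          have h6 : F n q = f q := Set.indicator_of_mem this _
          rw [h6]
          exact (cutf_le' _ _ _).trans le_add_self
        · simp [cutf, hq2]
  have h := RR_pow_le 1 2 f hf
  refine h.trans ?_
  calc 2 ^ 2 * ∫⁻ p, f p * BB (cutf f (f p)) 2 p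
      ≤ 2 ^ 2 * ∫⁻ p, (ENNReal.ofReal (144 / b) * f p ^ (3 / 2 : ℝ) + 4 * ∑' n, F n p * BB (F n) 2 p) := by
        gcongr 2 ^ 2 * ?_
        exact lintegral_mono_ae hpt
    _ = 2 ^ 2 * ((ENNReal.ofReal (144 / b) * ∫⁻ p, f p ^ (3 / 2 : ℝ)) + 4 * ∑' n, ∫⁻ p, F n p * BB (F n) 2 p) := by
        rw [lintegral_add_left (by fun_prop), lintegral_const_mul _ (by fun_prop), lintegral_const_mul' _ _ (by norm_num),
          lintegral_tsum]
        intro n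
        exact ((hFm n).mul (BB_meas _ (hFm n) 2)).aemeasurable
    _ ≤ 2 ^ 2 * (ENNReal.ofReal (144 / b) * 1 + 4 * ∑' n, D * ∫⁻ q, F n q ^ (3 / 2 : ℝ)) := by
        gcongr 2 ^ 2 * (ENNReal.ofReal (144 / b) * ?_ + 4 * ?_)
        exact ENNReal.tsum_le_tsum hlev
    _ ≤ 2 ^ 2 * (ENNReal.ofReal (144 / b) * 1 + 4 * (D * 2)) := by
        rw [ENNReal.tsum_mul_left]
        gcongr
    _ = ENNReal.ofReal (576 / b + 2368 * (β ^ 4) ^ (9 / 5 : ℝ) * l ^ (3 / 10 : ℝ)) := by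
        have e4 : (4 : ℝ≥0∞) = ENNReal.ofReal 4 := by norm_num
        have e2 : (2 : ℝ≥0∞) = ENNReal.ofReal 2 := by norm_num
        rw [mul_one, e4, e2, hD, ← ENNReal.ofReal_pow (by norm_num), ← ENNReal.ofReal_mul (by positivity),
          ← ENNReal.ofReal_mul (by positivity), ← ENNReal.ofReal_add (by positivity) (by positivity),
          ← ENNReal.ofReal_mul (by positivity)]
        congr 1; ring
    _ ≤ _ := by
        apply ENNReal.ofReal_le_ofReal
        have i1 : 576 / b ≤ 576 * l ^ (1 / 20 : ℝ) := by
          have e1 : b = 4 * l ^ (-1 / 20 : ℝ) := by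
            rw [hb, hβd, mul_pow, ← Real.rpow_natCast (l ^ _), ← Real.rpow_mul hl.le]; norm_num
          have e2 : l ^ (-1 / 20 : ℝ) = (l ^ (1 / 20 : ℝ))⁻¹ := by
            rw [← Real.rpow_neg hl.le]; norm_num
          rw [e1, e2]
          have : 0 < l ^ (1 / 20 : ℝ) := by positivity
          rw [div_le_iff₀ (by positivity)]
          field_simp
          norm_num
        have i2 : (β ^ 4) ^ (9 / 5 : ℝ) * l ^ (3 / 10 : ℝ) ≤ 256 * l ^ (1 / 20 : ℝ) := by
          have e1 : β ^ 4 = 16 * l ^ (-1 / 10 : ℝ) := by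
            rw [hβd, mul_pow, ← Real.rpow_natCast (l ^ _), ← Real.rpow_mul hl.le]; norm_num
          rw [e1, Real.mul_rpow (by norm_num) (by positivity), ← Real.rpow_mul hl.le, mul_assoc, ← Real.rpow_add hl]
          have e3 : (16 : ℝ) ^ (9 / 5 : ℝ) ≤ 256 := by
            calc (16 : ℝ) ^ (9 / 5 : ℝ) ≤ 16 ^ (2 : ℝ) := Real.rpow_le_rpow_of_exponent_le (by norm_num) (by norm_num)
              _ = 256 := by norm_num
          have e4 : l ^ ((-1 / 10 : ℝ) * (9 / 5) + 3 / 10) ≤ l ^ (1 / 20 : ℝ) :=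
            Real.rpow_le_rpow_of_exponent_ge hl hl1 (by norm_num)
          gcongr
        have : 0 < l ^ (1 / 20 : ℝ) := by positivity
        nlinarith


end

noncomputable section
open MeasureTheory ENNReal
open scoped RealInnerProductSpace Pointwise

lemma box_lemma (n : ℕ) (A : XX n →ₗ[ℝ] (Fin (n + 1) → ℝ)) (hA : Function.Injective A) :
    ∃ (e : Fin n → Vec n) (rs : Fin n → ℝ) (ρ : ℝ) (m : Vec n), Orthonormal ℝ e ∧ (∀ j, 0 < rs j) ∧ 0 < ρ ∧
      (∀ w : XX n, (∀ i, |A w i| ≤ 1) →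
        (∀ j, |⟪WithLp.toLp 2 w.1, e j⟫| < rs j) ∧ |w.2 - ⟪m, WithLp.toLp 2 w.1⟫| < ρ) ∧
      (∀ w : XX n, (∀ j, |⟪WithLp.toLp 2 w.1, e j⟫| < rs j) → |w.2 - ⟪m, WithLp.toLp 2 w.1⟫| < ρ →
        ∀ i, |A w i| ≤ (n : ℝ) + 2) := by
  let W := EuclideanSpace ℝ (Fin (n + 1))
  let A' : XX n →ₗ[ℝ] W := (WithLp.linearEquiv 2 ℝ (Fin (n + 1) → ℝ)).symm.toLinearMap ∘ₗ A
  have hA' : ∀ w i, A' w i = A w i := fun w i => rfl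
  have hA'inj : Function.Injective A' := (WithLp.linearEquiv 2 ℝ (Fin (n + 1) → ℝ)).symm.injective.comp hA
  let a0 : W := A' (0, 1)
  have ha0 : a0 ≠ 0 := by
    intro h
    have : ((0, 1) : XX n) = 0 := hA'inj (by rw [map_zero]; exact h)
    have := congrArg Prod.snd this
    simp at this
  have ha0n : 0 < ‖a0‖ := norm_pos_iff.2 ha0
  let A1 : Vec n →ₗ[ℝ] W := A' ∘ₗ (LinearMap.inl ℝ (Fin n → ℝ) ℝ) ∘ₗ (WithLp.linearEquiv 2 ℝ (Fin n → ℝ)).toLinearMap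
  have hA1 : ∀ y : Fin n → ℝ, A1 (WithLp.toLp 2 y) = A' (y, 0) := fun y => rfl
  let m : Vec n := (-(‖a0‖ ^ 2)⁻¹) • LinearMap.adjoint A1 a0
  have hm : ∀ y, ⟪m, y⟫ = -(‖a0‖ ^ 2)⁻¹ * ⟪a0, A1 y⟫ := by
    intro y
    simp only [m]
    rw [real_inner_smul_left, LinearMap.adjoint_inner_left]
  let D : Vec n →ₗ[ℝ] W := A1 + (innerₛₗ ℝ m).smulRight a0
  have hD : ∀ y, D y = A1 y + ⟪m, y⟫ • a0 := fun y => rfl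
  have hDorth : ∀ y, ⟪D y, a0⟫ = 0 := by
    intro y
    rw [hD, inner_add_left, real_inner_smul_left, hm, real_inner_self_eq_norm_sq, real_inner_comm a0]
    field_simp; ring
  have hdec : ∀ w : XX n, A' w = D (WithLp.toLp 2 w.1) + (w.2 - ⟪m, WithLp.toLp 2 w.1⟫) • a0 := by
    intro w
    rw [hD, hA1]
    have : A' w = A' (w.1, 0) + w.2 • a0 := by
      simp only [a0]
      rw [← map_smul, ← map_add]
      congr 1
      ext <;> simp
    rw [this, sub_smul]; abel
  have hDinj : Function.Injective D := by
    rw [injective_iff_map_eq_zero]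
    intro y hy
    have h1 : A' (y.ofLp, ⟪m, y⟫) = 0 := by
      rw [hdec]; simp [hy]
    have h2 : ((y.ofLp, ⟪m, y⟫) : XX n) = 0 := hA'inj (by rw [h1, map_zero])
    have h3 := congrArg Prod.fst h2
    ext i
    exact congrFun h3 i
  have hnorm : ∀ w : XX n, ‖A' w‖ ^ 2 = ‖D (WithLp.toLp 2 w.1)‖ ^ 2 + (w.2 - ⟪m, WithLp.toLp 2 w.1⟫) ^ 2 * ‖a0‖ ^ 2 := by
    intro w
    rw [hdec, norm_add_sq_real, real_inner_smul_right, hDorth, norm_smul, mul_pow, Real.norm_eq_abs, sq_abs]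
    ring
  let T : Vec n →ₗ[ℝ] Vec n := LinearMap.adjoint D ∘ₗ D
  have hT : T.IsSymmetric := by
    intro x y
    simp only [T, LinearMap.comp_apply]
    rw [LinearMap.adjoint_inner_left, LinearMap.adjoint_inner_right]
  have hfr : Module.finrank ℝ (Vec n) = n := by simp
  let eb := hT.eigenvectorBasis hfr
  let μ := hT.eigenvalues hfr
  have hμ : ∀ j, T (eb j) = μ j • eb j := fun j => hT.apply_eigenvectorBasis hfr j
  have hμpos : ∀ j, 0 < μ j := by
    intro j
    have h1 : ‖D (eb j)‖ ^ 2 = μ j := by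
      rw [← real_inner_self_eq_norm_sq, ← LinearMap.adjoint_inner_left]
      have : LinearMap.adjoint D (D (eb j)) = μ j • eb j := hμ j
      rw [this, real_inner_smul_left, real_inner_self_eq_norm_sq, eb.orthonormal.1 j]; simp
    rw [← h1]
    have : D (eb j) ≠ 0 := by
      intro h
      have h2 : eb j = 0 := hDinj (by rw [h, map_zero])
      have := eb.orthonormal.1 j
      rw [h2] at this; simp at this
    positivity
  have hDsum : ∀ y, ‖D y‖ ^ 2 = ∑ j, μ j * ⟪y, eb j⟫ ^ 2 := by
    intro y
    rw [← real_inner_self_eq_norm_sq, ← LinearMap.adjoint_inner_right, ← eb.sum_inner_mul_inner]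
    refine Finset.sum_congr rfl fun j _ => ?_
    have : ⟪eb j, LinearMap.adjoint D (D y)⟫ = μ j * ⟪y, eb j⟫ := by
      have h1 : ⟪eb j, T y⟫ = ⟪T (eb j), y⟫ := (hT (eb j) y).symm
      rw [hμ, real_inner_smul_left, real_inner_comm y] at h1
      exact h1
    rw [this]; ring
  set Q : ℝ := Real.sqrt (n + 2) with hQ
  have hQ2 : Q ^ 2 = n + 2 := Real.sq_sqrt (by positivity)
  have hQ0 : 0 < Q := by positivity
  have hcoord : ∀ w : XX n, ‖A' w‖ ^ 2 = ∑ i, (A w i) ^ 2 := by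
    intro w
    rw [EuclideanSpace.norm_sq_eq]
    simp [hA']
  refine ⟨eb, fun j => Q / Real.sqrt (μ j), Q / ‖a0‖, m, eb.orthonormal,
    fun j => by have := hμpos j; positivity, by positivity, ?_, ?_⟩
  · intro w hw
    have h1 : ‖A' w‖ ^ 2 < Q ^ 2 := by
      rw [hcoord, hQ2]
      calc ∑ i, (A w i) ^ 2 ≤ ∑ i : Fin (n + 1), (1 : ℝ) := by
            refine Finset.sum_le_sum fun i _ => ?_
            rw [sq_le_one_iff_abs_le_one]; exact hw i
        _ < _ := by simp
    rw [hnorm, hDsum] at h1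
    have hS0 : ∀ j ∈ Finset.univ, 0 ≤ μ j * ⟪WithLp.toLp 2 w.1, eb j⟫ ^ 2 := fun j _ => by have := hμpos j; positivity
    constructor
    · intro j
      have h2 := Finset.single_le_sum hS0 (Finset.mem_univ j)
      have h3 : μ j * ⟪WithLp.toLp 2 w.1, eb j⟫ ^ 2 < Q ^ 2 := by
        have : 0 ≤ (w.2 - ⟪m, WithLp.toLp 2 w.1⟫) ^ 2 * ‖a0‖ ^ 2 := by positivity
        linarith
      have hj := hμpos j
      rw [lt_div_iff₀ (by positivity)]
      apply lt_of_pow_lt_pow_left₀ 2 hQ0.le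
      rw [mul_pow, sq_abs, Real.sq_sqrt hj.le]; linarith
    · have h2 := Finset.sum_nonneg hS0
      rw [lt_div_iff₀ ha0n]
      apply lt_of_pow_lt_pow_left₀ 2 hQ0.le
      rw [mul_pow, sq_abs]; linarith
  · intro w h1 h2 i
    have h3 : ‖A' w‖ ^ 2 ≤ ((n : ℝ) + 2) ^ 2 := by
      rw [hnorm, hDsum]
      have i1 : ∑ j, μ j * ⟪WithLp.toLp 2 w.1, eb j⟫ ^ 2 ≤ ∑ j : Fin n, Q ^ 2 := by
        refine Finset.sum_le_sum fun j _ => ?_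
        have hj := hμpos j
        have h4 := h1 j
        rw [lt_div_iff₀ (by positivity)] at h4
        have h5 := pow_le_pow_left₀ (by positivity) h4.le 2
        rw [mul_pow, sq_abs, Real.sq_sqrt hj.le] at h5
        linarith
      rw [lt_div_iff₀ ha0n] at h2
      have h5 := pow_le_pow_left₀ (by positivity) h2.le 2
      rw [mul_pow, sq_abs] at h5
      simp only [Finset.sum_const, Finset.card_univ, Fintype.card_fin, nsmul_eq_mul] at i1
      rw [hQ2] at i1 h5
      nlinarith
    rw [hcoord] at h3
    apply abs_le_of_sq_le_sq _ (by positivity)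
    refine le_trans ?_ h3
    exact Finset.single_le_sum (f := fun i => (A w i) ^ 2) (fun i _ => sq_nonneg _) (Finset.mem_univ i)

lemma ball_image (n : ℕ) (yb : Vec n) (vu : ℝ) (m : Vec n) (e : Fin n → Vec n) (rs : Fin n → ℝ) (ρ : ℝ)
    (he : Orthonormal ℝ e) (hrs : ∀ j, 0 < rs j) (hρ : 0 < ρ) :
    ∃ (zb : Pt n × Pt n) (r : Fin n → ℝ), IsBallParams n zb e r rs ρ ∧
      Prod.snd '' ballI n zb e r rs ρ =
        {y : Pt n | (∀ j, |⟪y.1 - yb, e j⟫| < rs j) ∧ |y.2 + ‖y.1‖ ^ 2 - vu - ⟪m, y.1 - yb⟫| < ρ} := by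
  set xb : Vec n := (1 / 2 : ℝ) • m with hxb
  set xd : ℝ := vu - ⟪m, yb⟫ + ‖xb‖ ^ 2 with hxd
  have key : ∀ y : Pt n, y.2 - xd + ‖y.1 - xb‖ ^ 2 = y.2 + ‖y.1‖ ^ 2 - vu - ⟪m, y.1 - yb⟫ := by
    intro y
    have : ⟪y.1, xb⟫ = (1 / 2) * ⟪m, y.1⟫ := by
      rw [hxb, real_inner_smul_right, real_inner_comm]
    rw [norm_sub_sq_real, inner_sub_right, this, hxd]; ring
  refine ⟨((xb, xd), (yb, xd - ‖yb - xb‖ ^ 2)), fun j => ρ / rs j, ⟨rfl, hρ, he, fun j => div_pos hρ (hrs j), hrs,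
    fun j => div_mul_cancel₀ _ (hrs j).ne'⟩, ?_⟩
  ext y
  constructor
  · rintro ⟨z, hz, rfl⟩
    obtain ⟨h1, h2, h3, h4, h5⟩ := hz
    refine ⟨h4, ?_⟩
    rw [← key]; exact h5
  · rintro ⟨h1, h2⟩
    rw [← key] at h2
    refine ⟨((xb, y.2 + ‖y.1 - xb‖ ^ 2), y), ⟨?_, ?_, ?_, h1, h2⟩, rfl⟩
    · simp
    · intro j
      simpa using div_pos hρ (hrs j)
    · have : (y.2 + ‖y.1 - xb‖ ^ 2) - (xd - ‖yb - xb‖ ^ 2) - ‖xb - yb‖ ^ 2 = y.2 - xd + ‖y.1 - xb‖ ^ 2 := by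
        rw [norm_sub_rev xb yb]; ring
      simpa only [this] using h2


end

noncomputable section
open MeasureTheory ENNReal
open scoped RealInnerProductSpace Pointwise

lemma KsetR_symm (m : ℕ) (A : XX m →ₗ[ℝ] (Fin (m + 1) → ℝ)) (v x : XX m) (R : ℝ) :
    x ∈ KsetR m A v R ↔ v ∈ KsetR m A x R := by
  simp only [KsetR, Set.mem_ofPred_eq]
  refine forall_congr' fun i => ?_
  rw [← neg_sub v x, map_neg, Pi.neg_apply, abs_neg]

lemma averaging (m : ℕ) (A : XX m →ₗ[ℝ] (Fin (m + 1) → ℝ)) (hA : Function.Injective A) (b : XX m) (τ : ℝ)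
    (hτ : 0 < τ) (hτ1 : τ ≤ 1) (F : Set (XX m)) (hF : MeasurableSet F) (hFK : F ⊆ Kset m A b) :
    ∃ v, ENNReal.ofReal (1 / 2 * (τ / 2) ^ (m + 1)) * volume F ≤ volume (KsetR m A v τ ∩ F) := by
  by_contra! hcon
  have hVpos := Kset_vol_pos m A b
  have hVfin := Kset_vol_fin m A hA b
  have hFfin : volume F ≠ ⊤ := ne_top_of_le_ne_top hVfin.ne (measure_mono hFK)
  have hFpos : volume F ≠ 0 := by
    intro h
    have := hcon b
    rw [h, mul_zero] at this
    exact ENNReal.not_lt_zero this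
  set P : Set (XX m × XX m) := {z | z.2 ∈ KsetR m A z.1 τ ∩ F} with hP
  have hAc : Continuous A := A.continuous_of_finiteDimensional
  have hPm : MeasurableSet P := by
    have h1 : IsClosed {z : XX m × XX m | ∀ i, |A (z.2 - z.1) i| ≤ τ} := by
      rw [Set.ofPred_forall]
      apply isClosed_iInter
      intro i
      exact isClosed_le (by fun_prop) continuous_const
    exact h1.measurableSet.inter (measurable_snd hF)
  have hv : ∀ v, volume (KsetR m A v τ ∩ F) ≤
      (KsetR m A b 2).indicator (fun _ => ENNReal.ofReal (1 / 2 * (τ / 2) ^ (m + 1)) * volume F) v := by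
    intro v
    by_cases h : v ∈ KsetR m A b 2
    · rw [Set.indicator_of_mem h]; exact (hcon v).le
    · have : KsetR m A v τ ∩ F = ∅ := by
        rw [Set.eq_empty_iff_forall_notMem]
        rintro x ⟨hx1, hx2⟩
        apply h
        intro i
        have h1 := hx1 i
        have h2 := hFK hx2 i
        have e1 : A (v - b) i = A (x - b) i - A (x - v) i := by
          have e0 : v - b = (x - b) - (x - v) := by abel
          rw [e0, map_sub, Pi.sub_apply]
        rw [e1]
        calc _ ≤ |A (x - b) i| + |A (x - v) i| := abs_sub _ _
          _ ≤ 2 := by linarith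
      rw [this]; simp
  have h1 : ∫⁻ v, volume (KsetR m A v τ ∩ F) ≤
      ENNReal.ofReal (1 / 2 * (τ / 2) ^ (m + 1)) * volume F * volume (KsetR m A b 2) := by
    refine (lintegral_mono hv).trans ?_
    rw [lintegral_indicator_const (KsetR_meas m A b 2)]
  have h2 : ∫⁻ v, volume (KsetR m A v τ ∩ F) = volume F * (ENNReal.ofReal (τ ^ (m + 1)) * volume (Kset m A b)) := by
    have e1 := Measure.prod_apply (μ := (volume : Measure (XX m))) (ν := (volume : Measure (XX m))) hPm
    have e2 := Measure.prod_apply_symm (μ := (volume : Measure (XX m))) (ν := (volume : Measure (XX m))) hPm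
    have e3 : ∀ v, Prod.mk v ⁻¹' P = KsetR m A v τ ∩ F := fun v => rfl
    have e4 : ∀ x, volume ((fun v => (v, x)) ⁻¹' P) = F.indicator (fun _ => ENNReal.ofReal (τ ^ (m + 1)) * volume (Kset m A b)) x := by
      intro x
      by_cases hx : x ∈ F
      · rw [Set.indicator_of_mem hx, ← KsetR_vol m A b x τ hτ]
        congr 1
        ext v
        simp only [hP, Set.mem_preimage, Set.mem_ofPred_eq, Set.mem_inter_iff, hx, and_true]
        exact KsetR_symm m A v x τ
      · rw [Set.indicator_of_notMem hx]
        have : (fun v => (v, x)) ⁻¹' P = ∅ := by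
          ext v; simp [hP, hx]
        rw [this]; simp
    simp_rw [e3] at e1
    simp_rw [e4] at e2
    rw [← e1, e2, lintegral_indicator_const hF, mul_comm]
  rw [h2, KsetR_vol m A b b 2 (by norm_num)] at h1
  have e5 : ENNReal.ofReal (1 / 2 * (τ / 2) ^ (m + 1)) * volume F * (ENNReal.ofReal (2 ^ (m + 1)) * volume (Kset m A b))
      = volume F * (ENNReal.ofReal (1 / 2 * τ ^ (m + 1)) * volume (Kset m A b)) := by
    have : 1 / 2 * τ ^ (m + 1) = 1 / 2 * (τ / 2) ^ (m + 1) * 2 ^ (m + 1) := by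
      rw [div_pow]; field_simp
    rw [this, ENNReal.ofReal_mul (p := 1 / 2 * (τ / 2) ^ (m + 1)) (by positivity)]; ring
  rw [e5, ENNReal.mul_le_mul_iff_right hFpos hFfin, ENNReal.mul_le_mul_iff_left hVpos.ne' hVfin.ne,
    ENNReal.ofReal_le_ofReal_iff (by positivity)] at h1
  have : 0 < τ ^ (m + 1) := by positivity
  linarith

lemma holder_set (m : ℕ) (g : XX m → ℝ≥0∞) (hg : Measurable g) (hN : ∫⁻ x, g x ^ (((m : ℝ) + 2) / (m + 1)) ≤ 1)
    (S : Set (XX m)) : ∫⁻ x in S, g x ≤ volume S ^ (1 / ((m : ℝ) + 2)) := by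
  have hc : (((m : ℝ) + 2) / (m + 1)).HolderConjugate ((m : ℝ) + 2) := by
    rw [Real.holderConjugate_iff]
    refine ⟨?_, ?_⟩
    · rw [lt_div_iff₀ (by positivity)]; linarith
    · field_simp; ring
  have h := ENNReal.lintegral_mul_le_Lp_mul_Lq (volume.restrict S) hc (f := g) (g := fun _ => 1) hg.aemeasurable
    aemeasurable_const
  simp only [Pi.mul_apply, mul_one, ENNReal.one_rpow, lintegral_const, one_mul, Measure.restrict_apply MeasurableSet.univ,
    Set.univ_inter] at h
  refine h.trans ?_
  have h2 : (∫⁻ x in S, g x ^ (((m : ℝ) + 2) / (m + 1))) ^ (1 / (((m : ℝ) + 2) / (m + 1))) ≤ 1 :=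
    ENNReal.rpow_le_one ((setLIntegral_le_lintegral _ _).trans hN) (by positivity)
  exact mul_le_of_le_one_left zero_le h2

lemma core_l (m : ℕ) (g : XX m → ℝ≥0∞) (hg : Measurable g) (hN : ∫⁻ x, g x ^ (((m : ℝ) + 2) / (m + 1)) ≤ 1)
    (A : XX m →ₗ[ℝ] (Fin (m + 1) → ℝ)) (hA : Function.Injective A) (b : XX m) (ς : ℝ) (hς : 0 < ς) (hς1 : ς ≤ 1)
    (hK : ENNReal.ofReal (2 * ς ^ (m + 1)) * volume (Kset m A b) ^ (1 / ((m : ℝ) + 2)) < ∫⁻ x in Kset m A b, g x) :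
    ∃ (t : ℝ) (A' : XX m →ₗ[ℝ] (Fin (m + 1) → ℝ)) (v : XX m), 0 < t ∧ Function.Injective A' ∧
      ENNReal.ofReal (ς ^ ((m + 2) * (m + 2))) ≤
        ENNReal.ofReal t ^ (((m : ℝ) + 2) / (m + 1)) * volume {x | ENNReal.ofReal t < g x} ∧
      volume (KsetR m A' v (m + 2)) ≤ volume {x | ENNReal.ofReal t < g x} ∧
      ENNReal.ofReal (1 / 2 * (1 / (2 * (m + 2))) ^ (m + 1) * ς ^ (2 * (m + 1) * (m + 1) + (m + 2) * (m + 2))) *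
        volume {x | ENNReal.ofReal t < g x} ≤ volume (Kset m A' v ∩ {x | ENNReal.ofReal t < g x}) := by
  have hVpos := Kset_vol_pos m A b
  have hVfin := Kset_vol_fin m A hA b
  obtain ⟨ω, hω, hωe⟩ := exists_root (volume (Kset m A b)) hVpos.ne' hVfin.ne (m + 2) (by omega)
  have hroot : volume (Kset m A b) ^ (1 / ((m : ℝ) + 2)) = ENNReal.ofReal ω := by
    rw [hωe, ofReal_pow_root _ hω.le (m + 2) _ 1 (by push_cast; field_simp) (by positivity), pow_one]
  obtain ⟨s, hsd⟩ : ∃ s : ℝ, s = ς ^ (m + 1) := ⟨_, rfl⟩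
  have hs : 0 < s := by rw [hsd]; positivity
  have hs1 : s ≤ 1 := by rw [hsd]; exact pow_le_one₀ hς.le hς1
  rw [hroot, ← hsd, ← ENNReal.ofReal_mul (by positivity)] at hK
  obtain ⟨t, htd⟩ : ∃ t : ℝ, t = (ς / ω) ^ (m + 1) := ⟨_, rfl⟩
  have ht : 0 < t := by rw [htd]; positivity
  set E : Set (XX m) := {x | ENNReal.ofReal t < g x} with hE
  have hEm : MeasurableSet E := measurableSet_lt measurable_const hg
  have hKm := Kset_meas m A b
  have htp : ENNReal.ofReal t ^ (((m : ℝ) + 2) / (m + 1)) = ENNReal.ofReal ((ς / ω) ^ (m + 2)) := by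
    rw [htd, ofReal_pow_root _ (by positivity) (m + 1) _ (m + 2) (by push_cast; field_simp) (by positivity)]
  -- upper bound for E
  have hEup : ENNReal.ofReal ((ς / ω) ^ (m + 2)) * volume E ≤ 1 := by
    rw [← htp]
    refine le_trans ?_ ((mul_meas_ge_le_lintegral (μ := volume) (f := fun x => g x ^ (((m : ℝ) + 2) / (m + 1)))
      (by fun_prop) (ENNReal.ofReal t ^ (((m : ℝ) + 2) / (m + 1)))).trans hN)
    gcongr
    intro x hx
    exact ENNReal.rpow_le_rpow (le_of_lt hx) (by positivity)
  -- lower bound for E inter K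
  have hlow : ENNReal.ofReal ((s * ω) ^ (m + 2)) ≤ volume (Kset m A b ∩ E) := by
    have h1 : ∫⁻ x in Kset m A b, g x ≤ ENNReal.ofReal (s * ω) + ∫⁻ x in Kset m A b ∩ E, g x := by
      rw [← lintegral_inter_add_sdiff g (Kset m A b) hEm, add_comm]
      gcongr
      calc ∫⁻ x in Kset m A b \ E, g x ≤ ∫⁻ x in Kset m A b \ E, ENNReal.ofReal t := by
            apply setLIntegral_mono' (hKm.diff hEm)
            intro x hx
            exact not_lt.1 hx.2
        _ = ENNReal.ofReal t * volume (Kset m A b \ E) := setLIntegral_const _ _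
        _ ≤ ENNReal.ofReal t * volume (Kset m A b) := by gcongr; exact Set.sdiff_subset
        _ = _ := by
            rw [hωe, ← ENNReal.ofReal_mul ht.le, htd, hsd]
            congr 1
            rw [div_pow, pow_succ ω (m + 1)]; field_simp
    have h2 := holder_set m g hg hN (Kset m A b ∩ E)
    have h3 : ENNReal.ofReal (s * ω) ≤ ∫⁻ x in Kset m A b ∩ E, g x := by
      by_contra! h4
      have h5 : ∫⁻ x in Kset m A b, g x < ENNReal.ofReal (s * ω) + ENNReal.ofReal (s * ω) :=
        lt_of_le_of_lt h1 (ENNReal.add_lt_add_left ENNReal.ofReal_ne_top h4)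
      rw [← ENNReal.ofReal_add (by positivity) (by positivity), show s * ω + s * ω = 2 * s * ω by ring] at h5
      exact absurd (hK.trans h5) (lt_irrefl _)
    have h4 := pow_le_pow_left' (h3.trans h2) (m + 2)
    rw [← ENNReal.ofReal_pow (by positivity)] at h4
    refine h4.trans (le_of_eq ?_)
    rw [← ENNReal.rpow_natCast, ← ENNReal.rpow_mul]
    have : 1 / ((m : ℝ) + 2) * ((m + 2 : ℕ) : ℝ) = 1 := by push_cast; field_simp
    rw [this, ENNReal.rpow_one]
  have hlowE : ENNReal.ofReal ((s * ω) ^ (m + 2)) ≤ volume E := hlow.trans (measure_mono Set.inter_subset_right)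
  obtain ⟨τ, hτd⟩ : ∃ τ : ℝ, τ = s ^ 2 / (m + 2) := ⟨_, rfl⟩
  have hτ : 0 < τ := by rw [hτd]; positivity
  have hs2 : s ^ 2 ≤ 1 := pow_le_one₀ hs.le hs1
  have hτ1 : τ ≤ 1 := by
    rw [hτd, div_le_one (by positivity)]
    have : (0 : ℝ) ≤ m := by positivity
    linarith
  obtain ⟨v, hv⟩ := averaging m A hA b τ hτ hτ1 (Kset m A b ∩ E) (hKm.inter hEm) Set.inter_subset_left
  have hKeq : ∀ v, Kset m (τ⁻¹ • A) v = KsetR m A v τ := by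
    intro v
    ext x
    simp only [Kset, KsetR, Set.mem_ofPred_eq, LinearMap.smul_apply, Pi.smul_apply, smul_eq_mul, abs_mul,
      abs_of_pos (inv_pos.2 hτ)]
    refine forall_congr' fun i => ?_
    rw [inv_mul_le_iff₀ hτ, mul_one]
  refine ⟨t, τ⁻¹ • A, v, ht, ?_, ?_, ?_, ?_⟩
  · intro x y hxy
    apply hA
    simp only [LinearMap.smul_apply] at hxy
    exact smul_right_injective _ (inv_pos.2 hτ).ne' hxy
  · rw [htp]
    refine le_trans (le_of_eq ?_) (mul_le_mul' le_rfl hlowE)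
    rw [← ENNReal.ofReal_mul (by positivity)]
    congr 1
    rw [← mul_pow, hsd, show ς / ω * (ς ^ (m + 1) * ω) = ς ^ (m + 2) by rw [pow_succ ς (m + 1)]; field_simp, ← pow_mul]
  · rw [KsetR_vol m _ v v _ (by positivity), hKeq, KsetR_vol m A b v τ hτ, hωe, ← ENNReal.ofReal_mul (by positivity),
      ← ENNReal.ofReal_mul (by positivity)]
    refine le_trans (ENNReal.ofReal_le_ofReal ?_) hlowE
    rw [← mul_assoc, ← mul_pow, mul_pow s, hτd]
    have : ((m : ℝ) + 2) * (s ^ 2 / (m + 2)) = s ^ 2 := by field_simp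
    rw [this, ← pow_mul]
    exact mul_le_mul_of_nonneg_right (pow_le_pow_of_le_one hs.le hs1 (by omega)) (by positivity)
  · rw [hKeq]
    have h5 : volume (KsetR m A v τ ∩ (Kset m A b ∩ E)) ≤ volume (KsetR m A v τ ∩ E) :=
      measure_mono (Set.inter_subset_inter_right _ Set.inter_subset_right)
    refine le_trans ?_ (hv.trans h5)
    refine le_trans ?_ (mul_le_mul' le_rfl hlow)
    have e1 : 1 / 2 * (1 / (2 * ((m : ℝ) + 2))) ^ (m + 1) * ς ^ (2 * (m + 1) * (m + 1) + (m + 2) * (m + 2)) =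
        (1 / 2 * (τ / 2) ^ (m + 1)) * (s * ω) ^ (m + 2) * (ς / ω) ^ (m + 2) := by
      rw [hτd, hsd, pow_add ς (2 * (m + 1) * (m + 1))]
      have : ς ^ (m + 1) * ω * (ς / ω) = ς ^ (m + 2) := by rw [pow_succ ς (m + 1)]; field_simp
      rw [mul_assoc (1 / 2 * _), ← mul_pow, this, ← pow_mul, pow_mul ς (2 * (m + 1)) (m + 1), ← mul_assoc]
      congr 1
      · rw [mul_assoc, ← mul_pow]
        congr 2
        rw [mul_comm (m + 1) 2]
        field_simp
      · rw [← pow_mul]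
    rw [e1, ENNReal.ofReal_mul (by positivity), ENNReal.ofReal_mul (by positivity), mul_assoc]
    calc _ ≤ ENNReal.ofReal (1 / 2 * (τ / 2) ^ (m + 1)) * ENNReal.ofReal ((s * ω) ^ (m + 2)) * 1 := by gcongr
      _ = _ := mul_one _


end

noncomputable section
open MeasureTheory ENNReal
open scoped RealInnerProductSpace Pointwise

def Psi (n : ℕ) (w : XX n) : Pt n := (WithLp.toLp 2 w.1, w.2 - ‖(WithLp.toLp 2 w.1 : Vec n)‖ ^ 2)

lemma toLp_mp (n : ℕ) : MeasurePreserving (fun y : Fin n → ℝ => (WithLp.toLp 2 y : Vec n)) :=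
  PiLp.volume_preserving_toLp (Fin n)

lemma toLp_emb (n : ℕ) : MeasurableEmbedding (fun y : Fin n → ℝ => (WithLp.toLp 2 y : Vec n)) :=
  (MeasurableEquiv.toLp 2 (Fin n → ℝ)).measurableEmbedding

lemma Psi_mp (n : ℕ) : MeasurePreserving (Psi n) := by
  have h := MeasurePreserving.skew_product (μc := (volume : Measure ℝ)) (μd := (volume : Measure ℝ)) (toLp_mp n)
    (g := fun y u => u - ‖(WithLp.toLp 2 y : Vec n)‖ ^ 2) (by
      have := (toLp_mp n).measurable
      unfold Function.uncurry
      fun_prop) (Filter.Eventually.of_forall fun y => by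
      simpa using (measurePreserving_sub_right volume (‖(WithLp.toLp 2 y : Vec n)‖ ^ 2)).map_eq)
  exact h

lemma radonT_eq (n : ℕ) (f : Pt n → ℝ≥0∞) (x : Fin n → ℝ) (u : ℝ) :
    radonT n f (WithLp.toLp 2 x, u) =
      RR n (fun w => f (Psi n w)) ((2 : ℝ) • x, u - ‖(WithLp.toLp 2 x : Vec n)‖ ^ 2) := by
  set X : Vec n := WithLp.toLp 2 x with hX
  have h1 : radonT n f (X, u) = ∫⁻ y : Vec n, f (y, u - ‖X - y‖ ^ 2) := by
    have := lintegral_sub_left_eq_self (μ := (volume : Measure (Vec n))) (fun y => f (y, u - ‖X - y‖ ^ 2)) X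
    rw [← this]
    simp [radonT]
  rw [h1, ← (toLp_mp n).lintegral_comp_emb (toLp_emb n)]
  unfold RR Psi
  refine lintegral_congr fun y => ?_
  have h2 : ⟪X, (WithLp.toLp 2 y : Vec n)⟫ = ∑ i, x i * y i := by
    rw [hX, PiLp.inner_apply]
    refine Finset.sum_congr rfl fun i _ => ?_
    simp [mul_comm]
  congr 2
  rw [norm_sub_sq_real, h2]
  simp only [Pi.smul_apply, smul_eq_mul, mul_assoc, ← Finset.mul_sum]
  ring

lemma radonT_int (n k : ℕ) (f : Pt n → ℝ≥0∞) (hf : Measurable f) :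
    ∫⁻ x, radonT n f x ^ k ≤ ∫⁻ w, (RR n (fun w => f (Psi n w)) w) ^ k := by
  have hft : Measurable fun w => f (Psi n w) := hf.comp (Psi_mp n).measurable
  have hRm := RR_meas n _ hft
  set G : XX n → ℝ≥0∞ := fun w => (RR n (fun w => f (Psi n w)) w) ^ k with hG
  have hGm : Measurable G := hRm.pow_const k
  have hmp := (toLp_mp n).prod (MeasurePreserving.id (volume : Measure ℝ))
  have hemb : MeasurableEmbedding (Prod.map (fun y : Fin n → ℝ => (WithLp.toLp 2 y : Vec n)) (id : ℝ → ℝ)) :=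
    ((MeasurableEquiv.toLp 2 (Fin n → ℝ)).prodCongr (MeasurableEquiv.refl ℝ)).measurableEmbedding
  have h1 := hmp.lintegral_comp_emb hemb (fun x => radonT n f x ^ k)
  have h1' : ∫⁻ x, radonT n f x ^ k = ∫⁻ w : XX n, G ((2 : ℝ) • w.1, w.2 - ‖(WithLp.toLp 2 w.1 : Vec n)‖ ^ 2) := by
    refine h1.symm.trans (lintegral_congr fun w => ?_)
    show radonT n f (WithLp.toLp 2 w.1, w.2) ^ k = _
    rw [radonT_eq]
  have hnm : Measurable fun x : Fin n → ℝ => ‖(WithLp.toLp 2 x : Vec n)‖ := (toLp_mp n).measurable.norm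
  rw [h1', Measure.volume_eq_prod, lintegral_prod, lintegral_prod _ hGm.aemeasurable]
  · have h2 : ∀ x : Fin n → ℝ, ∫⁻ u : ℝ, G ((2 : ℝ) • x, u - ‖(WithLp.toLp 2 x : Vec n)‖ ^ 2) = ∫⁻ u : ℝ, G ((2 : ℝ) • x, u) :=
      fun x => lintegral_sub_right_eq_self (fun u => G ((2 : ℝ) • x, u)) _
    simp_rw [h2]
    have h3 := Measure.addHaar_preimage_smul (volume : Measure (Fin n → ℝ)) (r := 2) (by norm_num)
    have h4 : Measure.map (fun x : Fin n → ℝ => (2 : ℝ) • x) volume ≤ volume := by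
      refine Measure.le_iff.2 fun s hs => ?_
      rw [Measure.map_apply (by fun_prop) hs, h3]
      refine mul_le_of_le_one_left zero_le ?_
      rw [ENNReal.ofReal_le_one, abs_of_pos (by positivity)]
      apply inv_le_one_of_one_le₀
      exact one_le_pow₀ (by norm_num)
    have hm : Measurable fun x : Fin n → ℝ => ∫⁻ u : ℝ, G (x, u) := hGm.lintegral_prod_right'
    rw [← lintegral_map (f := fun x : Fin n → ℝ => ∫⁻ u : ℝ, G (x, u)) hm (by fun_prop)]
    exact lintegral_mono' h4 le_rfl
  · apply Measurable.aemeasurable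
    apply hGm.comp
    fun_prop


end

noncomputable section
open MeasureTheory ENNReal
open scoped RealInnerProductSpace Pointwise

lemma core (m : ℕ) (θ C : ℝ) (hθ : 0 < θ) (hC : 0 ≤ C) (hcl : Claim m θ C) :
    ∃ c3 C3 : ℝ, 0 < c3 ∧ 0 < C3 ∧ ∀ (g : XX m → ℝ≥0∞), Measurable g →
      ∫⁻ x, g x ^ (((m : ℝ) + 2) / (m + 1)) ≤ 1 → ∀ ε : ℝ, 0 < ε →
      ENNReal.ofReal (ε ^ (m + 2)) ≤ ∫⁻ x, (RR m g x) ^ (m + 2) →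
      c3 * ε ^ C3 ≤ 1 ∧ ∃ (A : XX m →ₗ[ℝ] (Fin (m + 1) → ℝ)) (b : XX m), Function.Injective A ∧
        ENNReal.ofReal (2 * (c3 * ε ^ C3) ^ (m + 1)) * volume (Kset m A b) ^ (1 / ((m : ℝ) + 2)) <
          ∫⁻ x in Kset m A b, g x := by
  have hC1 : 0 < C + 1 := by linarith
  have hm1 : (0 : ℝ) < (m : ℝ) + 1 := by positivity
  refine ⟨(2⁻¹ * ((C + 1)⁻¹) ^ (1 / θ)) ^ (1 / ((m : ℝ) + 1)), ((m : ℝ) + 2) / (θ * (m + 1)), by positivity,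
    by positivity, fun g hg hN ε hε hR => ?_⟩
  have h1 : ε ^ (m + 2) ≤ C := by
    have := hcl g hg 1 one_pos le_rfl hN (fun A b _ => by
      rw [ENNReal.ofReal_one, one_mul]; exact holder_set m g hg hN _)
    rw [Real.one_rpow, mul_one] at this
    exact (ENNReal.ofReal_le_ofReal_iff hC).1 (hR.trans this)
  obtain ⟨l, hl⟩ : ∃ l : ℝ, l = (ε ^ (m + 2) / (C + 1)) ^ (1 / θ) := ⟨_, rfl⟩
  have hlpos : 0 < l := by rw [hl]; positivity
  have hl1 : l ≤ 1 := by
    rw [hl]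
    apply Real.rpow_le_one (by positivity) _ (by positivity)
    rw [div_le_one hC1]; linarith
  obtain ⟨ς, hς⟩ : ∃ ς : ℝ, ς = (2⁻¹ * ((C + 1)⁻¹) ^ (1 / θ)) ^ (1 / ((m : ℝ) + 1)) * ε ^ (((m : ℝ) + 2) / (θ * (m + 1))) :=
    ⟨_, rfl⟩
  have hς2 : ς = (2⁻¹ * l) ^ (1 / ((m : ℝ) + 1)) := by
    have hl' : 2⁻¹ * l = (2⁻¹ * ((C + 1)⁻¹) ^ (1 / θ)) * (ε ^ (m + 2)) ^ (1 / θ) := by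
      rw [hl, div_eq_inv_mul (ε ^ (m + 2)), Real.mul_rpow (by positivity) (by positivity), ← mul_assoc]
    rw [hς, hl', Real.mul_rpow (x := 2⁻¹ * _) (by positivity) (by positivity)]
    congr 1
    rw [← Real.rpow_natCast ε (m + 2), ← Real.rpow_mul hε.le, ← Real.rpow_mul hε.le]
    congr 1
    push_cast
    field_simp
  have hςp : 2 * ς ^ (m + 1) = l := by
    rw [hς2, ← Real.rpow_natCast, ← Real.rpow_mul (by positivity)]
    have : 1 / ((m : ℝ) + 1) * ((m + 1 : ℕ) : ℝ) = 1 := by push_cast; field_simp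
    rw [this, Real.rpow_one]; ring
  rw [← hς]
  refine ⟨?_, ?_⟩
  · rw [hς2]
    apply Real.rpow_le_one (by positivity) (by linarith) (by positivity)
  · rw [hςp]
    by_contra! hcon
    have h2 := hR.trans (hcl g hg l hlpos hl1 hN hcon)
    rw [ENNReal.ofReal_le_ofReal_iff (by positivity)] at h2
    have h3 : l ^ θ = ε ^ (m + 2) / (C + 1) := by
      rw [hl, ← Real.rpow_mul (by positivity)]
      have : 1 / θ * θ = 1 := by field_simp
      rw [this, Real.rpow_one]
    rw [h3] at h2
    have h4 : 0 < ε ^ (m + 2) := by positivity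
    rw [mul_div_assoc', le_div_iff₀ hC1] at h2
    nlinarith

lemma box_sets (m : ℕ) (A : XX m →ₗ[ℝ] (Fin (m + 1) → ℝ)) (hA : Function.Injective A) (v : XX m) :
    ∃ zb e r rs ρ, IsBallParams m zb e r rs ρ ∧ MeasurableSet (Prod.snd '' ballI m zb e r rs ρ) ∧
      Kset m A v ⊆ Psi m ⁻¹' (Prod.snd '' ballI m zb e r rs ρ) ∧
      Psi m ⁻¹' (Prod.snd '' ballI m zb e r rs ρ) ⊆ KsetR m A v (m + 2) := by
  obtain ⟨e, rs, ρ, μ, he, hrs, hρ, h1, h2⟩ := box_lemma m A hA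
  obtain ⟨zb, r, hb, hS⟩ := ball_image m (WithLp.toLp 2 v.1) v.2 μ e rs ρ he hrs hρ
  refine ⟨zb, e, r, rs, ρ, hb, ?_, ?_, ?_⟩
  · rw [hS]
    apply IsOpen.measurableSet
    rw [Set.ofPred_and, Set.ofPred_forall]
    refine IsOpen.inter (isOpen_iInter_of_finite fun j => isOpen_lt (by fun_prop) (by fun_prop))
      (isOpen_lt (by fun_prop) (by fun_prop))
  · intro w hw
    rw [hS]
    obtain ⟨h3, h4⟩ := h1 (w - v) hw
    refine ⟨h3, ?_⟩
    have : (Psi m w).2 + ‖(Psi m w).1‖ ^ 2 - v.2 - ⟪μ, (Psi m w).1 - WithLp.toLp 2 v.1⟫ =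
        (w - v).2 - ⟪μ, WithLp.toLp 2 (w - v).1⟫ := by
      simp only [Psi, Prod.snd_sub, Prod.fst_sub, WithLp.toLp_sub]; ring
    rw [this]; exact h4
  · intro w hw
    rw [hS] at hw
    obtain ⟨h3, h4⟩ := hw
    have : (Psi m w).2 + ‖(Psi m w).1‖ ^ 2 - v.2 - ⟪μ, (Psi m w).1 - WithLp.toLp 2 v.1⟫ =
        (w - v).2 - ⟪μ, WithLp.toLp 2 (w - v).1⟫ := by
      simp only [Psi, Prod.snd_sub, Prod.fst_sub, WithLp.toLp_sub]; ring
    rw [this] at h4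
    exact h2 (w - v) h3 h4

lemma main_m (m : ℕ) (θ C₀ : ℝ) (hθ : 0 < θ) (hC₀ : 0 ≤ C₀) (hcl : Claim m θ C₀) (p q : ℝ)
    (hp : p = ((m : ℝ) + 2) / (m + 1)) (hq : q = (m : ℝ) + 2) :
    ∃ c C : ℝ, 0 < c ∧ 0 < C ∧
      ∀ (ε : ℝ), 0 < ε →
      ∀ (f : Pt m → ℝ≥0∞), Measurable f →
        0 < LpN m p f → LpN m p f < ⊤ →
        ENNReal.ofReal ε * LpN m p f ≤ LpN m q (radonT m f) →
        ∃ (t : ℝ) (E : Set (Pt m)) (zb : Pt m × Pt m) (e : Fin m → Vec m) (r rs : Fin m → ℝ) (ρ : ℝ),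
          0 < t ∧ MeasurableSet E ∧ IsBallParams m zb e r rs ρ ∧
          (∀ x ∈ E, ENNReal.ofReal t ≤ f x) ∧
          ENNReal.ofReal (c * ε ^ C) * LpN m p f ≤ LpN m p (E.indicator fun _ => ENNReal.ofReal t) ∧
          volume (Prod.snd '' ballI m zb e r rs ρ) ≤ volume E ∧
          ENNReal.ofReal (c * ε ^ C) * volume E ≤ volume (Prod.snd '' ballI m zb e r rs ρ ∩ E) := by
  obtain ⟨c3, C3, hc3, hC3, hcore⟩ := core m θ C₀ hθ hC₀ hcl
  set k2 : ℕ := 2 * (m + 1) * (m + 1) + (m + 2) * (m + 2) with hk2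
  have hk2pos : 0 < k2 := by positivity
  set c0 : ℝ := 1 / 2 * (1 / (2 * ((m : ℝ) + 2))) ^ (m + 1) with hc0
  have hc0pos : 0 < c0 := by positivity
  have hc01 : c0 ≤ 1 := by
    have : (1 / (2 * ((m : ℝ) + 2))) ^ (m + 1) ≤ 1 := by
      apply pow_le_one₀ (by positivity)
      rw [div_le_one (by positivity)]
      have : (0 : ℝ) ≤ m := by positivity
      linarith
    rw [hc0]; linarith
  have hppos : 0 < p := by rw [hp]; positivity
  have hqpos : 0 < q := by rw [hq]; positivity
  refine ⟨c0 * c3 ^ k2, C3 * k2, by positivity, by positivity, fun ε hε f hf hpos hfin hT => ?_⟩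
  obtain ⟨ς, hς⟩ : ∃ ς : ℝ, ς = c3 * ε ^ C3 := ⟨_, rfl⟩
  have hςpos : 0 < ς := by rw [hς]; positivity
  have hcε : c0 * c3 ^ k2 * ε ^ (C3 * (k2 : ℝ)) = c0 * ς ^ k2 := by
    rw [hς, mul_pow, Real.rpow_mul hε.le, Real.rpow_natCast]; ring
  rw [hcε]
  obtain ⟨ν, hν, hνe⟩ : ∃ ν : ℝ, 0 < ν ∧ LpN m p f = ENNReal.ofReal ν :=
    ⟨(LpN m p f).toReal, ENNReal.toReal_pos hpos.ne' hfin.ne, (ENNReal.ofReal_toReal hfin.ne).symm⟩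
  have hfint : ∫⁻ x, f x ^ p = ENNReal.ofReal ν ^ p := by
    rw [← hνe, LpN, ← ENNReal.rpow_mul, one_div_mul_cancel hppos.ne', ENNReal.rpow_one]
  have hmul : ENNReal.ofReal ν⁻¹ * ENNReal.ofReal ν = 1 := by
    rw [← ENNReal.ofReal_mul (by positivity), inv_mul_cancel₀ hν.ne', ENNReal.ofReal_one]
  have hPm := (Psi_mp m).measurable
  have hfm : Measurable fun w => f (Psi m w) := hf.comp hPm
  set g : XX m → ℝ≥0∞ := fun w => ENNReal.ofReal ν⁻¹ * f (Psi m w) with hg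
  have hgm : Measurable g := by fun_prop
  have hN : ∫⁻ x, g x ^ (((m : ℝ) + 2) / (m + 1)) ≤ 1 := by
    rw [← hp]
    simp only [hg, ENNReal.mul_rpow_of_nonneg _ _ hppos.le]
    rw [lintegral_const_mul _ (by fun_prop), (Psi_mp m).lintegral_comp (f := fun x => f x ^ p) (by fun_prop), hfint,
      ← ENNReal.mul_rpow_of_nonneg _ _ hppos.le, hmul, ENNReal.one_rpow]
  have hRR : ∀ w, RR m g w = ENNReal.ofReal ν⁻¹ * RR m (fun w => f (Psi m w)) w := by
    intro w
    unfold RR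
    rw [← lintegral_const_mul _ (by fun_prop)]
  have hTp : ENNReal.ofReal ε ^ (m + 2) ≤ ∫⁻ x, (RR m g x) ^ (m + 2) := by
    simp only [hRR, mul_pow]
    rw [lintegral_const_mul _ ((RR_meas m _ hfm).pow_const _)]
    refine le_trans ?_ (mul_le_mul' le_rfl (radonT_int m (m + 2) f hf))
    have h1 : LpN m q (radonT m f) ^ (m + 2) = ∫⁻ x, radonT m f x ^ (m + 2) := by
      have hq' : q = ((m + 2 : ℕ) : ℝ) := by rw [hq]; push_cast; ring
      rw [LpN, ← ENNReal.rpow_natCast, ← ENNReal.rpow_mul, ← hq', one_div_mul_cancel hqpos.ne', ENNReal.rpow_one]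
      simp only [hq', ENNReal.rpow_natCast]
    rw [← h1, ← mul_pow]
    apply pow_le_pow_left'
    rw [hνe] at hT
    calc ENNReal.ofReal ε = ENNReal.ofReal ν⁻¹ * (ENNReal.ofReal ε * ENNReal.ofReal ν) := by
          rw [mul_left_comm, hmul, mul_one]
      _ ≤ _ := mul_le_mul' le_rfl hT
  rw [← ENNReal.ofReal_pow hε.le] at hTp
  obtain ⟨hς1, A, b, hA, hK⟩ := hcore g hgm hN ε hε hTp
  rw [← hς] at hς1 hK
  obtain ⟨t, A', v, ht, hA', h1, h2, h3⟩ := core_l m g hgm hN A hA b ς hςpos hς1 hK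
  obtain ⟨zb, e, r, rs, ρ, hball, hSm, hS1, hS2⟩ := box_sets m A' hA' v
  set S := Prod.snd '' ballI m zb e r rs ρ with hS
  set E : Set (Pt m) := {z | ENNReal.ofReal (ν * t) < f z} with hE
  have hEm : MeasurableSet E := measurableSet_lt measurable_const hf
  have hpre : Psi m ⁻¹' E = {x | ENNReal.ofReal t < g x} := by
    ext w
    simp only [hE, hg, Set.mem_preimage, Set.mem_ofPred_eq]
    have e1 : ENNReal.ofReal t = ENNReal.ofReal ν⁻¹ * ENNReal.ofReal (ν * t) := by
      rw [← ENNReal.ofReal_mul (by positivity)]; congr 1; field_simp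
    rw [e1, ENNReal.mul_lt_mul_iff_right (by simpa using hν) ENNReal.ofReal_ne_top]
  have hvE : volume {x | ENNReal.ofReal t < g x} = volume E := by
    rw [← hpre, (Psi_mp m).measure_preimage hEm.nullMeasurableSet]
  refine ⟨ν * t, E, zb, e, r, rs, ρ, by positivity, hEm, hball, fun x hx => le_of_lt hx, ?_, ?_, ?_⟩
  · rw [hνe]
    have h4 : LpN m p (E.indicator fun _ => ENNReal.ofReal (ν * t)) =
        ENNReal.ofReal ν * (ENNReal.ofReal t ^ p * volume E) ^ (1 / p) := by
      have : ∀ x, (E.indicator (fun _ => ENNReal.ofReal (ν * t)) x) ^ p = E.indicator (fun _ => ENNReal.ofReal (ν * t) ^ p) x := by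
        intro x
        by_cases hx : x ∈ E
        · simp [hx]
        · simp [hx, hppos]
      rw [LpN]
      simp only [this]
      rw [lintegral_indicator_const hEm, ENNReal.ofReal_mul hν.le, ENNReal.mul_rpow_of_nonneg _ _ hppos.le, mul_assoc,
        ENNReal.mul_rpow_of_nonneg (ENNReal.ofReal ν ^ p) _ (by positivity), ← ENNReal.rpow_mul,
        mul_one_div_cancel hppos.ne', ENNReal.rpow_one]
    rw [h4, mul_comm]
    refine mul_le_mul' le_rfl ?_
    rw [hvE, ← hp] at h1
    refine le_trans ?_ (ENNReal.rpow_le_rpow h1 (by positivity))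
    rw [ofReal_pow_root ς hςpos.le ((m + 2) * (m + 2)) (1 / p) ((m + 2) * (m + 1)) (by
      rw [hp]; push_cast; field_simp) (by positivity)]
    apply ENNReal.ofReal_le_ofReal
    calc c0 * ς ^ k2 ≤ 1 * ς ^ k2 := by gcongr
      _ = ς ^ k2 := one_mul _
      _ ≤ _ := pow_le_pow_of_le_one hςpos.le hς1 (by rw [hk2]; nlinarith)
  · rw [← hvE, ← (Psi_mp m).measure_preimage hSm.nullMeasurableSet]
    exact (measure_mono hS2).trans h2
  · rw [← hvE, ← (Psi_mp m).measure_preimage (hSm.inter hEm).nullMeasurableSet, Set.preimage_inter, hpre]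
    exact h3.trans (measure_mono (Set.inter_subset_inter_left _ hS1))

lemma final (d : ℕ) (hd : 2 ≤ d) :
    ∃ c C : ℝ, 0 < c ∧ 0 < C ∧
      ∀ (ε : ℝ), 0 < ε →
      ∀ (f : Pt (d - 1) → ℝ≥0∞), Measurable f →
        0 < LpN (d - 1) (((d : ℝ) + 1) / d) f → LpN (d - 1) (((d : ℝ) + 1) / d) f < ⊤ →
        ENNReal.ofReal ε * LpN (d - 1) (((d : ℝ) + 1) / d) f ≤
          LpN (d - 1) ((d : ℝ) + 1) (radonT (d - 1) f) →
        ∃ (t : ℝ) (E : Set (Pt (d - 1)))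
          (zb : Pt (d - 1) × Pt (d - 1)) (e : Fin (d - 1) → Vec (d - 1))
          (r rs : Fin (d - 1) → ℝ) (ρ : ℝ),
          0 < t ∧ MeasurableSet E ∧ IsBallParams (d - 1) zb e r rs ρ ∧
          (∀ x ∈ E, ENNReal.ofReal t ≤ f x) ∧
          ENNReal.ofReal (c * ε ^ C) * LpN (d - 1) (((d : ℝ) + 1) / d) f ≤
            LpN (d - 1) (((d : ℝ) + 1) / d)
              (E.indicator fun _ => ENNReal.ofReal t) ∧
          volume (Prod.snd '' ballI (d - 1) zb e r rs ρ) ≤ volume E ∧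
          ENNReal.ofReal (c * ε ^ C) * volume E ≤
            volume (Prod.snd '' ballI (d - 1) zb e r rs ρ ∩ E) := by
  obtain ⟨θ, C, hθ, hC, hcl⟩ := claim_ind (1 / 20) 700000 (by norm_num) (by norm_num) claim_one (d - 2)
  have h : d - 2 + 1 = d - 1 := by omega
  rw [h] at hcl
  have h2 : ((d - 1 : ℕ) : ℝ) = (d : ℝ) - 1 := by rw [Nat.cast_sub (by omega)]; simp
  exact main_m (d - 1) θ C hθ hC hcl _ _ (by rw [h2]; congr 1 <;> ring) (by rw [h2]; ring)


end

/-- Theorem thm:single (ii): if `f ≥ 0` satisfies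
`‖Tf‖_{d+1} ≥ ε ‖f‖_{(d+1)/d}` then there are `t > 0`, a set `E` with
`t χ_E ≤ f` of comparable norm, and a ball `ℬ` with `|π*(ℬ)| ≤ |E|` and
`|π*(ℬ) ∩ E| ≥ c ε^C |E|`. -/
theorem stmt10 (d : ℕ) (hd : 2 ≤ d) :
    ∃ c C : ℝ, 0 < c ∧ 0 < C ∧
      ∀ (ε : ℝ), 0 < ε →
      ∀ (f : Pt (d - 1) → ℝ≥0∞), Measurable f →
        0 < LpN (d - 1) (((d : ℝ) + 1) / d) f → LpN (d - 1) (((d : ℝ) + 1) / d) f < ⊤ →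
        ENNReal.ofReal ε * LpN (d - 1) (((d : ℝ) + 1) / d) f ≤
          LpN (d - 1) ((d : ℝ) + 1) (radonT (d - 1) f) →
        ∃ (t : ℝ) (E : Set (Pt (d - 1)))
          (zb : Pt (d - 1) × Pt (d - 1)) (e : Fin (d - 1) → Vec (d - 1))
          (r rs : Fin (d - 1) → ℝ) (ρ : ℝ),
          0 < t ∧ MeasurableSet E ∧ IsBallParams (d - 1) zb e r rs ρ ∧
          (∀ x ∈ E, ENNReal.ofReal t ≤ f x) ∧
          ENNReal.ofReal (c * ε ^ C) * LpN (d - 1) (((d : ℝ) + 1) / d) f ≤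
            LpN (d - 1) (((d : ℝ) + 1) / d)
              (E.indicator fun _ => ENNReal.ofReal t) ∧
          volume (Prod.snd '' ballI (d - 1) zb e r rs ρ) ≤ volume E ∧
          ENNReal.ofReal (c * ε ^ C) * volume E ≤
            volume (Prod.snd '' ballI (d - 1) zb e r rs ρ ∩ E) := by
  exact final d hd
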